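/- arXiv:2404.02005 — 2 statements merged into one kernel-verified Lean document; each statement's English description precedes it below -/
import Mathlib

section
/- Let (R, m) be an analytically unramified Gorenstein local ring with integral closure R̄ and conductor ideal 𝔠. If R̄ is a Cohen–Macaulay R-module, then 𝔠 is a maximal Cohen–Macaulay R-module, i.e. depth_R(𝔠) = dim R. -/
open CategoryTheory IsLocalRing

set_option synthInstance.maxHeartbeats 1000000
set_option maxHeartbeats 1000000

noncomputable section

/-- The integral closure `R̄` of `R` in its total ring of fractions, viewed as a type
(with its canonical `R`-algebra and `R`-module structures). -/
abbrev IntClosure (R : Type) [CommRing R] : Type :=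
  ↥(integralClosure R (FractionRing R))

/-- The quotient `R`-module `R̄/R`. -/
abbrev IntClosureQuot (R : Type) [CommRing R] : Type :=
  IntClosure R ⧸ LinearMap.range (Algebra.linearMap R (IntClosure R))

/-- The conductor ideal `𝔠 = Ann_R(R̄/R) = {r : R | r • R̄ ⊆ R}`. -/
def conductorIdeal (R : Type) [CommRing R] : Ideal R :=
  Module.annihilator R (IntClosureQuot R)

/-- A local ring `R` is analytically unramified if its `m`-adic completion is reduced. -/
def AnalyticallyUnramified (R : Type) [CommRing R] [IsLocalRing R] : Prop :=
  IsReduced (AdicCompletion (maximalIdeal R) R)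

/-- `R` is normal: it is reduced and equal to its integral closure `R̄` in its total
ring of fractions. -/
def IsNormalRing (R : Type) [CommRing R] : Prop :=
  IsReduced R ∧ integralClosure R (FractionRing R) = ⊥

/-- `Ext^i_R(M, N)` as a type. -/
abbrev ExtMod (R : Type) [CommRing R] (M : Type) [AddCommGroup M] [Module R M]
    (N : Type) [AddCommGroup N] [Module R N] (i : ℕ) : Type :=
  ↥(((Ext R (ModuleCat.{0} R) i).obj (Opposite.op (ModuleCat.of R M))).obj (ModuleCat.of R N))

/-- `M` has finite projective dimension over `R`:
`Ext^i_R(M, -)` vanishes for all `i` bigger than some `n`. -/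
def HasFiniteProjDim (R : Type) [CommRing R] (M : Type) [AddCommGroup M] [Module R M] : Prop :=
  ∃ n : ℕ, ∀ (N : ModuleCat.{0} R) (i : ℕ), n < i →
    Subsingleton ↥(((Ext R (ModuleCat.{0} R) i).obj (Opposite.op (ModuleCat.of R M))).obj N)

/-- `M` has finite injective dimension over `R`:
`Ext^i_R(-, M)` vanishes for all `i` bigger than some `n`. -/
def HasFiniteInjDim (R : Type) [CommRing R] (M : Type) [AddCommGroup M] [Module R M] : Prop :=
  ∃ n : ℕ, ∀ (N : ModuleCat.{0} R) (i : ℕ), n < i →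
    Subsingleton ↥(((Ext R (ModuleCat.{0} R) i).obj (Opposite.op N)).obj (ModuleCat.of R M))

/-- The depth of an `R`-module `M` over a local ring `(R, m)`: the least `i` such that
`Ext^i_R(R/m, M) ≠ 0` (`⊤` if there is no such `i`), valued in `WithBot (WithTop ℕ)`
for easy comparison with `ringKrullDim`. -/
def moduleDepth (R : Type) [CommRing R] [IsLocalRing R]
    (M : Type) [AddCommGroup M] [Module R M] : WithBot (WithTop ℕ) :=
  sInf { n : WithBot (WithTop ℕ) |
    ∃ i : ℕ, n = (i : ℕ) ∧ Nontrivial (ExtMod R (ResidueField R) M i) }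

/-- A Noetherian local ring is Gorenstein if it has finite injective dimension
as a module over itself. -/
def IsGorensteinLocal (R : Type) [CommRing R] [IsLocalRing R] : Prop :=
  IsNoetherianRing R ∧ HasFiniteInjDim R R

/-- A Noetherian local ring is Cohen–Macaulay if its depth equals its Krull dimension. -/
def IsCohenMacaulayLocal (R : Type) [CommRing R] [IsLocalRing R] : Prop :=
  IsNoetherianRing R ∧ moduleDepth R R = ringKrullDim R

/-- A ring is Cohen–Macaulay if it is Noetherian and all its localizations at primes
are Cohen–Macaulay local rings. -/
def IsCohenMacaulayRing (A : Type) [CommRing A] : Prop :=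
  IsNoetherianRing A ∧ ∀ (p : Ideal A) [p.IsPrime],
    moduleDepth (Localization.AtPrime p) (Localization.AtPrime p) =
      ringKrullDim (Localization.AtPrime p)

/-- Serre's condition `(S2)`: `depth (R_p) ≥ min {2, height p}` for every prime `p`
(`height p` being the dimension of `R_p`). -/
def SerreS2 (R : Type) [CommRing R] : Prop :=
  ∀ (p : Ideal R) [p.IsPrime],
    min 2 (ringKrullDim (Localization.AtPrime p)) ≤
      moduleDepth (Localization.AtPrime p) (Localization.AtPrime p)

/-- A Noetherian local ring is regular if its maximal ideal can be generated by
`dim R` elements. -/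
def IsRegularLocal (A : Type) [CommRing A] [IsLocalRing A] : Prop :=
  IsNoetherianRing A ∧ ∃ s : Finset A, Ideal.span (s : Set A) = maximalIdeal A ∧
    (s.card : WithBot (WithTop ℕ)) = ringKrullDim A

/-- Serre's condition `(R1)`: `R_p` is regular for every prime `p` of height at most `1`. -/
def SerreR1 (R : Type) [CommRing R] : Prop :=
  ∀ (p : Ideal R) [p.IsPrime], ringKrullDim (Localization.AtPrime p) ≤ 1 →
    IsRegularLocal (Localization.AtPrime p)

/-- The `i`-th local cohomology `H^i_m(M)` of `M` with support in the maximal ideal,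
as a type. -/
abbrev localCohMod (R : Type) [CommRing R] [IsLocalRing R] (i : ℕ)
    (M : Type) [AddCommGroup M] [Module R M] : Type :=
  ↥((localCohomology (maximalIdeal R) i).obj (ModuleCat.of R M))

/-- `x : Fin d → R` is a system of parameters for the local ring `(R, m)`:
`d = dim R`, all `x i` lie in `m`, and the ideal they generate is `m`-primary
(its radical is `m`). -/
def IsSystemOfParameters (R : Type) [CommRing R] [IsLocalRing R] {d : ℕ}
    (x : Fin d → R) : Prop :=
  (d : WithBot (WithTop ℕ)) = ringKrullDim R ∧ (∀ i, x i ∈ maximalIdeal R) ∧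
    (Ideal.span (Set.range x)).radical = maximalIdeal R

/-- `E` is an injective hull of the residue field of the local ring `R`:
`E` is injective and contains a copy of `R/m` as an essential submodule. -/
def IsInjectiveHullOfResidueField (R : Type) [CommRing R] [IsLocalRing R]
    (E : Type) [AddCommGroup E] [Module R E] : Prop :=
  Module.Injective R E ∧ ∃ f : ResidueField R →ₗ[R] E, Function.Injective f ∧
    ∀ N : Submodule R E, N ≠ ⊥ → N ⊓ LinearMap.range f ≠ ⊥

noncomputable section
theorem extOld_subsingleton_iff {R : Type} [CommRing R] (X Y : ModuleCat.{0} R) (n : ℕ) :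
    Subsingleton ↥(((Ext R (ModuleCat.{0} R) n).obj (Opposite.op X)).obj Y) ↔
      Subsingleton (Abelian.Ext X Y n) := by
  let P := (HasProjectiveResolution.out (Z := X)).some
  have h1 : Subsingleton ↥(((Ext R (ModuleCat.{0} R) n).obj (Opposite.op X)).obj Y) ↔
      Limits.IsZero ((P.complex.linearYonedaObj R Y).homology n) := by
    rw [← ModuleCat.isZero_iff_subsingleton]
    exact (P.isoExt (R := R) n Y).isZero_iff
  rw [h1, ← HomologicalComplex.exactAt_iff_isZero_homology]
  cases n with
  | zero =>
    rw [HomologicalComplex.exactAt_iff' _ 0 0 1 (by simp) (by simp), ShortComplex.moduleCat_exact_iff]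
    constructor
    · intro h
      refine ⟨fun a b => ?_⟩
      rw [← sub_eq_zero]
      generalize a - b = c
      obtain ⟨f, rfl⟩ := Abelian.Ext.mk₀_bijective _ _ |>.2 c
      obtain ⟨g, hg⟩ := h (P.π.f 0 ≫ f) (by
        change P.complex.d 1 0 ≫ P.π.f 0 ≫ f = 0
        have := P.complex_d_comp_π_f_zero
        exact (Category.assoc _ _ _).symm.trans ((congrArg (· ≫ f) this).trans Limits.zero_comp))
      replace hg : P.complex.d 0 0 ≫ (show P.complex.X 0 ⟶ Y from g) = P.π.f 0 ≫ f := hg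
      rw [P.complex.shape 0 0 (by simp), Limits.zero_comp] at hg
      have : f = 0 := by
        have h2 : P.π.f 0 ≫ f = P.π.f 0 ≫ (0 : X ⟶ Y) := by rw [← hg]; exact Limits.comp_zero.symm
        exact (cancel_epi (P.π.f 0)).1 h2
      simp [this]
    · intro h f hf
      change P.complex.d 1 0 ≫ f = 0 at hf
      let g : X ⟶ Y := P.exact₀.desc f hf
      have hg : P.π.f 0 ≫ g = f := P.exact₀.g_desc f hf
      have : g = 0 := (Abelian.Ext.mk₀_bijective _ _).1 (Subsingleton.elim _ _)
      refine ⟨0, ?_⟩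
      rw [map_zero, ← hg, this]; exact Limits.comp_zero.symm
  | succ n =>
    rw [HomologicalComplex.exactAt_iff' _ n (n+1) (n+2) (by simp) (by simp), ShortComplex.moduleCat_exact_iff]
    constructor
    · intro h
      refine ⟨fun a b => ?_⟩
      rw [← sub_eq_zero]
      generalize a - b = c
      obtain ⟨f, hf, rfl⟩ := P.extMk_surjective c (n+2) rfl
      rw [P.extMk_eq_zero_iff _ _ _ _ n rfl]
      exact h f hf
    · intro h f hf
      exact (P.extMk_eq_zero_iff f (n+2) rfl hf n rfl).1 (Subsingleton.elim _ _)
end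

noncomputable section
namespace CM

section Tk
variable {R : Type} [CommRing R]

abbrev Ex (R : Type) [CommRing R] (M N : Type) [AddCommGroup M] [Module R M] [AddCommGroup N]
    [Module R N] (i : ℕ) : Type := Abelian.Ext (ModuleCat.of R M) (ModuleCat.of R N) i

variable {A B C A' B' C' V M N L : Type}
  [AddCommGroup A] [Module R A] [AddCommGroup B] [Module R B] [AddCommGroup C] [Module R C]
  [AddCommGroup A'] [Module R A'] [AddCommGroup B'] [Module R B'] [AddCommGroup C'] [Module R C']
  [AddCommGroup V] [Module R V] [AddCommGroup M] [Module R M] [AddCommGroup N] [Module R N]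
  [AddCommGroup L] [Module R L]

def m0 (f : M →ₗ[R] N) : Ex R M N 0 := Abelian.Ext.mk₀ (ModuleCat.ofHom f)

theorem m0_bij : Function.Bijective (m0 : (M →ₗ[R] N) → Ex R M N 0) := by
  refine (Abelian.Ext.mk₀_bijective _ _).comp ?_
  exact ⟨fun a b h => congrArg ModuleCat.Hom.hom h, fun a => ⟨a.hom, rfl⟩⟩

def pre (f : M →ₗ[R] N) {i : ℕ} : Ex R N L i →ₗ[R] Ex R M L i where
  toFun e := (m0 f).comp e (zero_add i)
  map_add' := by intros; simp
  map_smul' := by intros; simp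

def post (f : M →ₗ[R] N) {i : ℕ} : Ex R L M i →ₗ[R] Ex R L N i where
  toFun e := e.comp (m0 f) (add_zero i)
  map_add' := by intros; simp
  map_smul' := by intros; simp

theorem pre_m0 (f : M →ₗ[R] N) (g : N →ₗ[R] L) : pre f (m0 g) = m0 (g ∘ₗ f) := by
  simp [pre, m0]
theorem post_m0 (f : M →ₗ[R] N) (g : N →ₗ[R] L) : post g (m0 f) = m0 (g ∘ₗ f) := by
  simp [post, m0]
theorem pre_pre (f : M →ₗ[R] N) (g : N →ₗ[R] L) {i : ℕ} (e : Ex R L V i) :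
    pre f (pre g e) = pre (g ∘ₗ f) e := by
  simp [pre, m0]
theorem post_post (f : M →ₗ[R] N) (g : N →ₗ[R] L) {i : ℕ} (e : Ex R V M i) :
    post g (post f e) = post (g ∘ₗ f) e := by
  simp [post, m0]
theorem pre_id {i : ℕ} (e : Ex R M N i) : pre LinearMap.id e = e := by simp [pre, m0]
theorem post_id {i : ℕ} (e : Ex R M N i) : post LinearMap.id e = e := by simp [post, m0]
theorem m0_smul (r : R) (f : M →ₗ[R] N) : m0 (r • f) = r • m0 f :=
  Abelian.Ext.mk₀_smul r (ModuleCat.ofHom f)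
theorem pre_smul (f : M →ₗ[R] N) (r : R) {i : ℕ} (e : Ex R N V i) :
    pre (r • f) e = r • pre f e := by
  simp [pre, m0_smul]
theorem post_smul (f : M →ₗ[R] N) (r : R) {i : ℕ} (e : Ex R V M i) :
    post (r • f) e = r • post f e := by
  simp [post, m0_smul]
theorem pre_zero {i : ℕ} (e : Ex R N V i) : pre (0 : M →ₗ[R] N) e = 0 := by
  simp [pre, m0]
theorem post_zero {i : ℕ} (e : Ex R V M i) : post (0 : M →ₗ[R] N) e = 0 := by
  simp [post, m0]
theorem post_add (f g : M →ₗ[R] N) {i : ℕ} (e : Ex R V M i) :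
    post (f + g) e = post f e + post g e := by
  simp [post, m0, Abelian.Ext.mk₀_add]
theorem m0_add (f g : M →ₗ[R] N) : m0 (f + g) = m0 f + m0 g := by
  simp [m0, Abelian.Ext.mk₀_add]
theorem pre_post (f : M →ₗ[R] N) (g : A →ₗ[R] B) {i : ℕ} (e : Ex R N A i) :
    pre f (post g e) = post g (pre f e) := by
  simp only [pre, post, LinearMap.coe_mk, AddHom.coe_mk]
  rw [Abelian.Ext.comp_assoc _ _ _ _ _ (by omega)]
theorem pre_comp (f : M →ₗ[R] N) {i j n : ℕ} (h : i + j = n) (e : Ex R N A i) (e' : Ex R A B j) :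
    pre f (e.comp e' h) = (pre f e).comp e' h := by
  simp only [pre, LinearMap.coe_mk, AddHom.coe_mk]
  rw [Abelian.Ext.comp_assoc _ _ _ _ _ (by omega)]
theorem post_comp (f : M →ₗ[R] N) {i j n : ℕ} (h : i + j = n) (e : Ex R A B i) (e' : Ex R B M j) :
    post f (e.comp e' h) = e.comp (post f e') h := by
  simp only [post, LinearMap.coe_mk, AddHom.coe_mk]
  rw [Abelian.Ext.comp_assoc _ _ _ _ _ (by omega)]
theorem post_comp_eq (f : M →ₗ[R] N) {i j n : ℕ} (h : i + j = n) (e : Ex R A M i) (e' : Ex R N B j) :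
    (post f e).comp e' h = e.comp (pre f e') h := by
  simp only [post, pre, LinearMap.coe_mk, AddHom.coe_mk]
  rw [Abelian.Ext.comp_assoc _ _ _ _ _ (by omega)]

structure SES (f : A →ₗ[R] B) (g : B →ₗ[R] C) : Prop where
  inj : Function.Injective f
  surj : Function.Surjective g
  exact : Function.Exact f g

variable {f : A →ₗ[R] B} {g : B →ₗ[R] C} {f' : A' →ₗ[R] B'} {g' : B' →ₗ[R] C'}

abbrev SES.cx (h : SES f g) : ShortComplex (ModuleCat.{0} R) :=
  ModuleCat.shortComplexOfCompEqZero f g h.exact.linearMap_comp_eq_zero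

theorem SES.se (h : SES f g) : h.cx.ShortExact :=
  ModuleCat.shortComplex_shortExact _ h.exact h.inj h.surj

def SES.cls (h : SES f g) : Ex R C A 1 := h.se.extClass

theorem SES.cov2 (h : SES f g) {i : ℕ} (e : Ex R V B i) (he : post g e = 0) :
    ∃ a : Ex R V A i, post f a = e :=
  Abelian.Ext.covariant_sequence_exact₂ (ModuleCat.of R V) h.se e he
theorem SES.cov3 (h : SES f g) {i j : ℕ} (hij : i + 1 = j) (e : Ex R V C i) (he : e.comp h.cls hij = 0) :
    ∃ a : Ex R V B i, post g a = e :=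
  Abelian.Ext.covariant_sequence_exact₃ (ModuleCat.of R V) h.se e hij he
theorem SES.cov1 (h : SES f g) {i j : ℕ} (hij : i + 1 = j) (e : Ex R V A j) (he : post f e = 0) :
    ∃ a : Ex R V C i, a.comp h.cls hij = e :=
  Abelian.Ext.covariant_sequence_exact₁ (ModuleCat.of R V) h.se e he hij
theorem SES.con2 (h : SES f g) {i : ℕ} (e : Ex R B V i) (he : pre f e = 0) :
    ∃ a : Ex R C V i, pre g a = e :=
  Abelian.Ext.contravariant_sequence_exact₂ h.se (ModuleCat.of R V) e he
theorem SES.con1 (h : SES f g) {i j : ℕ} (hij : 1 + i = j) (e : Ex R A V i) (he : h.cls.comp e hij = 0) :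
    ∃ a : Ex R B V i, pre f a = e :=
  Abelian.Ext.contravariant_sequence_exact₁ h.se (ModuleCat.of R V) e hij he
theorem SES.con3 (h : SES f g) {i j : ℕ} (hij : 1 + i = j) (e : Ex R C V j) (he : pre g e = 0) :
    ∃ a : Ex R A V i, h.cls.comp a hij = e :=
  Abelian.Ext.contravariant_sequence_exact₃ h.se (ModuleCat.of R V) e he hij
theorem SES.cls_post (h : SES f g) : post f h.cls = 0 := h.se.extClass_comp
theorem SES.pre_cls (h : SES f g) : pre g h.cls = 0 := h.se.comp_extClass
theorem SES.nat (h : SES f g) (h' : SES f' g') (a : A →ₗ[R] A') (b : B →ₗ[R] B') (c : C →ₗ[R] C')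
    (h1 : f' ∘ₗ a = b ∘ₗ f) (h2 : g' ∘ₗ b = c ∘ₗ g) : post a h.cls = pre c h'.cls := by
  let φ : h.cx ⟶ h'.cx :=
    { τ₁ := ModuleCat.ofHom a, τ₂ := ModuleCat.ofHom b, τ₃ := ModuleCat.ofHom c
      comm₁₂ := by ext x; exact DFunLike.congr_fun h1 x
      comm₂₃ := by ext x; exact DFunLike.congr_fun h2 x }
  exact ShortComplex.ShortExact.extClass_naturality h.se h'.se φ

theorem SES.cov_inj (h : SES f g) (e : Ex R V A 0) (he : post f e = 0) : e = 0 := by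
  obtain ⟨u, rfl⟩ := m0_bij.2 e
  rw [post_m0] at he
  have h0 : m0 (0 : V →ₗ[R] B) = 0 := by simp [m0]
  have := m0_bij.1 (he.trans h0.symm)
  have : u = 0 := by
    ext x; apply h.inj; simpa using DFunLike.congr_fun this x
  simp [this, m0]
theorem SES.con_inj (h : SES f g) (e : Ex R C V 0) (he : pre g e = 0) : e = 0 := by
  obtain ⟨u, rfl⟩ := m0_bij.2 e
  rw [pre_m0] at he
  have h0 : m0 (0 : B →ₗ[R] V) = 0 := by simp [m0]
  have := m0_bij.1 (he.trans h0.symm)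
  have : u = 0 := by
    ext x; obtain ⟨y, rfl⟩ := h.surj x; simpa using DFunLike.congr_fun this y
  simp [this, m0]

def EZ (R : Type) [CommRing R] (M N : Type) [AddCommGroup M] [Module R M] [AddCommGroup N]
    [Module R N] (i : ℕ) : Prop := ∀ e : Ex R M N i, e = 0

theorem SES.z_cov2 (h : SES f g) {i : ℕ} (h1 : EZ R V A i) (h2 : EZ R V C i) : EZ R V B i := by
  intro e; obtain ⟨a, rfl⟩ := h.cov2 e (h2 _); rw [h1 a, map_zero]
theorem SES.z_cov3 (h : SES f g) {i : ℕ} (h1 : EZ R V B i) (h2 : EZ R V A (i+1)) : EZ R V C i := by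
  intro e; obtain ⟨a, rfl⟩ := h.cov3 rfl e (h2 _); rw [h1 a, map_zero]
theorem SES.z_cov1 (h : SES f g) {i : ℕ} (h1 : EZ R V C i) (h2 : EZ R V B (i+1)) : EZ R V A (i+1) := by
  intro e; obtain ⟨a, rfl⟩ := h.cov1 rfl e (h2 _); rw [h1 a, Abelian.Ext.zero_comp]
theorem SES.z_cov0 (h : SES f g) (h1 : EZ R V B 0) : EZ R V A 0 := by
  intro e; exact h.cov_inj e (h1 _)
theorem SES.z_con2 (h : SES f g) {i : ℕ} (h1 : EZ R C V i) (h2 : EZ R A V i) : EZ R B V i := by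
  intro e; obtain ⟨a, rfl⟩ := h.con2 e (h2 _); rw [h1 a, map_zero]
theorem SES.z_con1 (h : SES f g) {i : ℕ} (h1 : EZ R B V i) (h2 : EZ R C V (i+1)) : EZ R A V i := by
  intro e; obtain ⟨a, rfl⟩ := h.con1 (add_comm _ _) e (h2 _); rw [h1 a, map_zero]
theorem SES.z_con3 (h : SES f g) {i : ℕ} (h1 : EZ R A V i) (h2 : EZ R B V (i+1)) : EZ R C V (i+1) := by
  intro e; obtain ⟨a, rfl⟩ := h.con3 (add_comm _ _) e (h2 _); rw [h1 a, Abelian.Ext.comp_zero]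
theorem SES.z_con0 (h : SES f g) (h1 : EZ R B V 0) : EZ R C V 0 := by
  intro e; exact h.con_inj e (h1 _)

theorem EZ.of_equiv_left (e : M ≃ₗ[R] N) {i : ℕ} (h : EZ R M V i) : EZ R N V i := by
  intro x
  have : x = pre (e.symm : N →ₗ[R] M) (pre (e : M →ₗ[R] N) x) := by
    rw [pre_pre]; simp [pre_id]
  rw [this, h (pre _ x), map_zero]
theorem EZ.of_equiv_right (e : M ≃ₗ[R] N) {i : ℕ} (h : EZ R V M i) : EZ R V N i := by
  intro x
  have : x = post (e : M →ₗ[R] N) (post (e.symm : N →ₗ[R] M) x) := by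
    rw [post_post]; simp [post_id]
  rw [this, h (post _ x), map_zero]
theorem EZ.sub {i : ℕ} (h : EZ R M N i) : Subsingleton (Ex R M N i) :=
  ⟨fun a b => by rw [h a, h b]⟩
theorem EZ_iff {i : ℕ} : EZ R M N i ↔ Subsingleton (Ex R M N i) :=
  ⟨EZ.sub, fun _ _ => Subsingleton.elim _ _⟩
theorem EZ_iff_old {i : ℕ} : EZ R M N i ↔ Subsingleton (ExtMod R M N i) := by
  rw [EZ_iff]; exact (extOld_subsingleton_iff _ _ _).symm

theorem EZ_proj [Module.Projective R M] (i : ℕ) : EZ R M N (i+1) := fun e =>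
  Abelian.Ext.eq_zero_of_projective e
theorem EZ_zero_left [Subsingleton M] (i : ℕ) : EZ R M N i := by
  intro x
  rw [← pre_id x, show (LinearMap.id : M →ₗ[R] M) = 0 from Subsingleton.elim _ _, pre_zero]

theorem ses_ker (g : B →ₗ[R] C) (hg : Function.Surjective g) : SES (LinearMap.ker g).subtype g :=
  ⟨Subtype.val_injective, hg, fun x => by simp⟩
theorem ses_quot (S : Submodule R M) : SES S.subtype S.mkQ :=
  ⟨Subtype.val_injective, S.mkQ_surjective, fun x => by simp⟩

theorem smul_left {i : ℕ} (r : R) (h : ∀ m : M, r • m = 0) (e : Ex R M N i) : r • e = 0 := by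
  have := pre_smul (LinearMap.id : M →ₗ[R] M) r e
  rw [pre_id] at this
  rw [← this, show r • (LinearMap.id : M →ₗ[R] M) = 0 from LinearMap.ext h, pre_zero]
theorem smul_right {i : ℕ} (r : R) (h : ∀ m : N, r • m = 0) (e : Ex R M N i) : r • e = 0 := by
  have := post_smul (LinearMap.id : N →ₗ[R] N) r e
  rw [post_id] at this
  rw [← this, show r • (LinearMap.id : N →ₗ[R] N) = 0 from LinearMap.ext h, post_zero]

end Tk
end CM
end

noncomputable section
open scoped Pointwise
namespace CM

section BB
variable {R : Type} [CommRing R]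
variable {A B C V M N L : Type}
  [AddCommGroup A] [Module R A] [AddCommGroup B] [Module R B] [AddCommGroup C] [Module R C]
  [AddCommGroup V] [Module R V] [AddCommGroup M] [Module R M] [AddCommGroup N] [Module R N]
  [AddCommGroup L] [Module R L]

theorem smulSES (x : R) (hx : IsSMulRegular A x) :
    SES (x • (LinearMap.id : A →ₗ[R] A)) (x • (⊤ : Submodule R A)).mkQ := by
  refine ⟨fun a b h => hx h, Submodule.mkQ_surjective _, fun a => ?_⟩
  simp only [Submodule.mkQ_apply, Submodule.Quotient.mk_eq_zero, Submodule.mem_smul_pointwise_iff_exists,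
    Set.mem_range, LinearMap.smul_apply, LinearMap.id_apply]
  simp

theorem nak [IsNoetherianRing R] [IsLocalRing R] [Module.Finite R N] [Module.Finite R L] {i : ℕ}
    {x : R} (hx : x ∈ maximalIdeal R) (h : ∀ e : Ex R N L i, ∃ e' : Ex R N L i, x • e' = e) :
    EZ R N L i := by
  have hb : (⊤ : Submodule R (Ex R N L i)) = ⊥ := by
    refine Submodule.eq_bot_of_le_smul_of_le_jacobson_bot (maximalIdeal R) ⊤
      Module.Finite.fg_top ?_ (IsLocalRing.maximalIdeal_le_jacobson _)
    intro e _
    obtain ⟨e', rfl⟩ := h e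
    exact Submodule.smul_mem_smul hx trivial
  intro e
  have : e ∈ (⊤ : Submodule R (Ex R N L i)) := trivial
  rw [hb] at this
  simpa using this

theorem nak_con [IsNoetherianRing R] [IsLocalRing R] [Module.Finite R N] [Module.Finite R L] {i : ℕ}
    {x : R} (hx : x ∈ maximalIdeal R) (hr : IsSMulRegular N x)
    (h : EZ R (QuotSMulTop x N) L (i+1)) : EZ R N L i := by
  refine nak hx fun e => ?_
  obtain ⟨a, ha⟩ := (smulSES x hr).con1 (add_comm _ _) e (h _)
  exact ⟨a, by rw [← ha, pre_smul, pre_id]⟩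

theorem nak_cov [IsNoetherianRing R] [IsLocalRing R] [Module.Finite R N] [Module.Finite R L] {i : ℕ}
    {x : R} (hx : x ∈ maximalIdeal R) (hr : IsSMulRegular N x)
    (h : EZ R L (QuotSMulTop x N) i) : EZ R L N i := by
  refine nak hx fun e => ?_
  obtain ⟨a, ha⟩ := (smulSES x hr).cov2 e (h _)
  exact ⟨a, by rw [← ha, post_smul, post_id]⟩

theorem regular_quot_prime (p : Ideal R) [p.IsPrime] (x : R) (hx : x ∉ p) : IsSMulRegular (R ⧸ p) x := by
  intro a b h
  obtain ⟨a, rfl⟩ := Ideal.Quotient.mk_surjective a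
  obtain ⟨b, rfl⟩ := Ideal.Quotient.mk_surjective b
  change Ideal.Quotient.mk p (x * a) = Ideal.Quotient.mk p (x * b) at h
  rw [Ideal.Quotient.eq] at h ⊢
  rw [← mul_sub] at h
  exact (Ideal.IsPrime.mem_or_mem ‹_› h).resolve_left hx

theorem prime_ez [IsNoetherianRing R] [IsLocalRing R] [Module.Finite R L] {s : ℕ}
    (h : ∀ (N : Type) [AddCommGroup N] [Module R N] [Module.Finite R N], EZ R N L (s+1))
    (p : Ideal R) [p.IsPrime] (hp : p ≠ maximalIdeal R) : EZ R (R ⧸ p) L s := by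
  have hle : p ≤ maximalIdeal R := IsLocalRing.le_maximalIdeal (Ideal.IsPrime.ne_top ‹_›)
  obtain ⟨x, hx, hxp⟩ := SetLike.exists_of_lt (lt_of_le_of_ne hle hp)
  exact nak_con hx (regular_quot_prime p x hxp) (h _)

theorem b1 [IsNoetherianRing R] [IsLocalRing R] [Module.Finite R L] (s : ℕ)
    (h : ∀ (N : Type) [AddCommGroup N] [Module R N] [Module.Finite R N], EZ R N L (s+1))
    (hk : EZ R (ResidueField R) L s) (N : Type) [AddCommGroup N] [Module R N] [hN : Module.Finite R N] :
    EZ R N L s := by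
  induction hN using IsNoetherianRing.induction_on_isQuotientEquivQuotientPrime R with
  | subsingleton N => exact EZ_zero_left _
  | quotient N p e =>
    refine EZ.of_equiv_left e.symm ?_
    by_cases hp : p.asIdeal = maximalIdeal R
    · rw [hp]; exact hk
    · exact prime_ez h _ hp
  | exact N1 N2 N3 f g hf hg hfg h1 h3 => exact SES.z_con2 ⟨hf, hg, hfg⟩ h3 h1

theorem ez_finlen [IsNoetherianRing R] [IsLocalRing R] {s n : ℕ}
    (hk : EZ R (ResidueField R) L s) (V : Type) [AddCommGroup V] [Module R V]
    [hV : Module.Finite R V] (hm : maximalIdeal R ^ n ≤ Module.annihilator R V) : EZ R V L s := by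
  revert hm
  induction hV using IsNoetherianRing.induction_on_isQuotientEquivQuotientPrime R with
  | subsingleton N => intro _; exact EZ_zero_left _
  | quotient N p e =>
    intro hm
    refine EZ.of_equiv_left e.symm ?_
    rw [e.annihilator_eq, Ideal.annihilator_quotient] at hm
    have hp : p.asIdeal = maximalIdeal R :=
      ((IsLocalRing.isMaximal_iff R).1 (by
        have := (maximalIdeal.isMaximal R).eq_of_le p.2.ne_top (Ideal.IsPrime.le_of_pow_le hm)
        rw [← this]; infer_instance))
    rw [hp]; exact hk
  | exact N1 N2 N3 f g hf hg hfg h1 h3 =>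
    intro hm
    exact SES.z_con2 ⟨hf, hg, hfg⟩ (h3 (hm.trans (g.annihilator_le_of_surjective hg)))
      (h1 (hm.trans (f.annihilator_le_of_injective hf)))

theorem bij_congr (q : M ≃ₗ[R] N) : Function.Bijective (fun f : V →ₗ[R] M => (q : M →ₗ[R] N) ∘ₗ f) := by
  refine ⟨fun f g h => ?_, fun f => ⟨(q.symm : N →ₗ[R] M) ∘ₗ f, ?_⟩⟩
  · ext v; exact q.injective (DFunLike.congr_fun h v)
  · ext v; simp

def TowerP (R : Type) [CommRing R] (N Q : Type) [AddCommGroup N] [Module R N] [AddCommGroup Q] [Module R Q]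
    (rs : List R) (n : ℕ) (e : Ex R Q N n) : Prop :=
  ∀ (V : Type) [AddCommGroup V] [Module R V], (∀ r ∈ rs, ∀ v : V, r • v = 0) →
        (∀ i < n, EZ R V N i) ∧ Function.Bijective (fun f : V →ₗ[R] Q => pre f e)

theorem TowerP.equiv {rs : List R} {n : ℕ} {e : Ex R M N n} (h : TowerP R N M rs n e) (q : L ≃ₗ[R] M) :
    TowerP R N L rs n (pre (q : L →ₗ[R] M) e) := by
  intro V _ _ hV
  obtain ⟨h1, h2⟩ := h V hV
  refine ⟨h1, ?_⟩
  have := h2.comp (bij_congr (V := V) q)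
  convert this using 1
  ext f
  simp [pre_pre]

theorem TowerP.nil : TowerP R N N [] 0 (m0 (LinearMap.id : N →ₗ[R] N)) := by
  intro V _ _ hV
  refine ⟨by simp, ?_⟩
  convert (m0_bij : Function.Bijective (m0 : (V →ₗ[R] N) → _)) using 1
  ext f
  simp [pre_m0]

theorem TowerP.cons {r : R} (hr : IsSMulRegular N r) {rs : List R} {n : ℕ} {e : Ex R L (QuotSMulTop r N) n}
    (h : TowerP R (QuotSMulTop r N) L rs n e) :
    TowerP R N L (r :: rs) (n+1) (e.comp (smulSES r hr).cls rfl) := by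
  intro V _ _ hV
  obtain ⟨h1, h2⟩ := h V (fun r hr => hV r (by simp [hr]))
  have hV0 : ∀ v : V, r • v = 0 := hV r (by simp)
  have hkill : ∀ {i : ℕ} (a : Ex R V N i), post (r • (LinearMap.id : N →ₗ[R] N)) a = 0 := by
    intro i a; rw [post_smul, post_id]; exact smul_left r hV0 a
  have hz : ∀ i < n + 1, EZ R V N i := by
    intro i hi a
    cases i with
    | zero => exact (smulSES r hr).cov_inj a (hkill a)
    | succ i =>
      obtain ⟨b, rfl⟩ := (smulSES r hr).cov1 rfl a (hkill a)
      rw [h1 i (by omega) b, Abelian.Ext.zero_comp]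
  refine ⟨hz, ?_⟩
  have hcl : Function.Bijective (fun b : Ex R V (QuotSMulTop r N) n => b.comp (smulSES r hr).cls rfl) := by
    constructor
    · intro b b' hb
      have : (b - b').comp (smulSES r hr).cls rfl = 0 := by
        rw [sub_eq_add_neg, Abelian.Ext.add_comp, Abelian.Ext.neg_comp, ← sub_eq_add_neg]; exact sub_eq_zero.2 hb
      obtain ⟨c, hc⟩ := (smulSES r hr).cov3 rfl _ this
      rw [hz _ (by omega) c, map_zero] at hc
      exact sub_eq_zero.1 hc.symm
    · intro a
      exact (smulSES r hr).cov1 rfl a (hkill a)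
  convert hcl.comp h2 using 1
  ext f
  simp only [Function.comp_apply]
  rw [pre_comp]

theorem tower (rs : List R) : ∀ (N : Type) [AddCommGroup N] [Module R N]
    (_ : RingTheory.Sequence.IsWeaklyRegular N rs),
    ∃ e : Ex R (N ⧸ (Ideal.ofList rs • ⊤ : Submodule R N)) N rs.length,
      TowerP R N _ rs rs.length e := by
  induction rs with
  | nil =>
    intro N _ _ _
    let q : (N ⧸ (Ideal.ofList ([] : List R) • ⊤ : Submodule R N)) ≃ₗ[R] N :=
      (Submodule.quotEquivOfEqBot _ (by simp))
    exact ⟨_, TowerP.nil.equiv q⟩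
  | cons r rs ih =>
    intro N _ _ hN
    rw [RingTheory.Sequence.isWeaklyRegular_cons_iff] at hN
    obtain ⟨e, he⟩ := ih (QuotSMulTop r N) hN.2
    exact ⟨_, (he.cons hN.1).equiv (Submodule.quotOfListConsSMulTopEquivQuotSMulTopInner N r rs)⟩

end BB
end CM
end

noncomputable section
open scoped Pointwise
namespace CM

section CC
variable {R : Type} [CommRing R]
variable {A B C V M N L : Type}
  [AddCommGroup A] [Module R A] [AddCommGroup B] [Module R B] [AddCommGroup C] [Module R C]
  [AddCommGroup V] [Module R V] [AddCommGroup M] [Module R M] [AddCommGroup N] [Module R N]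
  [AddCommGroup L] [Module R L]

abbrev sp (w : M) : R →ₗ[R] M := LinearMap.toSpanSingleton R M w

abbrev fac {J K : Ideal R} (h : J ≤ K) : (R ⧸ J) →ₗ[R] (R ⧸ K) := Submodule.factor h

def KP (J : Ideal R) (n : ℕ) (e : Ex R (R ⧸ J) R n) : Prop :=
  ∀ (W : Type) [AddCommGroup W] [Module R W], (∀ i, n < i → EZ R (R ⧸ J) W i) ∧
    (∀ c : Ex R (R ⧸ J) W n, ∃ w : W, post (sp w) e = c) ∧
    (∀ w : W, post (sp w) e = 0 → w ∈ J • (⊤ : Submodule R W))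

theorem facSES (J : Ideal R) (y : R) (hy : IsSMulRegular (R ⧸ J) y) :
    SES (y • (LinearMap.id : (R ⧸ J) →ₗ[R] (R ⧸ J))) (fac (le_sup_left : J ≤ J ⊔ Ideal.span {y})) := by
  refine ⟨fun a b h => hy h, Submodule.factor_surjective _, fun a => ?_⟩
  obtain ⟨a, rfl⟩ := Submodule.mkQ_surjective _ a
  have h0 : (fac (le_sup_left : J ≤ J ⊔ Ideal.span {y})) (J.mkQ a) = 0 ↔ a ∈ J ⊔ Ideal.span {y} :=
    Submodule.Quotient.mk_eq_zero _
  rw [h0]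
  simp only [Submodule.mem_sup, Ideal.mem_span_singleton', Set.mem_range, LinearMap.smul_apply, LinearMap.id_apply,
    Submodule.mkQ_apply]
  constructor
  · rintro ⟨u, hu, _, ⟨c, rfl⟩, rfl⟩
    refine ⟨Submodule.Quotient.mk c, ?_⟩
    rw [← Submodule.Quotient.mk_smul, Submodule.Quotient.eq]
    rw [smul_eq_mul, show y * c - (u + c * y) = -u by ring]
    exact J.neg_mem hu
  · rintro ⟨c, hc⟩
    obtain ⟨c, rfl⟩ := Submodule.mkQ_surjective _ c
    rw [Submodule.mkQ_apply, ← Submodule.Quotient.mk_smul, eq_comm, Submodule.Quotient.eq] at hc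
    exact ⟨_, hc, _, ⟨c, rfl⟩, by rw [smul_eq_mul]; ring⟩

theorem post_sp_add (e : Ex R V R n) (w w' : M) : post (sp (w + w')) e = post (sp w) e + post (sp w') e := by
  rw [← post_add, sp, LinearMap.toSpanSingleton_add]
theorem post_sp_smul (e : Ex R V R n) (r : R) (w : M) : post (sp (r • w)) e = r • post (sp w) e := by
  rw [← post_smul, sp, LinearMap.toSpanSingleton_smul]

theorem KP.nil : KP (⊥ : Ideal R) 0
    (m0 ((Submodule.quotEquivOfEqBot (⊥ : Ideal R) rfl : (R ⧸ (⊥ : Ideal R)) ≃ₗ[R] R) : (R ⧸ (⊥ : Ideal R)) →ₗ[R] R)) := by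
  set q := (Submodule.quotEquivOfEqBot (⊥ : Ideal R) rfl : (R ⧸ (⊥ : Ideal R)) ≃ₗ[R] R)
  have : Module.Projective R (R ⧸ (⊥ : Ideal R)) := Module.Projective.of_equiv q.symm
  intro W _ _
  refine ⟨?_, ?_, ?_⟩
  · intro i hi
    obtain ⟨i, rfl⟩ := Nat.exists_eq_succ_of_ne_zero hi.ne'
    exact EZ_proj i
  · intro c
    obtain ⟨f, rfl⟩ := m0_bij.2 c
    refine ⟨f (q.symm 1), ?_⟩
    rw [post_m0]
    congr 1
    ext
    have h1 : q 1 = 1 := rfl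
    have h2 : q.symm 1 = 1 := by rw [LinearEquiv.symm_apply_eq, h1]
    simp only [LinearMap.comp_apply, sp, h2, LinearMap.toSpanSingleton_apply, LinearEquiv.coe_coe]
    change (1 : R) • f 1 = f 1
    simp
  · intro w hw
    rw [post_m0] at hw
    have h0 : m0 (0 : (R ⧸ (⊥ : Ideal R)) →ₗ[R] W) = 0 := by simp [m0]
    have := DFunLike.congr_fun (m0_bij.1 (hw.trans h0.symm)) (q.symm 1)
    simpa [sp] using this

theorem KP.snoc {J : Ideal R} {n : ℕ} {e : Ex R (R ⧸ J) R n} (h : KP J n e) {y : R}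
    (hy : IsSMulRegular (R ⧸ J) y) :
    KP (J ⊔ Ideal.span {y}) (1 + n) ((facSES J y hy).cls.comp e rfl) := by
  intro W _ _
  obtain ⟨h1, h2, h3⟩ := h W
  refine ⟨?_, ?_, ?_⟩
  · intro i hi
    obtain ⟨i, rfl⟩ := Nat.exists_eq_succ_of_ne_zero (show i ≠ 0 by omega)
    exact (facSES J y hy).z_con3 (h1 _ (by omega)) (h1 _ (by omega))
  · intro c
    obtain ⟨a, rfl⟩ := (facSES J y hy).con3 rfl c (h1 _ (by omega) _)
    obtain ⟨w, rfl⟩ := h2 a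
    exact ⟨w, post_comp _ _ _ _⟩
  · intro w hw
    rw [post_comp] at hw
    obtain ⟨a, ha⟩ := (facSES J y hy).con1 rfl _ hw
    obtain ⟨w', rfl⟩ := h2 a
    rw [pre_smul, pre_id, ← post_sp_smul] at ha
    have : post (sp (w - y • w')) e = 0 := by
      have h5 := post_sp_add e (w - y • w') (y • w')
      rw [sub_add_cancel, ha] at h5
      exact (left_eq_add.1 (h5.trans (add_comm _ _)))
    have h4 := h3 _ this
    rw [← sub_add_cancel w (y • w')]
    refine Submodule.add_mem _ (Submodule.smul_mono_left le_sup_left h4) ?_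
    exact Submodule.smul_mem_smul (Ideal.mem_sup_right (Ideal.mem_span_singleton_self y)) trivial

theorem KP_nat {J K : Ideal R} (hle : K ≤ J) {n : ℕ} {e : Ex R (R ⧸ J) R n} {e' : Ex R (R ⧸ K) R n}
    {X : R} (h : pre (fac hle) e = X • e') (x y z : R) (hz : z = x * y) (hy : IsSMulRegular (R ⧸ J) y)
    (hy' : IsSMulRegular (R ⧸ K) z) (hle' : K ⊔ Ideal.span {z} ≤ J ⊔ Ideal.span {y}) :
    pre (fac hle') ((facSES J y hy).cls.comp e rfl) =
      (X * x) • ((facSES K z hy').cls.comp e' rfl : Ex R (R ⧸ (K ⊔ Ideal.span {z})) R (1 + n)) := by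
  have := (facSES K z hy').nat (facSES J y hy) (x • fac hle) (fac hle) (fac hle') (by
    ext; simp [hz, smul_smul, mul_comm]) (by ext; rfl)
  rw [pre_comp, ← this, post_comp_eq, pre_smul, h, ← Abelian.Ext.comp_smul, smul_smul, mul_comm]

theorem KP_list (n : ℕ) (xs : List R) (h1 : RingTheory.Sequence.IsWeaklyRegular R (xs.map (· ^ n)))
    (h2 : RingTheory.Sequence.IsWeaklyRegular R (xs.map (· ^ (n+1)))) :
    ∃ (e : Ex R (R ⧸ Ideal.ofList (xs.map (· ^ n))) R xs.length)
      (e' : Ex R (R ⧸ Ideal.ofList (xs.map (· ^ (n+1)))) R xs.length)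
      (hle : Ideal.ofList (xs.map (· ^ (n+1))) ≤ Ideal.ofList (xs.map (· ^ n))),
      KP _ _ e ∧ KP _ _ e' ∧ pre (fac hle) e = xs.prod • e' := by
  suffices H : ∀ J J' m, J = Ideal.ofList (xs.map (· ^ n)) → J' = Ideal.ofList (xs.map (· ^ (n+1))) → 
    m = xs.length → ∃ (e : Ex R (R ⧸ J) R m) (e' : Ex R (R ⧸ J') R m) (hle : J' ≤ J), 
      KP _ _ e ∧ KP _ _ e' ∧ pre (fac hle) e = xs.prod • e' from H _ _ _ rfl rfl rfl
  induction xs using List.reverseRecOn with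
  | nil =>
    intro J J' m hJ hJ' hm
    simp only [List.map_nil, Ideal.ofList_nil, List.length_nil] at hJ hJ' hm
    subst hJ hJ' hm
    refine ⟨_, _, le_rfl, KP.nil, KP.nil, ?_⟩
    rw [List.prod_nil, one_smul, pre_m0]
    congr 1
    ext
    rfl
  | append_singleton xs x ih =>
    intro J J' m hJ hJ' hm
    simp only [List.map_append, List.map_cons, List.map_nil, RingTheory.Sequence.isWeaklyRegular_append_iff,
      RingTheory.Sequence.isWeaklyRegular_cons_iff] at h1 h2
    obtain ⟨e, e', hle, he, he', hee⟩ := ih h1.1 h2.1 _ _ _ rfl rfl rfl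
    simp only [List.map_append, List.map_cons, List.map_nil, Ideal.ofList_append, Ideal.ofList_singleton] at hJ hJ'
    rw [List.length_append, List.length_singleton, add_comm] at hm
    subst hm hJ hJ'
    have cast : ∀ (I K : Ideal R) (h : I = K) (r : R), IsSMulRegular (R ⧸ I) r → IsSMulRegular (R ⧸ K) r := by
      rintro I _ rfl r h; exact h
    have r1 := cast _ (Ideal.ofList (xs.map (· ^ n))) (by simp) _ h1.2.1
    have r2 := cast _ (Ideal.ofList (xs.map (· ^ (n+1)))) (by simp) _ h2.2.1
    refine ⟨_, _, sup_le_sup hle ?_, he.snoc r1, he'.snoc r2, ?_⟩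
    · rw [Ideal.span_singleton_le_span_singleton]; exact ⟨x, pow_succ _ _⟩
    · rw [List.prod_append, List.prod_singleton]
      exact KP_nat hle hee x _ _ (pow_succ' _ _) r1 r2 _

theorem injX [IsNoetherianRing R] [IsLocalRing R] (n : ℕ) (xs : List R)
    (h1 : RingTheory.Sequence.IsWeaklyRegular R (xs.map (· ^ n)))
    (h2 : RingTheory.Sequence.IsWeaklyRegular R (xs.map (· ^ (n+1)))) (t : ℕ)
    (ht : maximalIdeal R ^ t ≤ Ideal.ofList (xs.map (· ^ (n+1))))
    (hM : ∀ i < xs.length, EZ R (ResidueField R) M i) (m : M)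
    (hm : xs.prod • m ∈ (Ideal.ofList (xs.map (· ^ (n+1))) • ⊤ : Submodule R M)) :
    m ∈ (Ideal.ofList (xs.map (· ^ n)) • ⊤ : Submodule R M) := by
  obtain ⟨e, e', hle, he, he', hee⟩ := KP_list n xs h1 h2
  refine (he M).2.2 m ?_
  have hz : post (sp (xs.prod • m)) e' = 0 := by
    refine Submodule.smul_induction_on hm (fun r hr w _ => ?_) (fun a b ha hb => ?_)
    · rw [post_sp_smul]
      refine smul_left r (fun v => ?_) _
      obtain ⟨v, rfl⟩ := Submodule.mkQ_surjective _ v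
      rw [Submodule.mkQ_apply, ← Submodule.Quotient.mk_smul, Submodule.Quotient.mk_eq_zero]
      exact Ideal.mul_mem_right _ _ hr
    · rw [post_sp_add, ha, hb, add_zero]
  have hp : pre (fac hle) (post (sp m) e) = 0 := by
    rw [pre_post, hee, map_smul, ← post_sp_smul, hz]
  have S := ses_ker (fac hle) (Submodule.factor_surjective _)
  generalize post (sp m) e = c at hp ⊢
  generalize xs.length = d at *
  cases d with
  | zero => exact S.con_inj c hp
  | succ d =>
    obtain ⟨a, rfl⟩ := S.con3 (add_comm _ _) c hp
    have : EZ R (LinearMap.ker (fac hle)) M d := by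
      refine ez_finlen (n := t) (hM d (by omega)) _ ?_
      refine ht.trans ?_
      have := LinearMap.annihilator_le_of_injective (LinearMap.ker (fac hle)).subtype Subtype.val_injective
      rwa [Ideal.annihilator_quotient] at this
    rw [this a, Abelian.Ext.comp_zero]

end CC
end CM
end

noncomputable section
open scoped Pointwise
namespace CM

section GG
variable {R : Type} [CommRing R]

theorem KP_list1 (xs : List R) (h1 : RingTheory.Sequence.IsWeaklyRegular R xs) :
    ∃ (e : Ex R (R ⧸ Ideal.ofList xs) R xs.length), KP _ _ e := by
  suffices H : ∀ J m, J = Ideal.ofList xs → 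
    m = xs.length → ∃ (e : Ex R (R ⧸ J) R m), KP _ _ e from H _ _ rfl rfl
  induction xs using List.reverseRecOn with
  | nil =>
    intro J m hJ hm
    simp only [Ideal.ofList_nil, List.length_nil] at hJ hm
    subst hJ hm
    exact ⟨_, KP.nil⟩
  | append_singleton xs x ih =>
    intro J m hJ hm
    simp only [RingTheory.Sequence.isWeaklyRegular_append_iff,
      RingTheory.Sequence.isWeaklyRegular_cons_iff] at h1
    obtain ⟨e, he⟩ := ih h1.1 _ _ rfl rfl
    simp only [Ideal.ofList_append, Ideal.ofList_singleton] at hJ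
    rw [List.length_append, List.length_singleton, add_comm] at hm
    subst hm hJ
    have cast : ∀ (I K : Ideal R) (h : I = K) (r : R), IsSMulRegular (R ⧸ I) r → IsSMulRegular (R ⧸ K) r := by
      rintro I _ rfl r h; exact h
    have r1 := cast _ (Ideal.ofList xs) (by simp) _ h1.2.1
    exact ⟨_, he.snoc r1⟩

theorem towerR (xs : List R) (h1 : RingTheory.Sequence.IsWeaklyRegular R xs) :
    ∃ (e : Ex R (R ⧸ Ideal.ofList xs) R xs.length), TowerP R R _ xs xs.length e := by
  obtain ⟨e, he⟩ := tower xs R h1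
  exact ⟨_, he.equiv (Submodule.quotEquivOfEq (Ideal.ofList xs) (Ideal.ofList xs • ⊤ : Submodule R R) (by simp))⟩

theorem TowerP.hom_zero {N Q V : Type} [AddCommGroup N] [Module R N] [AddCommGroup Q] [Module R Q]
    [AddCommGroup V] [Module R V] {rs : List R} {n : ℕ} {e : Ex R Q N n} (h : TowerP R N Q rs n e)
    (hV : ∀ r ∈ rs, ∀ v : V, r • v = 0) : EZ R V N n ↔ ∀ f : V →ₗ[R] Q, f = 0 := by
  obtain ⟨-, h2⟩ := h V hV
  constructor
  · intro hz f
    exact h2.1 ((hz _).trans (hz _).symm)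
  · intro hf c
    obtain ⟨f, rfl⟩ := h2.2 c
    simp [hf f, pre_zero]

theorem kill_of_le {J : Ideal R} {xs : List R} (h : Ideal.ofList xs ≤ J) :
    ∀ r ∈ xs, ∀ v : R ⧸ J, r • v = 0 := by
  intro r hr v
  obtain ⟨v, rfl⟩ := Submodule.mkQ_surjective _ v
  rw [Submodule.mkQ_apply, ← Submodule.Quotient.mk_smul, Submodule.Quotient.mk_eq_zero]
  exact Ideal.mul_mem_right _ _ (h (Ideal.subset_span hr))

theorem not_ez_self [Nontrivial R] : ¬ EZ R R R 0 := by
  intro h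
  have h0 : m0 (0 : R →ₗ[R] R) = 0 := by simp [m0]
  have := m0_bij.1 ((h (m0 (LinearMap.id : R →ₗ[R] R))).trans h0.symm)
  exact one_ne_zero (DFunLike.congr_fun this (1 : R))

variable [IsNoetherianRing R] [IsLocalRing R]

theorem rees (M : Type) [AddCommGroup M] [Module R M] [Module.Finite R M] [Nontrivial M] (n : ℕ)
    (h : ∀ i < n, EZ R (ResidueField R) M i) :
    ∃ rs : List R, rs.length = n ∧ (∀ r ∈ rs, r ∈ maximalIdeal R) ∧ RingTheory.Sequence.IsRegular M rs := by
  have hlt : maximalIdeal R • (⊤ : Submodule R M) < ⊤ := by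
    refine lt_top_iff_ne_top.2 fun h => ?_
    have := Submodule.eq_bot_of_le_smul_of_le_jacobson_bot (maximalIdeal R) (⊤ : Submodule R M)
      Module.Finite.fg_top h.ge (IsLocalRing.maximalIdeal_le_jacobson _)
    exact top_ne_bot this
  have : Module.Finite R (R ⧸ maximalIdeal R) := inferInstance
  refine ModuleCat.exists_isRegular_of_exists_subsingleton_ext (maximalIdeal R) n (ModuleCat.of R M)
    hlt (ModuleCat.of R (R ⧸ maximalIdeal R)) ?_ (fun i hi => (h i hi).sub)
  change Module.support R (R ⧸ maximalIdeal R) = _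
  rw [Module.support_eq_zeroLocus, Ideal.annihilator_quotient]

theorem gor (H : ∃ n : ℕ, ∀ (N : Type) [AddCommGroup N] [Module R N] (i : ℕ), n < i → EZ R N R i) :
    ∃ xs : List R, (∀ x ∈ xs, x ∈ maximalIdeal R) ∧ RingTheory.Sequence.IsRegular R xs ∧
      ringKrullDim R = xs.length ∧ (∃ t, maximalIdeal R ^ t ≤ Ideal.ofList xs) ∧
      (∀ i, xs.length < i → ∀ (N : Type) [AddCommGroup N] [Module R N] [Module.Finite R N], EZ R N R i) ∧
      (∀ i < xs.length, EZ R (ResidueField R) R i) := by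
  classical
  have H1 : ∃ s : ℕ, ∀ i ≥ s, ∀ (N : Type) [AddCommGroup N] [Module R N] [Module.Finite R N], EZ R N R i := by
    obtain ⟨n, hn⟩ := H
    exact ⟨n+1, fun i hi N _ _ _ => hn N i hi⟩
  obtain ⟨s, hs, hmin⟩ : ∃ s : ℕ, (∀ i ≥ s+1, ∀ (N : Type) [AddCommGroup N] [Module R N] [Module.Finite R N], EZ R N R i)
      ∧ ¬ EZ R (ResidueField R) R s := by
    rcases hf : Nat.find H1 with _ | s
    · have := Nat.find_spec H1
      rw [hf] at this
      exact absurd (this 0 le_rfl R) not_ez_self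
    · have h1 := Nat.find_spec H1
      rw [hf] at h1
      refine ⟨s, h1, fun hk => ?_⟩
      refine Nat.find_min H1 (m := s) (by omega) ?_
      intro i hi N _ _ _
      rcases Nat.lt_or_ge s i with h | h
      · exact h1 i h N
      · obtain rfl : i = s := by omega
        exact b1 i (fun N _ _ _ => h1 _ (by omega) N) hk N
  obtain ⟨t, ht, hts, hlt⟩ : ∃ t, ¬ EZ R (ResidueField R) R t ∧ t ≤ s ∧ ∀ i < t, EZ R (ResidueField R) R i :=
    ⟨_, Nat.find_spec (⟨s, hmin⟩ : ∃ i, ¬ EZ R (ResidueField R) R i), Nat.find_min' _ hmin, fun i hi => by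
    simpa using Nat.find_min (⟨s, hmin⟩ : ∃ i, ¬ EZ R (ResidueField R) R i) hi⟩
  obtain ⟨xs, hlen, hxm, hreg⟩ := rees R t hlt
  obtain ⟨e, he⟩ := towerR xs hreg.1
  obtain ⟨κ, hκ⟩ := KP_list1 xs hreg.1
  have hJm : Ideal.ofList xs ≤ maximalIdeal R := Ideal.span_le.2 hxm
  have hst : s = t := by
    by_contra hne
    rw [← hlen, he.hom_zero (V := ResidueField R) (kill_of_le (J := maximalIdeal R) hJm)] at ht
    push Not at ht
    obtain ⟨f, hf⟩ := ht
    have hinj : Function.Injective f := by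
      have : IsSimpleModule R (ResidueField R) := 
        (isSimpleModule_iff_isCoatom.2 (maximalIdeal.isMaximal R).out : IsSimpleModule R (R ⧸ maximalIdeal R))
      exact (LinearMap.injective_or_eq_zero f).resolve_right hf
    have S : SES f (LinearMap.range f).mkQ := ⟨hinj, Submodule.mkQ_surjective _, fun x => by simp⟩
    refine hmin (S.z_con1 ?_ (hs _ le_rfl _))
    exact (hκ R).1 s (by omega)
  subst hst
  have hprime : ∀ p : Ideal R, p.IsPrime → Ideal.ofList xs ≤ p → p = maximalIdeal R := by
    intro p hp hle
    obtain ⟨q, hq, hqp⟩ := Ideal.exists_minimalPrimes_le hle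
    have hq' : q ∈ associatedPrimes R (R ⧸ Ideal.ofList xs) := by
      apply Module.associatedPrimes.minimalPrimes_annihilator_subset_associatedPrimes
      rwa [Ideal.annihilator_quotient]
    have hqprime := hq.1.1
    have : q = maximalIdeal R := by
      by_contra hne
      have hz := prime_ez (L := R) (s := s) (fun N _ _ _ => hs _ le_rfl N) q hne
      rw [← hlen, he.hom_zero (kill_of_le hq.1.2)] at hz
      rw [AssociatedPrimes.mem_iff, isAssociatedPrime_iff] at hq'
      obtain ⟨-, x, hx⟩ := hq'
      let f : (R ⧸ q) →ₗ[R] (R ⧸ Ideal.ofList xs) := Submodule.liftQ q (sp x) (by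
        intro r hr
        rw [hx, Submodule.mem_colon_singleton] at hr
        simpa [sp] using hr)
      have hf := DFunLike.congr_fun (hz f) (Submodule.Quotient.mk 1)
      have hx0 : x = 0 := by
        have h1 : f (Submodule.Quotient.mk 1) = sp x (1:R) := Submodule.liftQ_apply _ _ _
        rw [h1] at hf
        simpa [sp] using hf
      refine hqprime.ne_top ?_
      rw [hx, hx0]
      ext; simp [Submodule.mem_colon_singleton]
    rw [this] at hqp
    exact ((maximalIdeal.isMaximal R).eq_of_le hp.ne_top hqp).symm
  have hrad : (Ideal.ofList xs).radical = maximalIdeal R := by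
    rw [Ideal.radical_eq_sInf]
    apply le_antisymm
    · exact sInf_le ⟨hJm, inferInstance⟩
    · exact le_sInf fun p hp => (hprime p hp.2 hp.1).ge
  refine ⟨xs, hxm, hreg, ?_, ?_, ?_, ?_⟩
  · rw [← ringKrullDim_add_length_eq_ringKrullDim_of_isRegular xs hreg]
    have hnt : Nontrivial (R ⧸ Ideal.ofList xs) :=
      Ideal.Quotient.nontrivial_iff.2 (ne_top_of_le_ne_top (maximalIdeal.isMaximal R).ne_top hJm)
    have : Ring.KrullDimLE 0 (R ⧸ Ideal.ofList xs) := by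
      rw [Ring.krullDimLE_zero_iff]
      intro I hI
      have h1 := hprime (I.comap (Ideal.Quotient.mk _)) inferInstance (by
        intro x hx; rw [Ideal.mem_comap, Ideal.Quotient.eq_zero_iff_mem.2 hx]; exact I.zero_mem)
      have h2 : (I.comap (Ideal.Quotient.mk (Ideal.ofList xs))).IsMaximal := h1 ▸ inferInstance
      rw [← Ideal.map_comap_of_surjective _ Ideal.Quotient.mk_surjective I]
      exact (Ideal.map_eq_top_or_isMaximal_of_surjective _ Ideal.Quotient.mk_surjective h2).resolve_left
        (by rw [Ideal.map_comap_of_surjective _ Ideal.Quotient.mk_surjective I]; exact hI.ne_top)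
    rw [ringKrullDimZero_iff_ringKrullDim_eq_zero.1 this]
    simp
  · rw [← hrad]
    exact Ideal.exists_radical_pow_le_of_fg _ (IsNoetherian.noetherian _)
  · intro i hi N _ _ _
    exact hs i (by omega) N
  · intro i hi
    exact hlt i (by omega)

end GG
end CM
end

noncomputable section
open scoped Pointwise
namespace CM

section HH
variable {R : Type} [CommRing R]
open RingTheory.Sequence

theorem wr_mid (rs : List R) : ∀ (A B C : Type) [AddCommGroup A] [Module R A] [AddCommGroup B] [Module R B]
    [AddCommGroup C] [Module R C] (f : A →ₗ[R] B) (g : B →ₗ[R] C) (_ : SES f g)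
    (_ : IsWeaklyRegular A rs) (_ : IsWeaklyRegular C rs), IsWeaklyRegular B rs := by
  induction rs with
  | nil => intros; exact IsWeaklyRegular.nil _ _
  | cons r rs ih =>
    intro A B C _ _ _ _ _ _ f g S hA hC
    rw [isWeaklyRegular_cons_iff] at hA hC ⊢
    have hinj : Function.Injective (QuotSMulTop.map r f) := by
      rw [injective_iff_map_eq_zero]
      intro a ha
      obtain ⟨a, rfl⟩ := Submodule.mkQ_surjective _ a
      have ha : (Submodule.Quotient.mk (f a) : QuotSMulTop r B) = 0 := ha
      rw [Submodule.Quotient.mk_eq_zero, Submodule.mem_smul_pointwise_iff_exists] at ha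
      obtain ⟨b, -, hb⟩ := ha
      have h1 : g b = 0 := hC.1 (by
        simp only [smul_zero, ← map_smul, hb]
        exact S.exact.apply_apply_eq_zero a)
      obtain ⟨a', rfl⟩ := (S.exact b).1 h1
      rw [← map_smul] at hb
      rw [Submodule.mkQ_apply, Submodule.Quotient.mk_eq_zero, Submodule.mem_smul_pointwise_iff_exists]
      exact ⟨a', trivial, S.inj hb⟩
    refine ⟨?_, ih _ _ _ (QuotSMulTop.map r f) (QuotSMulTop.map r g) ⟨hinj, ?_, ?_⟩ hA.2 hC.2⟩
    · refine isSMulRegular_iff_right_eq_zero_of_smul.2 ?_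
      intro b hb
      have h1 : g b = 0 := hC.1 (by
        simp only [smul_zero, ← map_smul, hb, map_zero])
      obtain ⟨a, rfl⟩ := (S.exact b).1 h1
      rw [← map_smul] at hb
      have h2 : r • a = 0 := S.inj (by simpa using hb)
      have h3 : a = 0 := hA.1 (by simpa using h2)
      simp [h3]
    · exact QuotSMulTop.map_surjective r S.surj
    · exact QuotSMulTop.map_exact r S.exact S.surj

theorem wr_sub (rs : List R) : ∀ (A : Type) [AddCommGroup A] [Module R A] [Subsingleton A],
    IsWeaklyRegular A rs := by
  induction rs with
  | nil => intros; exact IsWeaklyRegular.nil _ _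
  | cons r rs ih =>
    intro A _ _ _
    rw [isWeaklyRegular_cons_iff]
    have : Subsingleton (QuotSMulTop r A) := (Submodule.mkQ_surjective _).subsingleton
    exact ⟨Function.injective_of_subsingleton _, ih _⟩

theorem wr_quotpow {N : Type} [AddCommGroup N] [Module R N] (x : R) (hx : IsSMulRegular N x) (xs : List R)
    (h : IsWeaklyRegular (QuotSMulTop x N) xs) (n : ℕ) : IsWeaklyRegular (QuotSMulTop (x^n) N) xs := by
  induction n with
  | zero =>
    have : Subsingleton (QuotSMulTop (x^0) N) := by
      rw [QuotSMulTop, Submodule.Quotient.subsingleton_iff]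
      simp
    exact wr_sub _ _
  | succ n ih =>
    let f : QuotSMulTop (x^n) N →ₗ[R] QuotSMulTop (x^(n+1)) N := 
      Submodule.liftQ _ ((x^(n+1) • ⊤ : Submodule R N).mkQ ∘ₗ (x • LinearMap.id)) (by
        intro y hy
        rw [Submodule.mem_smul_pointwise_iff_exists] at hy
        obtain ⟨z, -, rfl⟩ := hy
        rw [LinearMap.mem_ker]
        change Submodule.Quotient.mk (x • x ^ n • z) = _
        rw [Submodule.Quotient.mk_eq_zero, Submodule.mem_smul_pointwise_iff_exists]
        exact ⟨z, trivial, by rw [smul_smul, pow_succ']⟩)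
    let g : QuotSMulTop (x^(n+1)) N →ₗ[R] QuotSMulTop x N := 
      Submodule.liftQ _ (x • ⊤ : Submodule R N).mkQ (by
        intro y hy
        rw [Submodule.mem_smul_pointwise_iff_exists] at hy
        obtain ⟨z, -, rfl⟩ := hy
        rw [Submodule.ker_mkQ, Submodule.mem_smul_pointwise_iff_exists]
        exact ⟨x^n • z, trivial, by rw [smul_smul, pow_succ']⟩)
    have hf : ∀ y, f (Submodule.Quotient.mk y) = Submodule.Quotient.mk (x • y) := fun y => rfl
    have hg : ∀ y, g (Submodule.Quotient.mk y) = Submodule.Quotient.mk y := fun y => rfl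
    refine wr_mid xs _ _ _ f g ⟨?_, ?_, ?_⟩ ih h
    · rw [injective_iff_map_eq_zero]
      intro a ha
      obtain ⟨a, rfl⟩ := Submodule.Quotient.mk_surjective _ a
      rw [hf, Submodule.Quotient.mk_eq_zero, Submodule.mem_smul_pointwise_iff_exists] at ha
      obtain ⟨b, -, hb⟩ := ha
      rw [Submodule.Quotient.mk_eq_zero, Submodule.mem_smul_pointwise_iff_exists]
      refine ⟨b, trivial, hx ?_⟩
      simp only
      rw [← hb, smul_smul, pow_succ']
    · intro y
      obtain ⟨y, rfl⟩ := Submodule.Quotient.mk_surjective _ y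
      exact ⟨_, hg y⟩
    · intro y
      obtain ⟨y, rfl⟩ := Submodule.Quotient.mk_surjective _ y
      rw [hg, Submodule.Quotient.mk_eq_zero, Submodule.mem_smul_pointwise_iff_exists]
      constructor
      · rintro ⟨b, -, rfl⟩
        exact ⟨_, hf b⟩
      · rintro ⟨z, hz⟩
        obtain ⟨z, rfl⟩ := Submodule.Quotient.mk_surjective _ z
        rw [hf, Submodule.Quotient.eq, Submodule.mem_smul_pointwise_iff_exists] at hz
        obtain ⟨w, -, hw⟩ := hz
        refine ⟨z - x^n • w, trivial, ?_⟩
        rw [smul_sub, smul_smul, ← pow_succ', hw]; abel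

theorem wr_pow (n : ℕ) (xs : List R) : ∀ (N : Type) [AddCommGroup N] [Module R N], 
    IsWeaklyRegular N xs → IsWeaklyRegular N (xs.map (· ^ n)) := by
  induction xs with
  | nil => intro N _ _ h; exact h
  | cons x xs ih =>
    intro N _ _ h
    rw [isWeaklyRegular_cons_iff] at h
    rw [List.map_cons, isWeaklyRegular_cons_iff]
    exact ⟨h.1.pow n, ih _ (wr_quotpow x h.1 xs h.2 n)⟩

theorem ofList_pow_le {xs : List R} {I : Ideal R} (h : ∀ x ∈ xs, x ∈ I) (n : ℕ) :
    Ideal.ofList (xs.map (· ^ n)) ≤ I ^ n := by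
  refine Ideal.span_le.2 ?_
  intro y hy
  simp only [List.mem_map, Set.mem_ofPred_eq] at hy
  obtain ⟨x, hx, rfl⟩ := hy
  exact Ideal.pow_mem_pow (h x hx) n

theorem pow_le_ofList [IsNoetherianRing R] {xs : List R} {I : Ideal R} (h : ∃ t, I ^ t ≤ Ideal.ofList xs) (n : ℕ) :
    ∃ t, I ^ t ≤ Ideal.ofList (xs.map (· ^ n)) := by
  obtain ⟨t, ht⟩ := h
  have h1 : Ideal.ofList xs ≤ (Ideal.ofList (xs.map (· ^ n))).radical := by
    refine Ideal.span_le.2 ?_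
    intro y hy
    exact ⟨n, Ideal.subset_span (List.mem_map.2 ⟨y, hy, rfl⟩)⟩
  have h2 : I ≤ (Ideal.ofList (xs.map (· ^ n))).radical := by
    intro y hy
    rw [← Ideal.radical_idem]
    exact ⟨t, h1 (ht (Ideal.pow_mem_pow hy t))⟩
  obtain ⟨s, hs⟩ := Ideal.exists_pow_le_of_le_radical_of_fg h2 (IsNoetherian.noetherian _)
  exact ⟨s, hs⟩

theorem ofList_pow_anti (xs : List R) (n : ℕ) :
    Ideal.ofList (xs.map (· ^ (n+1))) ≤ Ideal.ofList (xs.map (· ^ n)) := by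
  refine Ideal.span_le.2 ?_
  intro y hy
  simp only [List.mem_map, Set.mem_ofPred_eq] at hy
  obtain ⟨x, hx, rfl⟩ := hy
  rw [SetLike.mem_coe, pow_succ]
  exact Ideal.mul_mem_right _ _ (Ideal.subset_span (List.mem_map.2 ⟨x, hx, rfl⟩))

theorem prod_mul_mem (xs : List R) (n : ℕ) {y : R} (hy : y ∈ Ideal.ofList (xs.map (· ^ n))) :
    xs.prod * y ∈ Ideal.ofList (xs.map (· ^ (n+1))) := by
  have : Ideal.ofList (xs.map (· ^ n)) ≤ Submodule.comap (LinearMap.mulLeft R xs.prod) (Ideal.ofList (xs.map (· ^ (n+1)))) := by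
    refine Ideal.span_le.2 ?_
    intro y hy
    simp only [List.mem_map, Set.mem_ofPred_eq] at hy
    obtain ⟨x, hx, rfl⟩ := hy
    obtain ⟨c, hc⟩ := List.dvd_prod hx
    change xs.prod * x^n ∈ Ideal.ofList (xs.map (· ^ (n+1)))
    rw [hc, show x * c * x^n = c * x^(n+1) by ring]
    exact Ideal.mul_mem_left _ _ (Ideal.subset_span (List.mem_map.2 ⟨x, hx, rfl⟩))
  exact this hy

end HH
end CM
end

noncomputable section
open scoped Pointwise
namespace CM

section II
variable {R : Type} [CommRing R]
open RingTheory.Sequence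

def qlin {J : Ideal R} {A B : Type} [AddCommGroup A] [Module R A] [AddCommGroup B] [Module R B]
    [Module (R ⧸ J) A] [Module (R ⧸ J) B] [IsScalarTower R (R ⧸ J) A] [IsScalarTower R (R ⧸ J) B]
    (f : A →ₗ[R] B) : A →ₗ[R ⧸ J] B :=
  { f with
    map_smul' := by
      intro r a
      obtain ⟨r, rfl⟩ := Ideal.Quotient.mk_surjective r
      have h1 : ∀ a : A, (Ideal.Quotient.mk J r) • a = r • a := fun a => by
        rw [← one_smul (R ⧸ J) a, ← smul_assoc r (1 : R ⧸ J) a, ← smul_assoc]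
        simp [Algebra.smul_def]
      have h2 : ∀ a : B, (Ideal.Quotient.mk J r) • a = r • a := fun a => by
        rw [← one_smul (R ⧸ J) a, ← smul_assoc r (1 : R ⧸ J) a, ← smul_assoc]
        simp [Algebra.smul_def]
      change f _ = (Ideal.Quotient.mk J r) • f a
      rw [h1, h2, map_smul] }

theorem selfinj [IsNoetherianRing R] (ys : List R) (h : IsWeaklyRegular R ys)
    (H : ∀ (N : Type) [AddCommGroup N] [Module R N] [Module.Finite R N], EZ R N R (ys.length + 1)) :
    Module.Injective (R ⧸ Ideal.ofList ys) (R ⧸ Ideal.ofList ys) := by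
  refine Module.Baer.injective ?_
  obtain ⟨e, he⟩ := towerR ys h
  have hk := kill_of_le (le_refl (Ideal.ofList ys))
  intro I g
  have S := ses_quot (I.restrictScalars R)
  let f : (I.restrictScalars R) →ₗ[R] (R ⧸ Ideal.ofList ys) := g.restrictScalars R
  obtain ⟨a, ha⟩ := S.con1 (add_comm _ _) (pre f e) (H _ _)
  obtain ⟨b, hb⟩ := (he (R ⧸ Ideal.ofList ys) hk).2.2 a
  simp only at hb
  subst hb
  rw [pre_pre] at ha
  have := (he (I.restrictScalars R) (fun r hr v => Subtype.ext (hk r hr v))).2.1 ha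
  exact ⟨qlin b, fun x hx => DFunLike.congr_fun this ⟨x, hx⟩⟩

theorem inj_ext {J : Ideal R} (hJ : Module.Injective (R ⧸ J) (R ⧸ J)) (A B : Type) [AddCommGroup A] [Module R A] [AddCommGroup B] [Module R B]
    (hA : Module.IsTorsionBySet R A J) (hB : Module.IsTorsionBySet R B J) (i : A →ₗ[R] B) (hi : Function.Injective i)
    (f : A →ₗ[R] R ⧸ J) : ∃ g : B →ₗ[R] R ⧸ J, ∀ a, g (i a) = f a := by
  let := hA.module
  let := hB.module
  obtain ⟨g, hg⟩ := hJ.out (qlin i) hi (qlin f)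
  exact ⟨g.restrictScalars R, hg⟩

theorem socle [IsLocalRing R] (J : Ideal R) (hJ : J ≠ ⊤) (ht : ∃ t, maximalIdeal R ^ t ≤ J) :
    ∃ s : R, s ∉ J ∧ ∀ x ∈ maximalIdeal R, x * s ∈ J := by
  classical
  rcases h : Nat.find ht with _ | t
  · have := Nat.find_spec ht
    rw [h, pow_zero, Ideal.one_eq_top] at this
    exact absurd (top_le_iff.1 this) hJ
  · have h1 := Nat.find_spec ht
    rw [h] at h1
    have h2 := Nat.find_min ht (m := t) (by omega)
    obtain ⟨s, hs, hsJ⟩ := SetLike.not_le_iff_exists.1 h2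
    exact ⟨s, hsJ, fun x hx => h1 (by rw [pow_succ']; exact Ideal.mul_mem_mul hx hs)⟩

theorem cogen [IsLocalRing R] (J : Ideal R) (hJ : J ≠ ⊤) (ht : ∃ t, maximalIdeal R ^ t ≤ J)
    (hinj : Module.Injective (R ⧸ J) (R ⧸ J)) (M : Type) [AddCommGroup M] [Module R M] (z : M)
    (hz : z ∉ (J • ⊤ : Submodule R M)) : ∃ φ : M →ₗ[R] R ⧸ J, φ z ≠ 0 := by
  obtain ⟨s, hs, hms⟩ := socle J hJ ht
  let Q := M ⧸ (J • ⊤ : Submodule R M)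
  let zb : Q := Submodule.Quotient.mk z
  have hzb : zb ≠ 0 := by rwa [Ne, Submodule.Quotient.mk_eq_zero]
  let i0 := LinearMap.toSpanSingleton R Q zb
  let K := LinearMap.ker i0
  let i : R ⧸ K →ₗ[R] Q := K.liftQ i0 le_rfl
  have hi : Function.Injective i := LinearMap.ker_eq_bot.1 (Submodule.ker_liftQ_eq_bot _ _ _ le_rfl)
  have hKm : K ≤ maximalIdeal R := by
    refine IsLocalRing.le_maximalIdeal fun h => hzb ?_
    have : (1 : R) ∈ K := h ▸ trivial
    simpa [K, i0] using this
  let f : R ⧸ K →ₗ[R] R ⧸ J := K.liftQ (LinearMap.toSpanSingleton R (R ⧸ J) (Ideal.Quotient.mk J s)) (by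
    intro x hx
    rw [LinearMap.mem_ker, LinearMap.toSpanSingleton_apply]
    exact Ideal.Quotient.eq_zero_iff_mem.2 (hms x (hKm hx)))
  have hQ : Module.IsTorsionBySet R Q J := Module.isTorsionBySet_quotient_ideal_smul M J
  obtain ⟨g, hg⟩ := inj_ext hinj (R ⧸ K) Q (by
    intro x r
    apply hi
    rw [map_smul, map_zero]
    exact @hQ (i x) r) hQ i hi f
  refine ⟨g ∘ₗ Submodule.mkQ _, fun h0 => hs ?_⟩
  have h1 := hg (Submodule.Quotient.mk 1)
  have h2 : i (Submodule.Quotient.mk 1) = zb := by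
    change (1 : R) • zb = _
    rw [one_smul]
  have h3 : f (Submodule.Quotient.mk 1) = Ideal.Quotient.mk J s := by
    change (1 : R) • (Ideal.Quotient.mk J s) = _
    rw [one_smul]
  rw [h2, h3] at h1
  exact Ideal.Quotient.eq_zero_iff_mem.1 (h1.symm.trans h0)

end II
end CM
end

noncomputable section
open scoped Pointwise
namespace CM

section JJ
variable {R : Type} [CommRing R] [IsNoetherianRing R] [IsLocalRing R]
open RingTheory.Sequence

/-- the ideals `J_n` -/
abbrev JJ (xs : List R) (n : ℕ) : Ideal R := Ideal.ofList (xs.map (· ^ n))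

theorem step_phi (xs : List R) (hreg : IsWeaklyRegular R xs)
    (ht : ∃ t, maximalIdeal R ^ t ≤ Ideal.ofList xs)
    (hE : ∀ (N : Type) [AddCommGroup N] [Module R N] [Module.Finite R N], EZ R N R (xs.length + 1))
    (hR : ∀ i < xs.length, EZ R (ResidueField R) R i)
    (M : Type) [AddCommGroup M] [Module R M] (hM : ∀ i < xs.length, EZ R (ResidueField R) M i)
    (n : ℕ) (φ : M →ₗ[R] R ⧸ JJ xs n) : ∃ φ' : M →ₗ[R] R ⧸ JJ xs (n+1),
      ∀ m, Submodule.factor (ofList_pow_anti xs n) (φ' m) = φ m := by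
  obtain ⟨t, ht'⟩ := pow_le_ofList ht (n+1)
  have r1 := wr_pow n xs R hreg
  have r2 := wr_pow (n+1) xs R hreg
  have hinj : Module.Injective (R ⧸ JJ xs (n+1)) (R ⧸ JJ xs (n+1)) :=
    selfinj _ r2 (by intro N _ _ _; rw [List.length_map]; exact hE N)
  let A := M ⧸ (JJ xs n • ⊤ : Submodule R M)
  let B := M ⧸ (JJ xs (n+1) • ⊤ : Submodule R M)
  let i : A →ₗ[R] B := Submodule.liftQ _ ((JJ xs (n+1) • ⊤ : Submodule R M).mkQ ∘ₗ (xs.prod • LinearMap.id)) (by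
    refine Submodule.smul_le.2 ?_
    intro r hr m _
    rw [LinearMap.mem_ker]
    change Submodule.Quotient.mk (xs.prod • r • m) = _
    rw [Submodule.Quotient.mk_eq_zero, smul_smul]
    exact Submodule.smul_mem_smul (prod_mul_mem xs n hr) trivial)
  have hi0 : ∀ m, i (Submodule.Quotient.mk m) = Submodule.Quotient.mk (xs.prod • m) := fun m => rfl
  have hi : Function.Injective i := by
    rw [injective_iff_map_eq_zero]
    intro a ha
    obtain ⟨a, rfl⟩ := Submodule.Quotient.mk_surjective _ a
    rw [hi0, Submodule.Quotient.mk_eq_zero] at ha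
    rw [Submodule.Quotient.mk_eq_zero]
    exact injX n xs r1 r2 t ht' hM a ha
  let X : R ⧸ JJ xs n →ₗ[R] R ⧸ JJ xs (n+1) := Submodule.liftQ _ ((JJ xs (n+1)).mkQ ∘ₗ (xs.prod • LinearMap.id)) (by
    intro r hr
    rw [LinearMap.mem_ker]
    change Submodule.Quotient.mk (xs.prod • r) = _
    rw [Submodule.Quotient.mk_eq_zero]
    exact prod_mul_mem xs n hr)
  have hX0 : ∀ m, X (Submodule.Quotient.mk m) = Submodule.Quotient.mk (xs.prod • m) := fun m => rfl
  let φb : A →ₗ[R] R ⧸ JJ xs n := Submodule.liftQ _ φ (by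
    refine Submodule.smul_le.2 ?_
    intro r hr m _
    rw [LinearMap.mem_ker, map_smul]
    obtain ⟨y, hy⟩ := Submodule.Quotient.mk_surjective _ (φ m)
    rw [← hy, ← Submodule.Quotient.mk_smul, Submodule.Quotient.mk_eq_zero]
    exact Ideal.mul_mem_right _ _ hr)
  have hB : Module.IsTorsionBySet R B (JJ xs (n+1)) := Module.isTorsionBySet_quotient_ideal_smul M _
  obtain ⟨g, hg⟩ := inj_ext hinj A B (by
    intro x r
    apply hi
    rw [map_smul, map_zero]
    exact @hB (i x) r) hB i hi (X ∘ₗ φb)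
  refine ⟨g ∘ₗ Submodule.mkQ _, fun m => ?_⟩
  obtain ⟨b, hb⟩ := Submodule.Quotient.mk_surjective _ (φ m)
  obtain ⟨a, ha⟩ := Submodule.Quotient.mk_surjective _ ((g ∘ₗ Submodule.mkQ _) m)
  rw [← ha, ← hb]
  change Submodule.Quotient.mk a = Submodule.Quotient.mk b
  rw [Submodule.Quotient.eq]
  have h1 := hg (Submodule.Quotient.mk m)
  have h2 : g (i (Submodule.Quotient.mk m)) = Submodule.Quotient.mk (xs.prod • a) := by
    rw [hi0, Submodule.Quotient.mk_smul, map_smul, Submodule.Quotient.mk_smul, ha]; rfl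
  have h3 : (X ∘ₗ φb) (Submodule.Quotient.mk m) = Submodule.Quotient.mk (xs.prod • b) := by
    rw [← hX0, hb]; rfl
  rw [h2, h3, Submodule.Quotient.eq, ← smul_sub] at h1
  have h4 := injX n xs r1 r2 t ht' hR (a - b) (by simpa using h1)
  simpa using h4

theorem exists_phi (xs : List R) (hxm : ∀ x ∈ xs, x ∈ maximalIdeal R) (hreg : IsWeaklyRegular R xs)
    (ht : ∃ t, maximalIdeal R ^ t ≤ Ideal.ofList xs)
    (hE : ∀ (N : Type) [AddCommGroup N] [Module R N] [Module.Finite R N], EZ R N R (xs.length + 1))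
    (hR : ∀ i < xs.length, EZ R (ResidueField R) R i)
    (M : Type) [AddCommGroup M] [Module R M] (hM : ∀ i < xs.length, EZ R (ResidueField R) M i)
    (n : ℕ) (hn : 1 ≤ n) (z : M) (hz : z ∉ (JJ xs n • ⊤ : Submodule R M))
    (N : ℕ) (hN : maximalIdeal R ^ N ≤ JJ xs n) :
    ∃ φ : M →ₗ[R] AdicCompletion (maximalIdeal R) R, (φ z).val N ≠ 0 := by
  have hinj : Module.Injective (R ⧸ JJ xs n) (R ⧸ JJ xs n) :=
    selfinj _ (wr_pow n xs R hreg) (by intro N _ _ _; rw [List.length_map]; exact hE N)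
  have hle : ∀ k, JJ xs k ≤ maximalIdeal R ^ k := ofList_pow_le hxm
  have hne : JJ xs n ≠ ⊤ := by
    refine ne_top_of_le_ne_top (maximalIdeal.isMaximal R).ne_top ((hle n).trans ?_)
    exact Ideal.pow_le_self (by omega)
  obtain ⟨φ0, hφ0⟩ := cogen (JJ xs n) hne (pow_le_ofList ht n) hinj M z hz
  choose st hst using step_phi xs hreg ht hE hR M hM
  let F : ∀ j, M →ₗ[R] R ⧸ JJ xs (n + j) := fun j => Nat.rec φ0 (fun j φ => st (n+j) φ) j
  have hF : ∀ j m (a b : R), F j m = Submodule.Quotient.mk a → F (j+1) m = Submodule.Quotient.mk b → 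
      b - a ∈ JJ xs (n+j) := by
    intro j m a b h1 h2
    have h3 : Submodule.factor (ofList_pow_anti xs (n+j)) (F (j+1) m) = F j m := hst (n+j) (F j) m
    rw [h1, h2] at h3
    exact (Submodule.Quotient.eq _).1 h3
  have hJanti : ∀ k j, JJ xs (n + (k + j)) ≤ JJ xs (n+k) := by
    intro k j
    induction j with
    | zero => exact le_rfl
    | succ j ih => exact (ofList_pow_anti xs _).trans ih
  have hF' : ∀ j l m (a b : R), F j m = Submodule.Quotient.mk a → F (j+l) m = Submodule.Quotient.mk b → 
      b - a ∈ JJ xs (n+j) := by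
    intro j l m
    induction l with
    | zero =>
      intro a b h1 h2
      exact (Submodule.Quotient.eq _).1 (h2.symm.trans h1)
    | succ l ih =>
      intro a b h1 h2
      obtain ⟨c, hc⟩ := Submodule.Quotient.mk_surjective _ (F (j+l) m)
      have h3 := hF _ m c b hc.symm h2
      have h4 := ih a c h1 hc.symm
      have := Ideal.add_mem _ (hJanti _ _ h3) h4
      simpa using this
  have hle2 : ∀ k, JJ xs (n + k) ≤ (maximalIdeal R ^ k • ⊤ : Submodule R R) := by
    intro k
    rw [smul_eq_mul, Ideal.mul_top]
    exact (hle _).trans (Ideal.pow_le_pow_right (by omega))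
  let ψ : ∀ k, M →ₗ[R] R ⧸ (maximalIdeal R ^ k • ⊤ : Submodule R R) := fun k => Submodule.factor (hle2 k) ∘ₗ F k
  have hψ : ∀ k m (a : R), F k m = Submodule.Quotient.mk a → ψ k m = Submodule.Quotient.mk a := by
    intro k m a h
    change Submodule.factor (hle2 k) (F k m) = _
    rw [h]; rfl
  refine ⟨AdicCompletion.lift _ ψ ?_, ?_⟩
  · intro k l hkl
    obtain ⟨l, rfl⟩ := Nat.exists_eq_add_of_le hkl
    ext m
    obtain ⟨a, ha⟩ := Submodule.Quotient.mk_surjective _ (F k m)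
    obtain ⟨b, hb⟩ := Submodule.Quotient.mk_surjective _ (F (k+l) m)
    rw [LinearMap.comp_apply, hψ _ _ _ ha.symm, hψ _ _ _ hb.symm]
    exact (Submodule.Quotient.eq _).2 (hle2 k (hF' k l m a b ha.symm hb.symm))
  · rw [AdicCompletion.eval_lift_apply]
    intro h0
    obtain ⟨a, ha⟩ := Submodule.Quotient.mk_surjective _ (F 0 z)
    obtain ⟨b, hb⟩ := Submodule.Quotient.mk_surjective _ (F (0+N) z)
    have hb' : F N z = Submodule.Quotient.mk b := by
      revert b; rw [zero_add]; intro b hb; exact hb.symm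
    rw [hψ _ _ _ hb', Submodule.Quotient.mk_eq_zero, smul_eq_mul, Ideal.mul_top] at h0
    have h1 := hF' 0 N z a b ha.symm hb.symm
    have h2 : a ∈ JJ xs n := by
      have := Ideal.sub_mem _ (hN h0) h1
      simpa using this
    refine hφ0 ?_
    change F 0 z = 0
    rw [← ha]
    exact (Submodule.Quotient.mk_eq_zero _).2 h2

end JJ
end CM
end

noncomputable section
open scoped Pointwise
namespace CM

section DD

theorem sepD1 {C : Type*} [CommRing C] [IsDomain C] [IsNoetherianRing C] [IsLocalRing C] (z : C)
    (hz : z ≠ 0) (h : ∀ Q : Ideal C, Q.IsPrime → Q ≠ ⊥ → z ∈ Q) :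
    ∃ N, maximalIdeal C ^ N ≤ Ideal.span {z} := by
  by_cases hzm : z ∈ maximalIdeal C
  swap
  · refine ⟨0, le_top.trans ?_⟩
    rw [Ideal.span_singleton_eq_top.2 (by simpa using hzm)]
  have hmin : maximalIdeal C ∈ (Ideal.span {z}).minimalPrimes := by
    by_contra hne
    have hfin := Ideal.finite_minimalPrimes_of_isNoetherianRing C (Ideal.span {z})
    have hns : ¬ ((maximalIdeal C : Set C) ⊆ ⋃ q ∈ (Ideal.span {z}).minimalPrimes, (q : Set C)) := by
      intro hs
      rw [Ideal.subset_union_prime_finite hfin ⊥ ⊥ (fun q hq _ _ => hq.1.1)] at hs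
      obtain ⟨q, hq, hle⟩ := hs
      have hqp := hq.1.1
      have := (maximalIdeal.isMaximal C).eq_of_le hqp.ne_top hle
      exact hne (this ▸ hq)
    rw [Set.not_subset] at hns
    obtain ⟨y, hym, hy⟩ := hns
    simp only [Set.mem_iUnion, not_exists] at hy
    have hle : Ideal.span {y} ≤ maximalIdeal C := (Ideal.span_singleton_le_iff_mem _).2 hym
    obtain ⟨Q, hQ, hQm⟩ := Ideal.exists_minimalPrimes_le hle
    have hQp := hQ.1.1
    have hht := Ideal.height_le_one_of_isPrincipal_of_mem_minimalPrimes _ Q hQ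
    have hyQ : y ∈ Q := hQ.1.2 (Ideal.mem_span_singleton_self y)
    obtain ⟨q0, hq0, -⟩ := Ideal.exists_minimalPrimes_le ((Ideal.span_singleton_le_iff_mem (maximalIdeal C)).2 hzm)
    have hQ0 : Q ≠ ⊥ := by
      rintro rfl
      rw [Ideal.mem_bot] at hyQ
      exact hy q0 hq0 (hyQ ▸ q0.zero_mem)
    obtain ⟨q, hq, hqQ⟩ := Ideal.exists_minimalPrimes_le ((Ideal.span_singleton_le_iff_mem Q).2 (h Q hQp hQ0))
    have hqp := hq.1.1
    have hlt : q < Q := lt_of_le_of_ne hqQ (by rintro rfl; exact hy _ hq hyQ)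
    have hq0 : (⊥ : Ideal C) < q := bot_lt_iff_ne_bot.2 (by
      rintro rfl
      exact hz (by simpa using hq.1.2 (Ideal.mem_span_singleton_self z)))
    have hbp : (⊥ : Ideal C).IsPrime := Ideal.isPrime_bot
    have h1 := Ideal.height_strict_mono_of_isPrime_of_isPrime hlt
    have h2 := Ideal.height_strict_mono_of_isPrime_of_isPrime hq0
    have h3 := h1.trans_le hht
    rw [Order.lt_one_iff] at h3
    rw [h3] at h2
    exact not_lt_bot h2
  have hrad : maximalIdeal C ≤ (Ideal.span {z}).radical := by
    rw [Ideal.radical_eq_sInf]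
    refine le_sInf fun Q hQ => ?_
    have hQp : Q.IsPrime := hQ.2
    exact hmin.2 ⟨hQp, hQ.1⟩ (IsLocalRing.le_maximalIdeal hQp.ne_top)
  exact Ideal.exists_pow_le_of_le_radical_of_fg hrad (IsNoetherian.noetherian _)

theorem sepD2 {A D : Type*} [CommRing A] [IsNoetherianRing A] [IsLocalRing A] [CommRing D] [Algebra A D]
    [Algebra.IsIntegral A D] (z : A) (P : Ideal A) (hP : ∀ x ∈ P, algebraMap A D x = 0) (N : ℕ)
    (hN : maximalIdeal A ^ N ≤ P ⊔ Ideal.span {z})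
    (hz : ∀ n, algebraMap A D z ∈ ((maximalIdeal A).map (algebraMap A D))^n) : algebraMap A D z = 0 := by
  set I := (maximalIdeal A).map (algebraMap A D) with hI
  have h1 : I ^ N ≤ I * I ^ N := by
    calc I ^ N = (maximalIdeal A ^ N).map (algebraMap A D) := (Ideal.map_pow _ _ _).symm
      _ ≤ (P ⊔ Ideal.span {z}).map (algebraMap A D) := Ideal.map_mono hN
      _ ≤ I ^ (N+1) := by
        rw [Ideal.map_sup]
        refine sup_le ?_ ?_
        · refine Ideal.map_le_iff_le_comap.2 fun x hx => ?_
          rw [Ideal.mem_comap, hP x hx]; exact zero_mem _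
        · rw [Ideal.map_span, Set.image_singleton, Ideal.span_singleton_le_iff_mem]
          exact hz _
      _ = I * I ^ N := pow_succ' _ _
  have hfg : (I ^ N).FG := by
    rw [← Ideal.map_pow]
    exact Ideal.FG.map (IsNoetherian.noetherian _) _
  have hj : I ≤ (⊥ : Ideal D).jacobson := by
    refine le_sInf fun Q hQ => ?_
    have hQm : Q.IsMaximal := hQ.2
    have := Ideal.isMaximal_comap_of_isIntegral_of_isMaximal (R := A) Q
    refine Ideal.map_le_iff_le_comap.2 ?_
    rw [IsLocalRing.eq_maximalIdeal this]
  have := Submodule.eq_bot_of_le_smul_of_le_jacobson_bot I (I^N) hfg h1 hj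
  have h3 := hz N
  rw [this] at h3
  simpa using h3

theorem sep {A B : Type*} [CommRing A] [IsNoetherianRing A] [IsLocalRing A] [IsReduced A] [CommRing B] [Algebra A B]
    [Algebra.IsIntegral A B] (hinj : Function.Injective (algebraMap A B)) (z : A)
    (hz : ∀ n, algebraMap A B z ∈ ((maximalIdeal A).map (algebraMap A B))^n) : z = 0 := by
  by_contra hz0
  have hne : {P : Ideal A | P.IsPrime ∧ z ∉ P}.Nonempty := by
    by_contra hemp
    apply hz0
    have : z ∈ nilradical A := by
      rw [nilradical_eq_sInf, Submodule.mem_sInf]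
      intro p hp
      by_contra h
      exact hemp ⟨p, hp, h⟩
    rw [nilradical_eq_zero] at this
    simpa using this
  obtain ⟨P, ⟨hPp, hzP⟩, hmax⟩ := set_has_maximal_iff_noetherian.2 (inferInstanceAs (IsNoetherian A A)) _ hne
  have hC : IsLocalRing (A ⧸ P) := IsLocalRing.of_surjective' (Ideal.Quotient.mk P) Ideal.Quotient.mk_surjective
  obtain ⟨N, hN⟩ := sepD1 (C := A ⧸ P) (Ideal.Quotient.mk P z) (by rwa [Ne, Ideal.Quotient.eq_zero_iff_mem]) (by
    intro Q hQ hQ0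
    by_contra hzQ
    refine hmax (Q.comap (Ideal.Quotient.mk P)) ⟨inferInstance, hzQ⟩ ?_
    refine lt_of_le_of_ne ?_ ?_
    · intro x hx
      rw [Ideal.mem_comap, Ideal.Quotient.eq_zero_iff_mem.2 hx]; exact zero_mem _
    · intro h
      apply hQ0
      rw [← Ideal.map_comap_of_surjective _ Ideal.Quotient.mk_surjective Q, ← h, Ideal.map_quotient_self])
  have hN' : maximalIdeal A ^ N ≤ P ⊔ Ideal.span {z} := by
    have h1 : (maximalIdeal A ^ N).map (Ideal.Quotient.mk P) ≤ Ideal.span {Ideal.Quotient.mk P z} := by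
      rw [Ideal.map_pow]
      refine (Ideal.pow_right_mono ?_ N).trans hN
      refine IsLocalRing.le_maximalIdeal ?_
      intro htop
      have h2 := congrArg (Ideal.comap (Ideal.Quotient.mk P)) htop
      rw [Ideal.comap_map_of_surjective _ Ideal.Quotient.mk_surjective, ← RingHom.ker_eq_comap_bot, Ideal.mk_ker,
        sup_eq_left.2 (IsLocalRing.le_maximalIdeal hPp.ne_top), Ideal.comap_top] at h2
      exact (maximalIdeal.isMaximal A).ne_top h2
    intro x hx
    have h2 := h1 (Ideal.mem_map_of_mem _ hx)
    rw [Ideal.mem_span_singleton'] at h2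
    obtain ⟨a, ha⟩ := h2
    obtain ⟨a, rfl⟩ := Ideal.Quotient.mk_surjective a
    rw [← map_mul, Ideal.Quotient.mk_eq_mk_iff_sub_mem] at ha
    have : x = -(a * z - x) + a * z := by ring
    rw [this]
    exact Submodule.add_mem_sup (neg_mem ha) (Ideal.mul_mem_left _ _ (Ideal.mem_span_singleton_self z))
  obtain ⟨Q, -, hQp, hQ⟩ := Ideal.exists_ideal_over_prime_of_isIntegral P (⊥ : Ideal B) (by
    rw [← RingHom.ker_eq_comap_bot, (RingHom.injective_iff_ker_eq_bot _).1 hinj]; exact bot_le)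
  have hint : Algebra.IsIntegral A (B ⧸ Q) := inferInstance
  have hcomp : ∀ x, algebraMap A (B ⧸ Q) x = Ideal.Quotient.mk Q (algebraMap A B x) := fun x => rfl
  have h0 := sepD2 (D := B ⧸ Q) z P (by
    intro x hx
    rw [hcomp, Ideal.Quotient.eq_zero_iff_mem]
    rw [← hQ] at hx
    exact hx) N hN' (by
    intro n
    have h1 := Ideal.mem_map_of_mem (Ideal.Quotient.mk Q) (hz n)
    rw [Ideal.map_pow, Ideal.map_map] at h1
    exact h1)
  rw [hcomp, Ideal.Quotient.eq_zero_iff_mem] at h0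
  apply hzP
  rw [← hQ]
  exact h0

end DD
end CM
end

noncomputable section
open scoped Pointwise
namespace CM

section KK
variable {R : Type} [CommRing R] [IsNoetherianRing R] [IsLocalRing R]

theorem hat_surj (x : AdicCompletion (maximalIdeal R) R) (N : ℕ) :
    ∃ r : R, x - algebraMap R _ r ∈ maximalIdeal (AdicCompletion (maximalIdeal R) R) ^ N ∧
      (x - algebraMap R _ r).val N = 0 := by
  obtain ⟨r, hr⟩ := Submodule.Quotient.mk_surjective _ (x.val N)
  have h : (x - algebraMap R _ r).val N = 0 := by
    change x.val N - Submodule.Quotient.mk r = 0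
    rw [hr, sub_self]
  refine ⟨r, ?_, h⟩
  have : x - algebraMap R _ r ∈ LinearMap.ker (AdicCompletion.eval (maximalIdeal R) R N) := h
  rw [← AdicCompletion.pow_smul_top_eq_ker_eval (IsNoetherian.noetherian _)] at this
  rw [AdicCompletion.maximalIdeal_eq_map, ← Ideal.map_pow]
  rw [Ideal.smul_top_eq_map] at this
  exact this

theorem hat_noeth : IsNoetherianRing (AdicCompletion (maximalIdeal R) R) := by
  obtain ⟨n, a, ha⟩ := Submodule.fg_iff_exists_fin_generating_family.1 (IsNoetherian.noetherian (maximalIdeal R))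
  let S := AdicCompletion (maximalIdeal R) R
  let A := MvPolynomial (Fin n) R
  let I : Ideal A := MvPolynomial.idealOfVars (Fin n) R
  let Ah := AdicCompletion I A
  have : IsNoetherianRing (MvPowerSeries (Fin n) R) := inferInstance
  have hAh : IsNoetherianRing Ah :=
    isNoetherianRing_of_ringEquiv _ (MvPowerSeries.toAdicCompletionAlgEquiv (Fin n) R).toRingEquiv
  let ρ : A →+* S := MvPolynomial.eval₂Hom (algebraMap R S) (fun i => algebraMap R S (a i))
  have hI : I.map ρ = maximalIdeal S := by
    have ha' : (maximalIdeal R).map (algebraMap R S) = (Ideal.span (Set.range a)).map (algebraMap R S) :=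
      congrArg _ ha.symm
    rw [AdicCompletion.maximalIdeal_eq_map]
    refine Eq.trans ?_ ha'.symm
    change (Ideal.span (Set.range MvPolynomial.X)).map ρ = (Ideal.span (Set.range a)).map _
    rw [Ideal.map_span, Ideal.map_span, ← Set.range_comp, ← Set.range_comp]
    congr 2
    funext i
    exact MvPolynomial.eval₂_X _ _ _
  have hle : ∀ k, I ^ k ≤ (maximalIdeal S ^ k).comap ρ := by
    intro k
    rw [← Ideal.map_le_iff_le_comap, Ideal.map_pow, hI]
  let f : ∀ k, Ah →+* S ⧸ maximalIdeal S ^ k := fun k =>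
    (Ideal.quotientMap (maximalIdeal S ^ k) ρ (hle k)).comp (AdicCompletion.evalₐ I k).toRingHom
  have hf : ∀ {m n : ℕ} (hle : m ≤ n), (Ideal.Quotient.factorPow (maximalIdeal S) hle).comp (f n) = f m := by
    intro k l hkl
    ext x
    induction x using AdicCompletion.induction_on with | _ s =>
    change Ideal.Quotient.factorPow (maximalIdeal S) hkl (Ideal.quotientMap _ ρ (hle l) (AdicCompletion.evalₐ I l (AdicCompletion.mk I A s))) =
      Ideal.quotientMap _ ρ (hle k) (AdicCompletion.evalₐ I k (AdicCompletion.mk I A s))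
    rw [AdicCompletion.evalₐ_mk, AdicCompletion.evalₐ_mk]
    have h1 : Ideal.Quotient.mk (I^k) (s.val k) = Ideal.Quotient.mk (I^k) (s.val l) := by
      have := s.2 hkl
      rw [SModEq.sub_mem, smul_eq_mul, Ideal.mul_top] at this
      exact Ideal.Quotient.mk_eq_mk_iff_sub_mem _ _ |>.2 this
    rw [h1]
    rfl
  let F : Ah →+* S := IsAdicComplete.liftRingHom (maximalIdeal S) f hf
  have hFρ : F.comp (algebraMap A Ah) = ρ := by
    apply DFunLike.coe_injective
    apply IsHausdorff.funext' (maximalIdeal S)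
    intro k p
    have h1 : Ideal.Quotient.mk (maximalIdeal S ^ k) (F (algebraMap A Ah p)) = f k (algebraMap A Ah p) :=
      IsAdicComplete.mk_liftRingHom _ _ _ _ _
    refine h1.trans ?_
    change Ideal.quotientMap _ ρ (hle k) (AdicCompletion.evalₐ I k (AdicCompletion.of I A p)) = _
    rw [AdicCompletion.evalₐ_of]
    rfl
  have hK : IsAdicComplete (I.map (algebraMap A Ah)) Ah := 
    AdicCompletion.isAdicComplete_self I (IsNoetherian.noetherian _)
  have hm : (I.map (algebraMap A Ah)).map F = maximalIdeal S := by
    rw [Ideal.map_map, hFρ, hI]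
  have hFs : Function.Surjective F := by
    have : IsHausdorff ((I.map (algebraMap A Ah)).map F) S := by
      rw [hm]; infer_instance
    refine surjective_of_mk_map_comp_surjective (I := I.map (algebraMap A Ah)) F ?_
    rw [hm]
    intro y
    obtain ⟨x, rfl⟩ := Ideal.Quotient.mk_surjective y
    obtain ⟨r, hr, -⟩ := hat_surj x 1
    refine ⟨algebraMap A Ah (MvPolynomial.C r), ?_⟩
    change Ideal.Quotient.mk _ ((F.comp (algebraMap A Ah)) (MvPolynomial.C r)) = _
    rw [hFρ]
    symm
    rw [Ideal.Quotient.mk_eq_mk_iff_sub_mem]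
    have h2 : ρ (MvPolynomial.C r) = algebraMap R S r := MvPolynomial.eval₂_C _ _ _
    rw [h2]
    rw [pow_one] at hr
    exact hr
  exact isNoetherianRing_of_surjective _ _ F hFs

end KK
end CM
end

noncomputable section
open scoped Pointwise
namespace CM

section LL
open scoped nonZeroDivisors

theorem fin_of_w {R S : Type} [CommRing R] [CommRing S] [Algebra R S] [IsNoetherianRing S]
    [Module.FaithfullyFlat R S] (ι : FractionRing R →+* FractionRing S)
    (hι : ∀ r : R, ι (algebraMap R _ r) = algebraMap S _ (algebraMap R S r))
    (M : Submodule R (FractionRing R)) (w : S) (hw : w ∈ S⁰)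
    (h : ∀ m ∈ M, ∃ s : S, algebraMap S (FractionRing S) s = ι m * algebraMap S _ w) : M.FG := by
  classical
  choose! g hg using h
  have hinj : Function.Injective (algebraMap S (FractionRing S)) := IsFractionRing.injective S _
  have hfg : (Submodule.span S (g '' (M : Set (FractionRing R)))).FG := IsNoetherian.noetherian _
  obtain ⟨T', hT', hspan⟩ := (Submodule.fg_span_iff_fg_span_finset_subset _).1 hfg
  obtain ⟨T, hTM, hTT⟩ : ∃ T : Finset (FractionRing R), (T : Set (FractionRing R)) ⊆ (M : Set (FractionRing R)) ∧ T.image g = T' := by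
    obtain ⟨T, h1, h2⟩ := Finset.subset_set_image_iff.1 hT'
    exact ⟨T, h1, h2⟩
  refine ⟨T, le_antisymm (Submodule.span_le.2 hTM) ?_⟩
  intro m hm
  obtain ⟨b, hb⟩ := IsLocalization.exist_integer_multiples_of_finset (R⁰) (insert m T)
  have hb' : ∀ a ∈ insert m T, ∃ c : R, algebraMap R (FractionRing R) c = (b : R) • a := fun a ha => hb a ha
  choose! c hc using hb'
  have key : ∀ t ∈ insert m T, t ∈ M → algebraMap R S b * g t = w * algebraMap R S (c t) := by
    intro t ht htM
    apply hinj
    rw [map_mul, map_mul, hg t htM, ← hι, ← hι, hc t ht, Algebra.smul_def, map_mul]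
    ring
  let I : Ideal R := Ideal.span (c '' T)
  have hy : ∀ y ∈ Submodule.span S (g '' (T : Set (FractionRing R))), ∃ u ∈ I.map (algebraMap R S), algebraMap R S b * y = w * u := by
    intro y hy
    induction hy using Submodule.span_induction with
    | mem y hy =>
      obtain ⟨t, ht, rfl⟩ := hy
      exact ⟨_, Ideal.mem_map_of_mem _ (Ideal.subset_span ⟨t, ht, rfl⟩), key t (Finset.mem_insert_of_mem ht) (hTM ht)⟩
    | zero => exact ⟨0, zero_mem _, by simp⟩
    | add y z _ _ h1 h2 =>
      obtain ⟨u, hu, e⟩ := h1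
      obtain ⟨v, hv, f⟩ := h2
      exact ⟨u + v, add_mem hu hv, by rw [mul_add, e, f, mul_add]⟩
    | smul s y _ h1 =>
      obtain ⟨u, hu, e⟩ := h1
      exact ⟨s * u, Ideal.mul_mem_left _ _ hu, by rw [smul_eq_mul, mul_left_comm, e]; ring⟩
  have hgm : g m ∈ Submodule.span S (g '' (T : Set (FractionRing R))) := by
    have : g m ∈ Submodule.span S (g '' (M : Set (FractionRing R))) := Submodule.subset_span ⟨m, hm, rfl⟩
    rw [hspan, ← hTT, Finset.coe_image] at this
    exact this
  obtain ⟨u, hu, e⟩ := hy _ hgm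
  rw [key m (Finset.mem_insert_self _ _) hm] at e
  have hcu : algebraMap R S (c m) = u := (mul_cancel_left_mem_nonZeroDivisors hw).1 e
  have hcI : c m ∈ I := by
    rw [← Ideal.comap_map_eq_self_of_faithfullyFlat (B := S) I, Ideal.mem_comap, hcu]
    exact hu
  have h3 : ∀ a ∈ I, ∃ y ∈ Submodule.span R (T : Set (FractionRing R)), (b : R) • y = algebraMap R _ a := by
    intro a ha
    induction ha using Submodule.span_induction with
    | mem y hy =>
      obtain ⟨t, ht, rfl⟩ := hy
      exact ⟨t, Submodule.subset_span ht, (hc t (Finset.mem_insert_of_mem ht)).symm⟩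
    | zero => exact ⟨0, zero_mem _, by simp⟩
    | add y z _ _ h1 h2 =>
      obtain ⟨u, hu, e⟩ := h1
      obtain ⟨v, hv, f⟩ := h2
      exact ⟨u + v, add_mem hu hv, by rw [smul_add, e, f, map_add]⟩
    | smul s y _ h1 =>
      obtain ⟨u, hu, e⟩ := h1
      exact ⟨s • u, Submodule.smul_mem _ _ hu, by rw [smul_comm, e, smul_eq_mul, map_mul, Algebra.smul_def]⟩
  obtain ⟨y, hy, e2⟩ := h3 _ hcI
  rw [hc m (Finset.mem_insert_self _ _), Algebra.smul_def, Algebra.smul_def] at e2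
  have : y = m := (IsLocalization.map_units (FractionRing R) b).mul_left_cancel e2
  rwa [← this]

/-- an ideal not killed by any nonzero element contains a nonzerodivisor -/
theorem exists_nzd {S : Type} [CommRing S] [IsNoetherianRing S] (C : Ideal S)
    (h : ∀ z : S, z ≠ 0 → ∃ w ∈ C, z * w ≠ 0) : ∃ w ∈ C, w ∈ S⁰ := by
  by_contra hc
  push Not at hc
  have h1 : (C : Set S) ⊆ ⋃ p ∈ associatedPrimes S S, (p : Set S) := by
    rw [biUnion_associatedPrimes_eq_compl_nonZeroDivisors]
    exact fun w hw => hc w hw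
  have hfin := associatedPrimes.finite S S
  have h2 := (Ideal.subset_union_prime_finite hfin (f := fun p => p) ⊥ ⊥ (fun p hp _ _ => hp.1) (I := C)).1 h1
  obtain ⟨p, hp, hle⟩ := h2
  obtain ⟨hpp, x, hx⟩ := isAssociatedPrime_iff.1 hp
  have hx0 : x ≠ 0 := by
    rintro rfl
    apply hpp.ne_top
    rw [hx]
    simp
  obtain ⟨w, hw, hne⟩ := h x hx0
  apply hne
  have := hle hw
  rw [hx, Submodule.mem_colon_singleton, smul_eq_mul] at this
  rw [mul_comm]
  simpa using this

/-- linear functionals are multiplications -/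
theorem fin_of_phi {R S : Type} [CommRing R] [CommRing S] [Algebra R S] [IsNoetherianRing S]
    [Module.FaithfullyFlat R S] (ι : FractionRing R →+* FractionRing S)
    (hι : ∀ r : R, ι (algebraMap R _ r) = algebraMap S _ (algebraMap R S r))
    (H : ∀ z : S, z ≠ 0 → ∃ φ : IntClosure R →ₗ[R] S, z * φ 1 ≠ 0) : Module.Finite R (IntClosure R) := by
  have hinj : Function.Injective (algebraMap S (FractionRing S)) := IsFractionRing.injective S _
  let M := Subalgebra.toSubmodule (integralClosure R (FractionRing R))
  have hmul : ∀ (φ : IntClosure R →ₗ[R] S) (m : IntClosure R),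
      algebraMap S (FractionRing S) (φ m) = ι m * algebraMap S _ (φ 1) := by
    intro φ m
    obtain ⟨b, a, hba⟩ := IsLocalization.exists_integer_multiple' R⁰ (m : FractionRing R)
    have e : (b : R) • m = a • (1 : IntClosure R) := by
      apply Subtype.ext
      change (b : R) • (m : FractionRing R) = a • (1 : FractionRing R)
      rw [Algebra.smul_def, mul_comm, ← hba, Algebra.smul_def, mul_one]
    have e1 : algebraMap R S b * φ m = algebraMap R S a * φ 1 := by
      rw [← Algebra.smul_def, ← Algebra.smul_def, ← map_smul, ← map_smul, e]
    have hu : IsUnit (algebraMap S (FractionRing S) (algebraMap R S b)) := by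
      rw [← hι]
      exact (IsLocalization.map_units (FractionRing R) b).map ι
    apply hu.mul_left_cancel
    rw [← map_mul, e1, map_mul, ← hι a, hba, map_mul, hι]
    ring
  let C : Ideal S :=
    { carrier := {w | ∀ m ∈ M, ∃ s : S, algebraMap S (FractionRing S) s = ι m * algebraMap S _ w}
      zero_mem' := fun m hm => ⟨0, by simp⟩
      add_mem' := by
        intro a b ha hb m hm
        obtain ⟨s, hs⟩ := ha m hm
        obtain ⟨t, ht⟩ := hb m hm
        exact ⟨s + t, by rw [map_add, hs, ht, map_add, mul_add]⟩
      smul_mem' := by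
        intro r a ha m hm
        obtain ⟨s, hs⟩ := ha m hm
        exact ⟨r * s, by rw [map_mul, hs, smul_eq_mul, map_mul]; ring⟩ }
  obtain ⟨w, hwC, hw⟩ := exists_nzd C (by
    intro z hz
    obtain ⟨φ, hφ⟩ := H z hz
    exact ⟨φ 1, fun m hm => ⟨φ ⟨m, hm⟩, hmul φ ⟨m, hm⟩⟩, hφ⟩)
  have := fin_of_w ι hι M w hw hwC
  exact Module.Finite.iff_fg.2 this

end LL
end CM
end

noncomputable section
open scoped Pointwise
namespace CM

section EE
open scoped nonZeroDivisors

theorem iota {R S : Type} [CommRing R] [CommRing S] [Algebra R S] [Module.Flat R S] :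
    ∃ ι : FractionRing R →+* FractionRing S,
    ∀ r : R, ι (algebraMap R _ r) = algebraMap S _ (algebraMap R S r) := by
  have h : ∀ y : R⁰, IsUnit (((algebraMap S (FractionRing S)).comp (algebraMap R S)) y) := by
    intro y
    have hy : algebraMap R S y ∈ S⁰ := by
      have h1 : IsSMulRegular R (y : R) := by
        have := y.2
        intro a b hab
        exact (mul_cancel_left_mem_nonZeroDivisors this).1 hab
      have h2 : IsSMulRegular S (y : R) := Module.Flat.isSMulRegular_of_isRegular (M := S) (by
          exact ⟨fun a b hab => h1 hab, fun a b hab => h1 (by simpa [mul_comm] using hab)⟩)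
      rw [mem_nonZeroDivisors_iff_right]
      intro z hz
      apply h2
      simp only [Algebra.smul_def, mul_zero]
      rw [mul_comm]; exact hz
    exact IsLocalization.map_units (FractionRing S) ⟨_, hy⟩
  exact ⟨IsLocalization.lift h, fun r => IsLocalization.lift_eq h r⟩

theorem notmem {R S : Type} [CommRing R] [CommRing S] [Algebra R S] [IsLocalRing S]
    (ι : FractionRing R →+* FractionRing S)
    (hι : ∀ r : R, ι (algebraMap R _ r) = algebraMap S _ (algebraMap R S r))
    (J : Ideal R) (n : ℕ) (hJ : J.map (algebraMap R S) ≤ maximalIdeal S ^ n)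
    (r : R) (hr : r • (1 : IntClosure R) ∈ (J • ⊤ : Submodule R (IntClosure R))) :
    algebraMap S (integralClosure S (FractionRing S)) (algebraMap R S r) ∈
      ((maximalIdeal S).map (algebraMap S (integralClosure S (FractionRing S)))) ^ n := by
  have key : ∀ y ∈ (J • ⊤ : Submodule R (IntClosure R)), ∃ b ∈ ((maximalIdeal S).map (algebraMap S (integralClosure S (FractionRing S)))) ^ n, ι (y : FractionRing R) = (b : FractionRing S) := by
    intro y hy
    induction hy using Submodule.smul_induction_on' with
    | smul j hj m _ =>
      have hint : IsIntegral S (ι (m : FractionRing R)) := by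
        obtain ⟨p, hp, he⟩ := m.2
        refine ⟨p.map (algebraMap R S), hp.map _, ?_⟩
        rw [Polynomial.eval₂_map]
        have h2 : (algebraMap S (FractionRing S)).comp (algebraMap R S) = ι.comp (algebraMap R (FractionRing R)) := by
          ext r; exact (hι r).symm
        rw [h2, ← Polynomial.hom_eval₂, he, map_zero]
      refine ⟨algebraMap S _ (algebraMap R S j) * ⟨ι m, hint⟩, ?_, ?_⟩
      · refine Ideal.mul_mem_right _ _ ?_
        rw [← Ideal.map_pow]
        exact Ideal.mem_map_of_mem _ (hJ (Ideal.mem_map_of_mem _ hj))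
      · change ι (j • (m : FractionRing R)) = algebraMap S (FractionRing S) (algebraMap R S j) * ι m
        rw [Algebra.smul_def, map_mul, hι]
    | add y _ z _ h1 h2 =>
      obtain ⟨u, hu, e⟩ := h1
      obtain ⟨v, hv, f⟩ := h2
      exact ⟨u + v, add_mem hu hv, by
        change ι ((y : FractionRing R) + (z : FractionRing R)) = (u : FractionRing S) + v
        rw [map_add, e, f]⟩
  obtain ⟨b, hb, e⟩ := key _ hr
  have : algebraMap S (integralClosure S (FractionRing S)) (algebraMap R S r) = b := by
    apply Subtype.ext
    rw [← e]
    change algebraMap S (FractionRing S) (algebraMap R S r) = ι (r • (1 : FractionRing R))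
    rw [Algebra.smul_def, mul_one, hι]
  rwa [this]

theorem val_mul_zero {R : Type} [CommRing R] [IsLocalRing R] (a b : AdicCompletion (maximalIdeal R) R) (N : ℕ)
    (h : a.val N = 0) : (a * b).val N = 0 := by
  rw [AdicCompletion.val_mul, h, zero_mul]

theorem int_fin {R : Type} [CommRing R] [IsNoetherianRing R] [IsLocalRing R]
    (hau : IsReduced (AdicCompletion (maximalIdeal R) R))
    (xs : List R) (hxm : ∀ x ∈ xs, x ∈ maximalIdeal R) (hreg : RingTheory.Sequence.IsWeaklyRegular R xs)
    (ht : ∃ t, maximalIdeal R ^ t ≤ Ideal.ofList xs)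
    (hE : ∀ (N : Type) [AddCommGroup N] [Module R N] [Module.Finite R N], EZ R N R (xs.length + 1))
    (hR : ∀ i < xs.length, EZ R (ResidueField R) R i)
    (hM : ∀ i < xs.length, EZ R (ResidueField R) (IntClosure R) i) : Module.Finite R (IntClosure R) := by
  let S := AdicCompletion (maximalIdeal R) R
  have : IsNoetherianRing S := hat_noeth
  have : IsLocalHom (algebraMap R S) := inferInstance
  have : Module.FaithfullyFlat R S := Module.FaithfullyFlat.of_flat_of_isLocalHom
  obtain ⟨ι, hι⟩ := iota (R := R) (S := S)
  refine fin_of_phi ι hι ?_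
  intro z hz
  let B := integralClosure S (FractionRing S)
  have hinjB : Function.Injective (algebraMap S B) := by
    intro a b hab
    exact IsFractionRing.injective S (FractionRing S) (congrArg Subtype.val hab)
  have hex : ∃ n, algebraMap S B z ∉ ((maximalIdeal S).map (algebraMap S B))^n := by
    by_contra hc
    push Not at hc
    exact hz (sep hinjB z hc)
  obtain ⟨n, hn⟩ := hex
  have hn1 : 1 ≤ n := by
    rcases n with _ | n
    · simp at hn
    · omega
  obtain ⟨N, hN⟩ := pow_le_ofList ht n
  obtain ⟨r, hr, hr0⟩ := hat_surj z N
  have hJ : (JJ xs n).map (algebraMap R S) ≤ maximalIdeal S ^ n := by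
    rw [AdicCompletion.maximalIdeal_eq_map, ← Ideal.map_pow]
    exact Ideal.map_mono (ofList_pow_le hxm n)
  have hzr : z - algebraMap R S r ∈ maximalIdeal S ^ n := by
    apply hJ
    rw [AdicCompletion.maximalIdeal_eq_map, ← Ideal.map_pow] at hr
    exact Ideal.map_mono hN hr
  have hnm : r • (1 : IntClosure R) ∉ (JJ xs n • ⊤ : Submodule R (IntClosure R)) := by
    intro h
    have h1 := notmem ι hι _ n hJ r h
    apply hn
    have h2 : algebraMap S B (z - algebraMap R S r) ∈ ((maximalIdeal S).map (algebraMap S B))^n := by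
      rw [← Ideal.map_pow]
      exact Ideal.mem_map_of_mem _ hzr
    have h3 := add_mem h2 h1
    rwa [← map_add, sub_add_cancel] at h3
  obtain ⟨φ, hφ⟩ := exists_phi xs hxm hreg ht hE hR _ hM n hn1 _ hnm N hN
  refine ⟨φ, fun h0 => hφ ?_⟩
  have e : φ (r • 1) = algebraMap R S r * φ 1 := by rw [map_smul, Algebra.smul_def]
  have e2 : φ (r • 1) = -((z - algebraMap R S r) * φ 1) := by rw [e, sub_mul, h0]; ring
  rw [e2]
  have := val_mul_zero (z - algebraMap R S r) (φ 1) N hr0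
  change -(((z - algebraMap R S r) * φ 1).val N) = 0
  rw [this, neg_zero]

end EE
end CM
end

noncomputable section
open scoped Pointwise
namespace CM

section FF
open scoped nonZeroDivisors
open RingTheory.Sequence

theorem f1 {R : Type} [CommRing R] [IsNoetherianRing R] [IsLocalRing R] {d : ℕ}
    (hE : ∀ i, d < i → ∀ (N : Type) [AddCommGroup N] [Module R N] [Module.Finite R N], EZ R N R i)
    (rs : List R) (hrs : ∀ r ∈ rs, r ∈ maximalIdeal R) :
    ∀ (N : Type) [AddCommGroup N] [Module R N] [Module.Finite R N], IsWeaklyRegular N rs →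
      ∀ i, d < i + rs.length → EZ R N R i := by
  induction rs with
  | nil => intro N _ _ _ _ i hi; exact hE i (by simpa using hi) N
  | cons x rs ih =>
    intro N _ _ _ h i hi
    rw [isWeaklyRegular_cons_iff] at h
    refine nak_con (hrs x (by simp)) h.1 ?_
    refine ih (fun r hr => hrs r (by simp [hr])) _ h.2 (i+1) ?_
    simp only [List.length_cons] at hi
    omega

theorem post_sum {R : Type} [CommRing R] {V M N : Type} [AddCommGroup V] [Module R V]
    [AddCommGroup M] [Module R M] [AddCommGroup N] [Module R N] {α : Type} (s : Finset α)
    (f : α → (M →ₗ[R] N)) {i : ℕ} (e : Ex R V M i) : post (∑ a ∈ s, f a) e = ∑ a ∈ s, post (f a) e := by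
  classical
  induction s using Finset.induction_on with
  | empty => simp [post_zero]
  | insert a s ha ih => rw [Finset.sum_insert ha, Finset.sum_insert ha, post_add, ih]

theorem EZ_pi {R : Type} [CommRing R] {V M : Type} [AddCommGroup V] [Module R V]
    [AddCommGroup M] [Module R M] {i : ℕ} (h : EZ R V M i) (n : ℕ) : EZ R V (Fin n → M) i := by
  intro e
  have hid : (LinearMap.id : (Fin n → M) →ₗ[R] (Fin n → M)) =
      ∑ a : Fin n, (LinearMap.single R (fun _ => M) a) ∘ₗ (LinearMap.proj a) := by
    refine LinearMap.ext fun x => ?_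
    rw [LinearMap.sum_apply]
    simp only [LinearMap.id_apply, LinearMap.comp_apply, LinearMap.proj_apply, LinearMap.coe_single]
    exact (Finset.univ_sum_single x).symm
  rw [← post_id e, hid, post_sum]
  refine Finset.sum_eq_zero fun a _ => ?_
  rw [← post_post, h (post _ e), map_zero]

theorem dual_ses {R : Type} [CommRing R] {A B C : Type} [AddCommGroup A] [Module R A]
    [AddCommGroup B] [Module R B] [AddCommGroup C] [Module R C] {f : A →ₗ[R] B} {g : B →ₗ[R] C}
    (h : SES f g) (h1 : EZ R C R 1) :
    SES (LinearMap.lcomp R R g) (LinearMap.lcomp R R f) := by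
  refine ⟨?_, ?_, ?_⟩
  · intro u v huv
    refine LinearMap.ext fun c => ?_
    obtain ⟨b, rfl⟩ := h.surj c
    exact DFunLike.congr_fun huv b
  · intro u
    obtain ⟨a, ha⟩ := h.con1 (V := R) (i := 0) (j := 1) rfl (m0 u) (h1 _)
    obtain ⟨v, rfl⟩ := m0_bij.2 a
    rw [pre_m0] at ha
    exact ⟨v, m0_bij.1 ha⟩
  · intro u
    constructor
    · intro hu
      have : LinearMap.ker g ≤ LinearMap.ker u := by
        intro b hb
        obtain ⟨a, rfl⟩ := (h.exact b).1 hb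
        exact DFunLike.congr_fun hu a
      let q := g.quotKerEquivOfSurjective h.surj
      refine ⟨(Submodule.liftQ _ u this) ∘ₗ (q.symm : C →ₗ[R] _), ?_⟩
      refine LinearMap.ext fun b => ?_
      have hq : q.symm (g b) = Submodule.Quotient.mk b := by
        rw [LinearEquiv.symm_apply_eq]; rfl
      change Submodule.liftQ _ u this (q.symm (g b)) = u b
      rw [hq]; rfl
    · rintro ⟨v, rfl⟩
      refine LinearMap.ext fun a => ?_
      change v (g (f a)) = 0
      rw [(h.exact (f a)).2 ⟨a, rfl⟩, map_zero]

theorem f2 {R : Type} [CommRing R] [IsNoetherianRing R] {k : Type} [AddCommGroup k] [Module R k] {d : ℕ}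
    (hR : ∀ i < d, EZ R k R i) (i : ℕ) (hi : i < d) :
    ∀ (N : Type) [AddCommGroup N] [Module R N] [Module.Finite R N], (∀ j, EZ R N R (j+1)) →
      EZ R k (N →ₗ[R] R) i := by
  induction i with
  | zero =>
    intro N _ _ _ hN
    obtain ⟨n, f, hf⟩ := Module.Finite.exists_fin' R N
    have hs := dual_ses (ses_ker f hf) (hN 0)
    refine hs.z_cov0 ?_
    exact EZ.of_equiv_right ((Pi.basisFun R (Fin n)).constr R (M' := R)) (EZ_pi (hR _ hi) n)
  | succ i ih =>
    intro N _ _ _ hN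
    obtain ⟨n, f, hf⟩ := Module.Finite.exists_fin' R N
    have hs := dual_ses (ses_ker f hf) (hN 0)
    refine hs.z_cov1 ?_ ?_
    · refine ih (by omega) _ fun j => ?_
      exact (ses_ker f hf).z_con1 (EZ_proj _) (hN _)
    · exact EZ.of_equiv_right ((Pi.basisFun R (Fin n)).constr R (M' := R)) (EZ_pi (hR _ hi) n)

theorem mem_cond {R : Type} [CommRing R] (c : R) :
    c ∈ conductorIdeal R ↔ ∀ m : IntClosure R, ∃ r : R, algebraMap R (IntClosure R) r = c • m := by
  unfold conductorIdeal
  rw [Module.mem_annihilator]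
  constructor
  · intro h m
    have := h (Submodule.Quotient.mk m)
    rw [← Submodule.Quotient.mk_smul, Submodule.Quotient.mk_eq_zero] at this
    exact this
  · intro h q
    obtain ⟨m, rfl⟩ := Submodule.Quotient.mk_surjective _ q
    rw [← Submodule.Quotient.mk_smul, Submodule.Quotient.mk_eq_zero]
    exact h m

theorem int_inj {R : Type} [CommRing R] : Function.Injective (algebraMap R (IntClosure R)) := by
  intro a b hab
  exact IsFractionRing.injective R (FractionRing R) (congrArg Subtype.val hab)

theorem int_frac {R : Type} [CommRing R] (m : IntClosure R) :
    ∃ (b : R⁰) (a : R), (b : R) • m = algebraMap R _ a := by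
  obtain ⟨b, a, hba⟩ := IsLocalization.exists_integer_multiple' R⁰ (m : FractionRing R)
  refine ⟨b, a, Subtype.ext ?_⟩
  change (b : R) • (m : FractionRing R) = algebraMap R (FractionRing R) a
  rw [Algebra.smul_def, mul_comm, ← hba]

theorem int_reg {R : Type} [CommRing R] (b : R⁰) (m n : IntClosure R) (h : (b : R) • m = (b : R) • n) : m = n := by
  apply Subtype.ext
  have h2 : (b : R) • (m : FractionRing R) = (b : R) • (n : FractionRing R) := congrArg Subtype.val h
  rw [Algebra.smul_def, Algebra.smul_def] at h2
  exact (IsLocalization.map_units (FractionRing R) b).mul_left_cancel h2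

theorem hom_mul {R : Type} [CommRing R] (φ : IntClosure R →ₗ[R] R) (m : IntClosure R) :
    algebraMap R _ (φ m) = φ 1 • m := by
  obtain ⟨b, a, hab⟩ := int_frac m
  apply int_reg b
  have h1 : (b : R) * φ m = a * φ 1 := by
    rw [← smul_eq_mul, ← map_smul, hab, Algebra.algebraMap_eq_smul_one, map_smul, smul_eq_mul]
  rw [smul_comm (b : R) (φ 1) m, hab, Algebra.smul_def, ← map_mul, h1, Algebra.smul_def, ← map_mul, mul_comm]

theorem cond_equiv (R : Type) [CommRing R] : Nonempty ((IntClosure R →ₗ[R] R) ≃ₗ[R] conductorIdeal R) := by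
  let Ψ : (IntClosure R →ₗ[R] R) →ₗ[R] R := LinearMap.applyₗ (1 : IntClosure R)
  have hinj : Function.Injective Ψ := by
    intro φ ψ h
    refine LinearMap.ext fun m => int_inj ?_
    rw [hom_mul, hom_mul]
    exact congrArg (· • m) h
  have hr : LinearMap.range Ψ = conductorIdeal R := by
    ext c
    rw [mem_cond]
    constructor
    · rintro ⟨φ, rfl⟩ m
      exact ⟨φ m, hom_mul φ m⟩
    · intro h
      choose g hg using h
      refine ⟨⟨⟨g, ?_⟩, ?_⟩, ?_⟩
      · intro m n
        apply int_inj
        rw [map_add, hg, hg, hg, smul_add]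
      · intro r m
        apply int_inj
        change algebraMap R (IntClosure R) (g (r • m)) = algebraMap R (IntClosure R) (r * g m)
        rw [map_mul, hg, hg, ← Algebra.smul_def, smul_comm]
      · apply int_inj
        change algebraMap R (IntClosure R) (g 1) = _
        rw [hg, Algebra.algebraMap_eq_smul_one]
  exact ⟨(LinearEquiv.ofInjective Ψ hinj).trans (LinearEquiv.ofEq _ _ hr)⟩

theorem cond_ne {R : Type} [CommRing R] [Nontrivial R] [Module.Finite R (IntClosure R)] :
    Nontrivial (conductorIdeal R) := by
  classical
  obtain ⟨T, hT⟩ := (Module.finite_def (R := R) (M := IntClosure R)).1 inferInstance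
  obtain ⟨b, hb⟩ := IsLocalization.exist_integer_multiples_of_finset (R⁰)
    (T.image (fun t : IntClosure R => (t : FractionRing R)))
  have hbc : (b : R) ∈ conductorIdeal R := by
    rw [mem_cond]
    intro m
    have hm : m ∈ Submodule.span R (T : Set (IntClosure R)) := by rw [hT]; trivial
    induction hm using Submodule.span_induction with
    | mem t ht =>
      obtain ⟨r, hr⟩ := hb (t : FractionRing R) (Finset.mem_image_of_mem _ ht)
      exact ⟨r, Subtype.ext hr⟩
    | zero => exact ⟨0, by simp⟩
    | add y z _ _ h1 h2 =>
      obtain ⟨u, e⟩ := h1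
      obtain ⟨v, f⟩ := h2
      exact ⟨u + v, by rw [map_add, e, f, smul_add]⟩
    | smul s y _ h1 =>
      obtain ⟨u, e⟩ := h1
      exact ⟨s * u, by rw [map_mul, e, ← Algebra.smul_def, smul_comm]⟩
  refine ⟨⟨⟨b, hbc⟩, 0, fun h => ?_⟩⟩
  exact nonZeroDivisors.coe_ne_zero b (congrArg Subtype.val h)

theorem not_all {R : Type} [CommRing R] [IsNoetherianRing R] [IsLocalRing R] {d : ℕ}
    (hd : ringKrullDim R = d) (M : Type) [AddCommGroup M] [Module R M] [Module.Finite R M] [Nontrivial M]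
    (h : ∀ i < d + 1, EZ R (ResidueField R) M i) : False := by
  obtain ⟨rs, hl, hm, hreg⟩ := rees M (d+1) h
  have h1 := Module.supportDim_add_length_eq_supportDim_of_isRegular rs hreg
  have h2 : Module.supportDim R M ≤ ringKrullDim R := Module.supportDim_le_ringKrullDim R M
  have hnt : Nontrivial (M ⧸ (Ideal.ofList rs • (⊤ : Submodule R M))) :=
    Submodule.Quotient.nontrivial_iff.2 (fun h => hreg.2 h.symm)
  have h3 : (0 : WithBot (WithTop ℕ)) ≤ Module.supportDim R (M ⧸ (Ideal.ofList rs • (⊤ : Submodule R M))) := by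
    have := Module.supportDim_ne_bot_of_nontrivial R (M ⧸ (Ideal.ofList rs • (⊤ : Submodule R M)))
    exact (Order.krullDim_nonneg_iff).2 (Order.krullDim_ne_bot_iff.1 this)
  rw [hl] at h1
  have h4 : ((d + 1 : ℕ) : WithBot (WithTop ℕ)) ≤ (d : WithBot (WithTop ℕ)) := by
    refine le_trans ?_ ((h1.le.trans h2).trans hd.le)
    exact le_add_of_nonneg_left h3
  have h5 : d + 1 ≤ d := by exact_mod_cast h4
  omega

theorem depth_ez {R : Type} [CommRing R] [IsLocalRing R] {M : Type} [AddCommGroup M] [Module R M] {d : ℕ}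
    (h : moduleDepth R M = (d : WithBot (WithTop ℕ))) (i : ℕ) (hi : i < d) : EZ R (ResidueField R) M i := by
  rw [EZ_iff_old]
  by_contra hc
  rw [not_subsingleton_iff_nontrivial] at hc
  have h1 : moduleDepth R M ≤ (i : WithBot (WithTop ℕ)) := sInf_le ⟨i, rfl, hc⟩
  rw [h] at h1
  have : d ≤ i := by exact_mod_cast h1
  omega

theorem ez_depth {R : Type} [CommRing R] [IsLocalRing R] {M : Type} [AddCommGroup M] [Module R M] {d : ℕ}
    (h : ∀ i < d, EZ R (ResidueField R) M i) (h2 : ¬ EZ R (ResidueField R) M d) :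
    moduleDepth R M = (d : WithBot (WithTop ℕ)) := by
  apply le_antisymm
  · refine sInf_le ⟨d, rfl, ?_⟩
    rw [EZ_iff_old] at h2
    exact not_subsingleton_iff_nontrivial.1 h2
  · refine le_sInf ?_
    rintro n ⟨i, rfl, hi⟩
    have : d ≤ i := by
      by_contra hc
      have := EZ_iff_old.1 (h i (by omega))
      exact not_subsingleton_iff_nontrivial.2 hi this
    exact_mod_cast this

end FF
end CM
end

-- STATEMENT 15
theorem stmt15 (R : Type) [CommRing R] [IsLocalRing R]
    (hau : AnalyticallyUnramified R) (hgor : IsGorensteinLocal R)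
    (hcm : moduleDepth R (IntClosure R) = ringKrullDim R) :
    moduleDepth R ↥(conductorIdeal R) = ringKrullDim R := by
  haveI := hgor.1
  obtain ⟨xs, hxm, hreg, hdim, ht, hE, hR⟩ := CM.gor (R := R) (by
    obtain ⟨n, hn⟩ := hgor.2
    exact ⟨n, fun N _ _ i hi => CM.EZ_iff_old.2 (hn (ModuleCat.of R N) i hi)⟩)
  rw [hdim] at hcm ⊢
  have hM := CM.depth_ez hcm
  haveI : Module.Finite R (IntClosure R) :=
    CM.int_fin hau xs hxm hreg.1 ht (hE _ (Nat.lt_succ_self _)) hR hM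
  haveI : Nontrivial (IntClosure R) := CM.int_inj.nontrivial
  obtain ⟨rs, hl, hrm, hrr⟩ := CM.rees (IntClosure R) _ hM
  have h1 : ∀ j, CM.EZ R (IntClosure R) R (j+1) := fun j =>
    CM.f1 hE rs hrm _ hrr.1 (j+1) (by omega)
  obtain ⟨q⟩ := CM.cond_equiv R
  have h2 : ∀ i < xs.length, CM.EZ R (ResidueField R) (conductorIdeal R) i := fun i hi =>
    CM.EZ.of_equiv_right q (CM.f2 hR i hi _ h1)
  haveI := CM.cond_ne (R := R)
  refine CM.ez_depth h2 fun h3 => ?_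
  refine CM.not_all hdim (conductorIdeal R) fun i hi => ?_
  rcases Nat.lt_succ_iff_lt_or_eq.1 hi with h | rfl
  · exact h2 i h
  · exact h3
end
end

section
/- Let (R, m) be an analytically unramified Noetherian local ring containing a field, with conductor ideal 𝔠, and suppose m = 𝔠 + yR for some y ∈ R. Then for every system of parameters x_1, …, x_d of R, the conductor is not contained in the parameter ideal: 𝔠 ⊄ (x_1, …, x_d)R. -/
open CategoryTheory IsLocalRing

set_option synthInstance.maxHeartbeats 1000000
set_option maxHeartbeats 1000000

noncomputable section

open MvPolynomial in
lemma h1_crit (K E : Type) [Field K] [Field E] [Algebra K E] :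
    Subsingleton (Algebra.H1Cotangent K E) ↔ ∀ u : MvPolynomial E K, aeval (id : E → E) u = 0 →
      (∀ i, aeval (id : E → E) (pderiv i u) = 0) →
      u ∈ (RingHom.ker (aeval (R := K) (id : E → E)).toRingHom) ^ 2 := by
  have key : ∀ x : (Algebra.Generators.self K E).toExtension.ker,
      (Algebra.Generators.self K E).toExtension.cotangentComplex (.mk x) = 0 ↔
      ∀ i, aeval (id : E → E) (pderiv i (x.1 : MvPolynomial E K)) = 0 := by
    intro x
    rw [Algebra.Extension.cotangentComplex_mk,
      ← LinearEquiv.map_eq_zero_iff (Algebra.Generators.self K E).cotangentSpaceBasis.repr, Finsupp.ext_iff]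
    refine forall_congr' fun i => ?_
    have := Algebra.Generators.cotangentSpaceBasis_repr_one_tmul (Algebra.Generators.self K E) x.1 i
    exact Eq.congr_left this
  have hker : (Algebra.Generators.self K E).toExtension.ker =
      (RingHom.ker (aeval (R := K) (id : E → E)).toRingHom) := by
    ext u
    rfl
  rw [show Algebra.H1Cotangent K E = (Algebra.Generators.self K E).toExtension.H1Cotangent from rfl,
    Algebra.Extension.subsingleton_h1Cotangent, injective_iff_map_eq_zero]
  constructor
  · intro h u hu hd
    have hu' : u ∈ (Algebra.Generators.self K E).toExtension.ker := hu
    have := h (.mk ⟨u, hu'⟩) ((key ⟨u, hu'⟩).2 hd)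
    rw [Algebra.Extension.Cotangent.mk_eq_zero_iff] at this
    exact this
  · intro h a ha
    obtain ⟨x, rfl⟩ := Algebra.Extension.Cotangent.mk_surjective a
    rw [Algebra.Extension.Cotangent.mk_eq_zero_iff]
    exact h x.1 x.2 ((key x).1 ha)

open MvPolynomial in
lemma formallySmooth_of_perfect (K L : Type) [Field K] [Field L] [Algebra K L] [PerfectField K] :
    Algebra.FormallySmooth K L := by
  refine ⟨inferInstance, ?_⟩
  rw [h1_crit]
  intro u hu hd
  let E := IntermediateField.adjoin K ((u.vars : Finset L) : Set L)
  have hE : Algebra.EssFiniteType K E := IntermediateField.essFiniteType_iff.2 ⟨u.vars, rfl⟩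
  have hsm : Algebra.FormallySmooth K E := inferInstance
  have hs := (h1_crit K E).1 hsm.subsingleton_h1Cotangent
  obtain ⟨v, hv⟩ := MvPolynomial.exists_rename_eq_of_vars_subset_range u (Subtype.val : E → L)
    Subtype.val_injective (by
      intro z hz
      exact ⟨⟨z, IntermediateField.subset_adjoin _ _ hz⟩, rfl⟩)
  have hae : ∀ w : MvPolynomial E K, aeval (id : L → L) (rename (Subtype.val : E → L) w) =
      algebraMap E L (aeval (id : E → E) w) := by
    intro w
    rw [aeval_rename, ← MvPolynomial.aeval_algebraMap_apply]
    rfl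
  have inj := (algebraMap E L).injective
  have h1 : v ∈ (RingHom.ker (aeval (R := K) (id : E → E)).toRingHom) ^ 2 := by
    apply hs
    · apply inj
      rw [← hae, hv, hu, map_zero]
    · intro i
      apply inj
      rw [← hae, ← pderiv_rename Subtype.val_injective, hv, hd, map_zero]
  rw [← hv]
  have h2 := Ideal.mem_map_of_mem (rename (R := K) (Subtype.val : E → L)).toRingHom h1
  rw [Ideal.map_pow] at h2
  refine Ideal.pow_right_mono ?_ 2 h2
  rw [Ideal.map_le_iff_le_comap]
  intro w hw
  have hw' : aeval (id : E → E) w = 0 := hw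
  change aeval (id : L → L) (rename (Subtype.val : E → L) w) = 0
  rw [hae, hw', map_zero]

lemma dvd_of_almost {D : Type} [CommRing D] [IsDomain D] [IsNoetherianRing D] [IsIntegrallyClosed D]
    {c u v : D} (hc : c ≠ 0) (hv : v ≠ 0) (h : ∀ j : ℕ, v ^ j ∣ c * u ^ j) : v ∣ u := by
  let K := FractionRing D
  have hvK : algebraMap D K v ≠ 0 := by simpa using hv
  have hal : IsAlmostIntegral D (algebraMap D K u / algebraMap D K v) := by
    refine ⟨c, mem_nonZeroDivisors_of_ne_zero hc, fun n => ?_⟩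
    obtain ⟨w, hw⟩ := h n
    refine ⟨w, ?_⟩
    have := congrArg (algebraMap D K) hw
    simp only [map_mul, map_pow] at this
    rw [Algebra.smul_def, div_pow, ← mul_div_assoc, eq_div_iff (pow_ne_zero _ hvK), this]
    ring
  obtain ⟨w, hw⟩ := IsIntegrallyClosed.isIntegral_iff.1 hal.isIntegral
  refine ⟨w, IsFractionRing.injective D K ?_⟩
  rw [map_mul, hw, mul_div_cancel₀ _ hvK]

lemma almost_of_integral {D : Type} [CommRing D] [IsDomain D] {K : Type} [Field K] [Algebra D K] [IsFractionRing D K]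
    {u v : D} (hv : v ≠ 0) (h : IsIntegral D (algebraMap D K u / algebraMap D K v)) :
    ∃ c : D, c ≠ 0 ∧ ∀ j : ℕ, v ^ j ∣ c * u ^ j := by
  have hvK : algebraMap D K v ≠ 0 := by simpa using hv
  obtain ⟨c, hc, H⟩ := h.isAlmostIntegral
  refine ⟨c, nonZeroDivisors.ne_zero hc, fun j => ?_⟩
  obtain ⟨w, hw⟩ := H j
  refine ⟨w, IsFractionRing.injective D K ?_⟩
  rw [map_mul, map_mul, hw, Algebra.smul_def]
  simp only [map_pow]
  rw [div_pow, mul_left_comm, mul_div_cancel₀ _ (pow_ne_zero _ hvK)]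

namespace MvPowerSeries
variable {σ k : Type} [Finite σ] [Field k]

lemma map_span_X : Ideal.map (toAdicCompletionAlgEquiv σ k).toRingEquiv (Ideal.span (Set.range X)) =
    (MvPolynomial.idealOfVars σ k).map (algebraMap ..) := by
  simp_rw [Ideal.map_span, ← Set.range_comp]
  congr 2; ext1
  simp [AdicCompletion.algebraMap_apply, ← MvPolynomial.coe_X, toAdicCompletion_coe]

lemma mem_span_X_pow {f : MvPowerSeries σ k} {n : ℕ} (h : n ≤ f.order) :
    f ∈ (Ideal.span (Set.range (X : σ → MvPowerSeries σ k))) ^ n := by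
  have h0 : toAdicCompletion σ k f ∈ ((MvPolynomial.idealOfVars σ k) ^ n • ⊤ : Submodule (MvPolynomial σ k)
      (AdicCompletion (MvPolynomial.idealOfVars σ k) (MvPolynomial σ k))) := by
    rw [AdicCompletion.pow_smul_top_eq_ker_eval (MvPolynomial.idealOfVars_fg σ k), LinearMap.mem_ker]
    change (toAdicCompletion σ k f).val n = 0
    rw [toAdicCompletion_apply_eq_mk_truncTotal]
    have : truncTotal n f = 0 := by
      ext d
      rw [coeff_truncTotal_eq_ite]
      split_ifs with hd
      · simp
        exact coeff_of_lt_order (lt_of_lt_of_le (by exact_mod_cast hd) h)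
      · simp
    rw [this]
    simp
  have h1 : toAdicCompletion σ k f ∈ ((MvPolynomial.idealOfVars σ k).map
      (algebraMap (MvPolynomial σ k) (AdicCompletion (MvPolynomial.idealOfVars σ k) (MvPolynomial σ k)))) ^ n := by
    rw [← Ideal.map_pow]
    rw [Ideal.smul_top_eq_map] at h0
    exact h0
  rw [← map_span_X, ← Ideal.map_pow] at h1
  have h2 := Ideal.mem_map_of_mem (toAdicCompletionAlgEquiv σ k).toRingEquiv.symm h1
  erw [Ideal.map_of_equiv (toAdicCompletionAlgEquiv σ k).toRingEquiv] at h2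
  convert h2 using 1
  exact ((toAdicCompletionAlgEquiv σ k).symm_apply_apply f).symm

/-- homogeneous component as a polynomial -/
noncomputable def hpol (p : ℕ) (f : MvPowerSeries σ k) : MvPolynomial σ k :=
  truncTotal (p + 1) (homogeneousComponent p f)

lemma coe_hpol (p : ℕ) (f : MvPowerSeries σ k) :
    ((hpol p f : MvPolynomial σ k) : MvPowerSeries σ k) = homogeneousComponent p f := by
  ext d
  rw [MvPolynomial.coeff_coe, hpol, coeff_truncTotal_eq_ite, coeff_homogeneousComponent]
  split_ifs <;> first | rfl | omega

lemma homogeneousComponent_pow' (f : MvPowerSeries σ k) (p : ℕ) (hp : (p : ℕ∞) ≤ f.order) (j : ℕ) :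
    (((j * p : ℕ) : ℕ∞) ≤ (f ^ j).order) ∧
    homogeneousComponent (j * p) (f ^ j) = (homogeneousComponent p f) ^ j := by
  induction j with
  | zero =>
    refine ⟨by simp, ?_⟩
    ext d
    rw [coeff_homogeneousComponent]
    classical
    simp only [pow_zero, zero_mul, coeff_one]
    split_ifs <;> simp_all
  | succ j ih =>
    have : ((j + 1) * p) = j * p + p := by ring
    rw [this, pow_succ, pow_succ]
    refine ⟨?_, by rw [homogeneousComponent_mul_of_le_order ih.1 hp, ih.2]⟩
    push_cast
    exact le_trans (add_le_add (by exact_mod_cast ih.1) hp) le_order_mul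

lemma exists_order_nat {f : MvPowerSeries σ k} (hf : f ≠ 0) : ∃ e : ℕ, (e : ℕ∞) = f.order :=
  ENat.ne_top_iff_exists.1 (fun h => hf (order_eq_top_iff.1 h))

lemma lead_dvd {c u v : MvPowerSeries σ k} (hc : c ≠ 0) (hu : u ≠ 0) (hv : v ≠ 0)
    {n e : ℕ} (hn : (n : ℕ∞) = u.order) (he : (e : ℕ∞) = v.order)
    (h : ∀ j : ℕ, v ^ j ∣ c * u ^ j) : hpol e v ∣ hpol n u := by
  obtain ⟨g, hg⟩ := exists_order_nat hc
  have hne : ∀ {f : MvPowerSeries σ k} {p : ℕ}, (p : ℕ∞) = f.order → hpol p f ≠ 0 := by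
    intro f p hp h0
    apply homogeneousComponent_of_order hp
    rw [← coe_hpol, h0, MvPolynomial.coe_zero]
  apply dvd_of_almost (hne hg) (hne he)
  intro j
  obtain ⟨s, hs⟩ := h j
  have hs0 : s ≠ 0 := by
    rintro rfl
    rw [mul_zero] at hs
    exact (mul_ne_zero hc (pow_ne_zero j hu)) hs
  obtain ⟨t, ht⟩ := exists_order_nat hs0
  have hord : ∀ {f : MvPowerSeries σ k} {p : ℕ}, (p : ℕ∞) = f.order → ((j * p : ℕ) : ℕ∞) = (f ^ j).order := by
    intro f p hp
    clear hs
    induction j with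
    | zero =>
      rw [pow_zero, zero_mul]
      classical
      have := order_monomial_of_ne_zero (σ := σ) (R := k) (d := 0) one_ne_zero
      simpa using this.symm
    | succ j ih =>
      rw [pow_succ, order_mul, ← ih, ← hp, ← Nat.cast_add, add_one_mul]
  have hdeg : g + j * n = j * e + t := by
    have := congrArg order hs
    rw [order_mul, order_mul, ← hord hn, ← hord he, ← hg, ← ht] at this
    exact_mod_cast this
  refine ⟨hpol t s, ?_⟩
  apply MvPolynomial.coe_injective
  rw [MvPolynomial.coe_mul, MvPolynomial.coe_mul, MvPolynomial.coe_pow, MvPolynomial.coe_pow,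
    coe_hpol, coe_hpol, coe_hpol, coe_hpol, ← (homogeneousComponent_pow' u n hn.le j).2,
    ← (homogeneousComponent_pow' v e he.le j).2,
    ← homogeneousComponent_mul_of_le_order hg.le (hord hn).le,
    ← homogeneousComponent_mul_of_le_order (hord he).le ht.le, hs, hdeg]

lemma exists_sub_order {c u v : MvPowerSeries σ k} (hc : c ≠ 0) (hv : v ≠ 0)
    (h : ∀ j : ℕ, v ^ j ∣ c * u ^ j) (n : ℕ) : ∃ w, (n : ℕ∞) ≤ (u - v * w).order := by
  induction n with
  | zero => exact ⟨0, by simp⟩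
  | succ n ih =>
    obtain ⟨w, hw⟩ := ih
    by_cases hlt : (n : ℕ∞) < (u - v * w).order
    · exact ⟨w, by simpa using Order.add_one_le_of_lt hlt⟩
    have hn : (n : ℕ∞) = (u - v * w).order := le_antisymm hw (not_lt.1 hlt)
    have hu0 : u - v * w ≠ 0 := by
      intro h0
      rw [h0, order_zero] at hn
      exact ENat.natCast_ne_top n hn
    have h' : ∀ j : ℕ, v ^ j ∣ c * (u - v * w) ^ j := by
      intro j
      rw [sub_eq_add_neg, add_pow, Finset.mul_sum]
      refine Finset.dvd_sum fun i hi => ?_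
      have hij : i + (j - i) = j := by have := Finset.mem_range.1 hi; omega
      have e1 := mul_dvd_mul (h i) (pow_dvd_pow_of_dvd (show v ∣ -(v * w) from ⟨-w, by ring⟩) (j - i))
      rw [← pow_add, hij] at e1
      refine e1.trans ⟨(j.choose i : MvPowerSeries σ k), by ring⟩
    obtain ⟨e, he⟩ := exists_order_nat hv
    obtain ⟨W, hW⟩ := lead_dvd hc hu0 hv hn he h'
    have hcomp : homogeneousComponent n (u - v * w) = homogeneousComponent e v * (W : MvPowerSeries σ k) := by
      rw [← coe_hpol, hW, MvPolynomial.coe_mul, coe_hpol]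
    have hW0 : (W : MvPowerSeries σ k) ≠ 0 := by
      intro h0
      rw [h0, mul_zero] at hcomp
      exact homogeneousComponent_of_order hn hcomp
    have hself : ∀ {f : MvPowerSeries σ k} {p : ℕ}, (p : ℕ∞) = f.order →
        (p : ℕ∞) = (homogeneousComponent p f).order ∧
        homogeneousComponent p (homogeneousComponent p f) = homogeneousComponent p f := by
      intro f p hp
      have e2 : homogeneousComponent p (homogeneousComponent p f) = homogeneousComponent p f :=
        (isHomogeneous_iff_eq_homogeneousComponent.1 (isHomogeneous_homogeneousComponent f p)).symm
      refine ⟨le_antisymm ?_ ?_, e2⟩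
      · refine nat_le_order fun d hd => ?_
        rw [coeff_homogeneousComponent, if_neg (by omega)]
      · by_contra hcon
        apply homogeneousComponent_of_order hp
        rw [← e2]
        exact homogeneousComponent_of_lt_order_eq_zero (not_le.1 hcon)
    obtain ⟨t, ht⟩ := exists_order_nat hW0
    have hdeg : n = e + t := by
      have := congrArg order hcomp
      rw [order_mul, ← (hself hn).1, ← (hself he).1, ← ht] at this
      exact_mod_cast this
    refine ⟨w + W, ?_⟩
    have e3 : homogeneousComponent n (v * (W : MvPowerSeries σ k)) = homogeneousComponent n (u - v * w) := by
      rw [← (hself hn).2, hcomp, hdeg, homogeneousComponent_mul_of_le_order he.le ht.le,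
        homogeneousComponent_mul_of_le_order (hself he).1.le ht.le, (hself he).2]
    refine nat_le_order fun d hd => ?_
    have e4 : u - v * (w + W) = (u - v * w) - v * W := by ring
    rw [e4, map_sub]
    rcases Nat.lt_succ_iff_lt_or_eq.1 hd with hd | hd
    · rw [coeff_of_lt_order (f := u - v * w), coeff_of_lt_order (f := v * (W : MvPowerSeries σ k)), sub_zero]
      · rw [order_mul, ← he, ← ht, ← Nat.cast_add, ← hdeg]; exact_mod_cast hd
      · rw [← hn]; exact_mod_cast hd
    · have := congrArg (coeff d) e3
      rw [coeff_homogeneousComponent, coeff_homogeneousComponent, if_pos hd, if_pos hd] at this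
      rw [this, sub_self]

lemma dvd_of_forall_pow {S : Type} [CommRing S] [IsNoetherianRing S] [IsLocalRing S] {u v : S} {I : Ideal S}
    (hI : I ≤ IsLocalRing.maximalIdeal S) (h : ∀ n : ℕ, ∃ w, u - v * w ∈ I ^ n) : v ∣ u := by
  by_cases hv : IsUnit v
  · exact hv.dvd
  rw [← Ideal.mem_span_singleton]
  have : IsHausdorff (IsLocalRing.maximalIdeal S) (S ⧸ Ideal.span {v}) := inferInstance
  rw [← Ideal.Quotient.eq_zero_iff_mem]
  apply this.haus
  intro n
  rw [SModEq.zero]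
  obtain ⟨w, hw⟩ := h n
  have e : (Ideal.Quotient.mk (Ideal.span {v})) u = (u - v * w) • (1 : S ⧸ Ideal.span {v}) := by
    rw [Algebra.smul_def, mul_one]
    change _ = Ideal.Quotient.mk _ _
    rw [Ideal.Quotient.eq]
    simp [Ideal.mem_span_singleton]
  rw [e]
  exact Submodule.smul_mem_smul (Ideal.pow_right_mono hI n hw) trivial

instance : IsDomain (MvPowerSeries σ k) := NoZeroDivisors.to_isDomain _

lemma span_X_le : Ideal.span (Set.range (X : σ → MvPowerSeries σ k)) ≤
    IsLocalRing.maximalIdeal (MvPowerSeries σ k) := by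
  rw [Ideal.span_le]
  rintro _ ⟨i, rfl⟩
  rw [SetLike.mem_coe, IsLocalRing.mem_maximalIdeal, mem_nonunits_iff, isUnit_iff_constantCoeff]
  simp

lemma maximalIdeal_eq : IsLocalRing.maximalIdeal (MvPowerSeries σ k) =
    Ideal.span (Set.range (X : σ → MvPowerSeries σ k)) := by
  refine le_antisymm ?_ span_X_le
  intro f hf
  rw [IsLocalRing.mem_maximalIdeal, mem_nonunits_iff, isUnit_iff_constantCoeff] at hf
  have := mem_span_X_pow (f := f) (n := 1) (by
    simpa using one_le_order_iff_constCoeff_eq_zero.2 (by simpa using hf))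
  simpa using this

instance isIntegrallyClosed' : IsIntegrallyClosed (MvPowerSeries σ k) := by
  rw [isIntegrallyClosed_iff (FractionRing (MvPowerSeries σ k))]
  intro x hx
  obtain ⟨u, v, hv, rfl⟩ := IsFractionRing.div_surjective (A := MvPowerSeries σ k) x
  have hv0 := nonZeroDivisors.ne_zero hv
  obtain ⟨c, hc, h⟩ := almost_of_integral hv0 hx
  obtain ⟨w, rfl⟩ := dvd_of_forall_pow span_X_le
    (fun n => (exists_sub_order hc hv0 h n).imp fun w hw => mem_span_X_pow hw)
  refine ⟨w, ?_⟩
  have hvK : algebraMap (MvPowerSeries σ k) (FractionRing (MvPowerSeries σ k)) v ≠ 0 := by simpa using hv0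
  rw [map_mul]
  field_simp
end MvPowerSeries

lemma isPrecomplete_pi {A : Type} [CommRing A] (I : Ideal A) [h : IsPrecomplete I A] (l : ℕ) :
    IsPrecomplete I (Fin l → A) := by
  have key : ∀ (n : ℕ) (g g' : Fin l → A), g ≡ g' [SMOD (I ^ n • ⊤ : Submodule A (Fin l → A))] ↔
      ∀ i, g i ≡ g' i [SMOD (I ^ n • ⊤ : Submodule A A)] := by
    intro n g g'
    simp only [SModEq.sub_mem]
    constructor
    · intro hg i
      have := Submodule.mem_map_of_mem (f := LinearMap.proj (R := A) (φ := fun _ : Fin l => A) i) hg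
      rw [Submodule.map_smul''] at this
      exact Submodule.smul_mono le_rfl le_top this
    · intro hg
      have : g - g' = ∑ i, (g i - g' i) • (Pi.single i (1 : A) : Fin l → A) := by
        ext j
        simp [Finset.sum_apply, Pi.single_apply]
      rw [this]
      refine Submodule.sum_mem _ fun i _ => Submodule.smul_mem_smul ?_ trivial
      have := hg i
      simpa using this
  constructor
  intro f hf
  have : ∀ i, ∃ L : A, ∀ n, f n i ≡ L [SMOD (I ^ n • ⊤ : Submodule A A)] := by
    intro i
    exact h.prec (f := fun n => f n i) (fun hmn => (key _ _ _).1 (hf hmn) i)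
  choose L hL using this
  exact ⟨L, fun n => (key _ _ _).2 fun i => hL i n⟩

lemma exists_lift_powerSeries {T k σ : Type} [CommRing T] [Field k] [Finite σ] (J : Ideal T) [IsAdicComplete J T]
    (s : k →+* T) (x : σ → T) (hx : ∀ i, x i ∈ J) :
    ∃ φ : MvPowerSeries σ k →+* T, (∀ p : MvPolynomial σ k, φ p = MvPolynomial.eval₂Hom s x p) := by
  let ev := MvPolynomial.eval₂Hom s x
  have hev : ∀ n, ∀ p ∈ (MvPolynomial.idealOfVars σ k) ^ n, ev p ∈ J ^ n := by
    intro n p hp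
    have := Ideal.mem_map_of_mem ev hp
    rw [Ideal.map_pow] at this
    refine Ideal.pow_right_mono ?_ n this
    rw [Ideal.map_le_iff_le_comap, Ideal.span_le]
    rintro _ ⟨i, rfl⟩
    simpa [ev] using hx i
  let f : (n : ℕ) → MvPowerSeries σ k →+* T ⧸ J ^ n := fun n =>
    (Ideal.Quotient.lift ((MvPolynomial.idealOfVars σ k) ^ n) ((Ideal.Quotient.mk (J ^ n)).comp ev)
      (fun p hp => by
        rw [RingHom.comp_apply, Ideal.Quotient.eq_zero_iff_mem]
        exact hev n p hp)).comp (MvPowerSeries.truncTotalAlgHom σ k n).toRingHom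
  have hfa : ∀ n p, f n p = Ideal.Quotient.mk (J ^ n) (ev (MvPowerSeries.truncTotal n p)) := fun n p => rfl
  have hf : ∀ {m n : ℕ} (hle : m ≤ n), (Ideal.Quotient.factorPow J hle).comp (f n) = f m := by
    intro m n hle
    ext p
    rw [RingHom.comp_apply, hfa, hfa, Ideal.Quotient.factor_mk, Ideal.Quotient.eq, ← map_sub]
    exact hev m _ (MvPowerSeries.truncTotal_sub_truncTotal_mem_pow_idealOfVars hle le_rfl p)
  refine ⟨IsAdicComplete.liftRingHom J f hf, fun p => ?_⟩
  rw [IsHausdorff.eq_iff_smodEq (I := J)]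
  intro n
  rw [SModEq.sub_mem, smul_eq_mul, Ideal.mul_top, ← Ideal.Quotient.eq,
    IsAdicComplete.mk_liftRingHom, hfa, Ideal.Quotient.eq]
  change ev _ - ev p ∈ _
  rw [← map_sub]
  apply hev
  rw [MvPolynomial.mem_pow_idealOfVars_iff']
  intro d hd
  rw [MvPolynomial.coeff_sub, MvPowerSeries.coeff_truncTotal _ hd, MvPolynomial.coeff_coe, sub_self]

lemma structure_surj {T k : Type} {δ : ℕ} [CommRing T] [Field k] (J : Ideal T) [IsAdicComplete J T]
    (s : k →+* T) (hs : ∀ t, ∃ c, t - s c ∈ J) (x : Fin δ → T) (y : T) (ℓ : ℕ)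
    (hJ : J = Ideal.span (Set.range x) ⊔ Ideal.span {y}) (hy : y ^ ℓ ∈ Ideal.span (Set.range x)) :
    ∃ φ : MvPowerSeries (Fin δ) k →+* T, (∀ i, φ (MvPowerSeries.X i) = x i) ∧
      ∀ t, ∃ a : Fin ℓ → MvPowerSeries (Fin δ) k, t = ∑ i, φ (a i) * y ^ (i : ℕ) := by
  have hxJ : ∀ i, x i ∈ J := fun i => by
    rw [hJ]; exact Ideal.mem_sup_left (Ideal.subset_span ⟨i, rfl⟩)
  obtain ⟨φ, hφ⟩ := exists_lift_powerSeries J s x hxJ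
  have hX : ∀ i, φ (MvPowerSeries.X i) = x i := fun i => by
    rw [← MvPolynomial.coe_X, hφ]; simp
  have hC : ∀ c, φ (MvPowerSeries.C c) = s c := fun i => by
    rw [← MvPolynomial.coe_C, hφ]; simp
  refine ⟨φ, hX, ?_⟩
  algebraize [φ]
  let A := MvPowerSeries (Fin δ) k
  let I : Ideal A := Ideal.span (Set.range MvPowerSeries.X)
  have hImap : I.map (algebraMap A T) = Ideal.span (Set.range x) := by
    rw [Ideal.map_span, ← Set.range_comp]
    congr 2
    ext i
    exact hX i
  have := isPrecomplete_pi I ℓ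
  have : IsHausdorff I T := by
    refine IsHausdorff.of_map (J := J) ?_
    rw [hImap, hJ]; exact le_sup_left
  let F : (Fin ℓ → A) →ₗ[A] T := Fintype.linearCombination A (fun i : Fin ℓ => y ^ (i : ℕ))
  have hF : ∀ a, F a = ∑ i, φ (a i) * y ^ (i : ℕ) := by
    intro a
    simp only [F, Fintype.linearCombination_apply, Algebra.smul_def]
    rfl
  have hit : ∀ (n : ℕ) (t : T), ∃ (a : Fin n → A) (t' : T), t - (∑ i, φ (a i) * y ^ (i : ℕ) + y ^ n * t') ∈
      Ideal.span (Set.range x) := by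
    intro n
    induction n with
    | zero => intro t; exact ⟨0, t, by simp⟩
    | succ n ih =>
      intro t
      obtain ⟨a, t', h⟩ := ih t
      obtain ⟨c, hc⟩ := hs t'
      rw [hJ] at hc
      obtain ⟨q, hq, r, hr, hqr⟩ := Submodule.mem_sup.1 hc
      obtain ⟨w, rfl⟩ := Ideal.mem_span_singleton.1 hr
      refine ⟨Fin.snoc a (MvPowerSeries.C c), w, ?_⟩
      rw [Fin.sum_univ_castSucc]
      simp only [Fin.snoc_castSucc, Fin.snoc_last, Fin.val_castSucc, Fin.val_last, hC]
      have e : t - (∑ i, φ (a i) * y ^ (i : ℕ) + s c * y ^ n + y ^ (n + 1) * w) =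
        (t - (∑ i, φ (a i) * y ^ (i : ℕ) + y ^ n * t')) + y ^ n * q := by
        linear_combination (- y ^ n) * hqr
      rw [e]
      exact Ideal.add_mem _ h (Ideal.mul_mem_left _ _ hq)
  have hsurj : Function.Surjective F := by
    apply surjective_of_mkQ_comp_surjective (I := I)
    intro t
    obtain ⟨t, rfl⟩ := Submodule.mkQ_surjective _ t
    obtain ⟨a, t', h⟩ := hit ℓ t
    refine ⟨a, ?_⟩
    rw [LinearMap.comp_apply, Submodule.mkQ_apply, Submodule.mkQ_apply, eq_comm, Submodule.Quotient.eq,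
      Ideal.smul_top_eq_map, Submodule.restrictScalars_mem, hImap, hF]
    have e : t - ∑ i, φ (a i) * y ^ (i : ℕ) = (t - (∑ i, φ (a i) * y ^ (i : ℕ) + y ^ ℓ * t')) + y ^ ℓ * t' := by ring
    rw [e]
    exact Ideal.add_mem _ h (Ideal.mul_mem_right _ _ hy)
  intro t
  obtain ⟨a, rfl⟩ := hsurj t
  exact ⟨a, hF a⟩

lemma exists_perfect (R : Type) [CommRing R] (h : ∃ F : Subring R, IsField ↥F) :
    ∃ (K : Type) (_ : Field K) (_ : PerfectField K), Nonempty (K →+* R) := by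
  obtain ⟨F, hF⟩ := h
  letI := hF.toField
  obtain ⟨p, hp⟩ := CharP.exists F
  rcases CharP.char_is_prime_or_zero F p with h | h
  · haveI := Fact.mk h
    exact ⟨ZMod p, inferInstance, inferInstance, ⟨F.subtype.comp (ZMod.castHom dvd_rfl F)⟩⟩
  · subst h
    haveI := CharP.charP_to_charZero F
    exact ⟨ℚ, inferInstance, inferInstance, ⟨F.subtype.comp (algebraMap ℚ F)⟩⟩

lemma exists_coeff (R : Type) [CommRing R] [IsLocalRing R] [IsNoetherianRing R]
    (h : ∃ F : Subring R, IsField ↥F) :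
    ∃ s : ResidueField R →+* AdicCompletion (maximalIdeal R) R,
      ∀ t, ∃ c, t - s c ∈ maximalIdeal (AdicCompletion (maximalIdeal R) R) := by
  obtain ⟨K, _, _, ⟨f⟩⟩ := exists_perfect R h
  letI := f.toAlgebra
  haveI := formallySmooth_of_perfect K (ResidueField R)
  let id' : ResidueField R →ₐ[K] R ⧸ maximalIdeal R := AlgHom.id K _
  obtain ⟨g, hg⟩ := Algebra.FormallySmooth.exists_adicCompletionEvalOneₐ_comp_eq id'
  refine ⟨g.toRingHom, fun t => ⟨AdicCompletion.evalOneₐ (maximalIdeal R) t, ?_⟩⟩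
  rw [AdicCompletion.maximalIdeal_eq_map, ← AdicCompletion.ker_evalOneₐ_eq_map _ (maximalIdeal R).fg_of_isNoetherianRing, RingHom.mem_ker, map_sub]
  have := congr($hg (AdicCompletion.evalOneₐ (maximalIdeal R) t))
  exact sub_eq_zero.2 this.symm

lemma dim_le_completion (R : Type) [CommRing R] [IsLocalRing R] [IsNoetherianRing R] :
    ringKrullDim R ≤ ringKrullDim (AdicCompletion (maximalIdeal R) R) := by
  set B := AdicCompletion (maximalIdeal R) R
  haveI : Module.FaithfullyFlat R B := Module.FaithfullyFlat.of_flat_of_isLocalHom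
  unfold ringKrullDim Order.krullDim
  refine iSup_le fun l => ?_
  obtain ⟨P, hP⟩ := PrimeSpectrum.comap_surjective_of_faithfullyFlat (A := R) (B := B) l.last
  haveI : P.asIdeal.LiesOver l.last.asIdeal := ⟨by rw [← hP]; rfl⟩
  obtain ⟨L, hL, -⟩ := Ideal.exists_ltSeries_of_hasGoingDown (S := B) l P.asIdeal
  rw [← hL]
  exact le_iSup (fun p : LTSeries (PrimeSpectrum B) => (p.length : WithBot ℕ∞)) L

lemma dim_powerSeries_le (δ : ℕ) (k : Type) [Field k] :
    ringKrullDim (MvPowerSeries (Fin δ) k) ≤ δ := by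
  refine (ringKrullDim_le_spanFinrank_maximalIdeal _).trans ?_
  rw [MvPowerSeries.maximalIdeal_eq]
  have h := Submodule.spanFinrank_span_le_ncard_of_finite (R := MvPowerSeries (Fin δ) k)
    (Set.finite_range (MvPowerSeries.X : Fin δ → MvPowerSeries (Fin δ) k))
  have h2 : (Set.range (MvPowerSeries.X : Fin δ → MvPowerSeries (Fin δ) k)).ncard ≤ δ := by
    rw [← Set.image_univ]
    refine (Set.ncard_image_le Set.finite_univ).trans ?_
    simp
  exact_mod_cast h.trans h2

lemma isIntegral_of_sum {A B : Type} [CommRing A] [CommRing B] [Algebra A B] (y : B) (ℓ : ℕ)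
    (h : ∀ t : B, ∃ a : Fin ℓ → A, t = ∑ i, algebraMap A B (a i) * y ^ (i : ℕ)) :
    Algebra.IsIntegral A B := by
  have : Module.Finite A B := by
    classical
    refine ⟨⟨Finset.univ.image (fun i : Fin ℓ => y ^ (i : ℕ)), ?_⟩⟩
    rw [eq_top_iff]
    rintro t -
    obtain ⟨a, rfl⟩ := h t
    refine Submodule.sum_mem _ fun i _ => ?_
    rw [← Algebra.smul_def]
    exact Submodule.smul_mem _ _ (Submodule.subset_span (by simp))
  infer_instance

lemma dim_le_of_integral {A B : Type} [CommRing A] [CommRing B] [Algebra A B]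
    [Algebra.IsIntegral A B] : ringKrullDim B ≤ ringKrullDim A := by
  refine Order.krullDim_le_of_strictMono (PrimeSpectrum.comap (algebraMap A B)) ?_
  intro P Q h
  exact Ideal.IsIntegral.comap_lt_comap (R := A) (I := P.asIdeal) (J := Q.asIdeal) h

lemma structure_thm (R : Type) [CommRing R] [IsLocalRing R] [IsNoetherianRing R]
    (h : ∃ F : Subring R, IsField ↥F) {δ : ℕ} (hdim : (δ : WithBot ℕ∞) = ringKrullDim R)
    (x : Fin δ → R) (y : R) (ℓ : ℕ)
    (hm : maximalIdeal R = Ideal.span (Set.range x) ⊔ Ideal.span {y})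
    (hy : y ^ ℓ ∈ Ideal.span (Set.range x)) :
    ∃ φ : MvPowerSeries (Fin δ) (ResidueField R) →+* AdicCompletion (maximalIdeal R) R,
      Function.Injective φ ∧
      (∀ i, φ (MvPowerSeries.X i) = algebraMap R _ (x i)) ∧
      ∀ t, ∃ a : Fin ℓ → MvPowerSeries (Fin δ) (ResidueField R),
        t = ∑ i, φ (a i) * (algebraMap R _ y) ^ (i : ℕ) := by
  obtain ⟨s, hs⟩ := exists_coeff R h
  have hr : Set.range (algebraMap R (AdicCompletion (maximalIdeal R) R) ∘ x) =
      algebraMap R (AdicCompletion (maximalIdeal R) R) '' Set.range x := Set.range_comp _ _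
  obtain ⟨φ, hX, hφ⟩ := structure_surj (maximalIdeal (AdicCompletion (maximalIdeal R) R)) s hs
    (algebraMap R _ ∘ x) (algebraMap R _ y) ℓ (by
      rw [AdicCompletion.maximalIdeal_eq_map]
      refine (congrArg (Ideal.map (algebraMap R (AdicCompletion (maximalIdeal R) R))) hm).trans ?_
      rw [hr, Ideal.map_sup, Ideal.map_span, Ideal.map_span, Set.image_singleton]) (by
      rw [hr, ← map_pow, ← Ideal.map_span]
      exact Ideal.mem_map_of_mem _ hy)
  refine ⟨φ, ?_, hX, hφ⟩
  rw [injective_iff_map_eq_zero]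
  intro a ha
  by_contra hne
  let A := MvPowerSeries (Fin δ) (ResidueField R)
  let ψ : A ⧸ (RingHom.ker φ) →+* AdicCompletion (maximalIdeal R) R := RingHom.kerLift φ
  letI := ψ.toAlgebra
  haveI : Algebra.IsIntegral (A ⧸ (RingHom.ker φ)) (AdicCompletion (maximalIdeal R) R) := by
    refine isIntegral_of_sum (algebraMap R _ y) ℓ fun t => ?_
    obtain ⟨a, ha⟩ := hφ t
    exact ⟨fun i => Ideal.Quotient.mk _ (a i), ha⟩
  have h1 := dim_le_completion R
  have h2 := dim_le_of_integral (A := A ⧸ (RingHom.ker φ)) (B := AdicCompletion (maximalIdeal R) R)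
  have h3 := ringKrullDim_succ_le_of_surjective (Ideal.Quotient.mk (RingHom.ker φ))
    Ideal.Quotient.mk_surjective (mem_nonZeroDivisors_of_ne_zero hne)
    (Ideal.Quotient.eq_zero_iff_mem.2 ha)
  have h4 := dim_powerSeries_le δ (ResidueField R)
  have h5 : (δ : WithBot ℕ∞) + 1 ≤ δ := by
    refine le_trans ?_ (h3.trans h4)
    gcongr
    rw [hdim]
    exact h1.trans h2
  have : ((δ + 1 : ℕ) : WithBot ℕ∞) ≤ (δ : ℕ) := by exact_mod_cast h5
  have : δ + 1 ≤ δ := by exact_mod_cast this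
  omega

open Polynomial in
lemma main_alg {A B : Type} [CommRing A] [IsDomain A] [IsIntegrallyClosed A] [IsLocalRing A]
    [CommRing B] [Algebra A B] (hinj : Function.Injective (algebraMap A B)) (y : B) (ℓ : ℕ)
    (hspan : ∀ t : B, ∃ a : Fin ℓ → A, t = ∑ i, algebraMap A B (a i) * y ^ (i : ℕ))
    (hyq : y ^ ℓ ∈ (maximalIdeal A).map (algebraMap A B)) (p : B)
    (hp : ∀ a ∈ maximalIdeal A, algebraMap A B a * p = 0)
    (hA : ∃ a ∈ maximalIdeal A, a ≠ 0) : y ^ (ℓ - 1) * p = 0 := by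
  haveI := isIntegral_of_sum y ℓ hspan
  obtain ⟨Q, -, hQp, hQ⟩ := Ideal.exists_ideal_over_prime_of_isIntegral (⊥ : Ideal A) (⊥ : Ideal B)
    (by rw [← RingHom.ker_eq_comap_bot, (RingHom.injective_iff_ker_eq_bot _).1 hinj])
  have hinjD : Function.Injective (algebraMap A (B ⧸ Q)) := by
    rw [injective_iff_map_eq_zero]
    intro a ha
    have : a ∈ Q.comap (algebraMap A B) :=
      Ideal.mem_comap.2 ((Ideal.Quotient.eq_zero_iff_mem (I := Q)).1 ha)
    rw [hQ] at this
    exact this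
  haveI : FaithfulSMul A (B ⧸ Q) := (faithfulSMul_iff_algebraMap_injective _ _).2 hinjD
  have hpQ : p ∈ Q := by
    obtain ⟨a, ha, ha0⟩ := hA
    have h1 : algebraMap A B a * p ∈ Q := by rw [hp a ha]; exact Q.zero_mem
    refine (hQp.mem_or_mem h1).resolve_left fun h => ha0 ?_
    have : a ∈ Q.comap (algebraMap A B) := h
    rw [hQ] at this
    exact this
  have hmem : ∀ t ∈ (maximalIdeal A).map (algebraMap A B), ∃ a : Fin ℓ → A,
      (∀ i, a i ∈ maximalIdeal A) ∧ t = ∑ i, algebraMap A B (a i) * y ^ (i : ℕ) := by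
    intro t ht
    refine Submodule.span_induction ?_ ?_ ?_ ?_ ht
    · rintro _ ⟨a, ha, rfl⟩
      obtain ⟨e, he⟩ := hspan 1
      refine ⟨fun i => a * e i, fun i => Ideal.mul_mem_right _ _ ha, ?_⟩
      conv_lhs => rw [← mul_one (algebraMap A B a), he]
      simp [Finset.mul_sum, mul_assoc]
    · exact ⟨0, fun i => zero_mem _, by simp⟩
    · rintro _ _ - - ⟨a, ha, rfl⟩ ⟨b, hb, rfl⟩
      exact ⟨a + b, fun i => add_mem (ha i) (hb i), by simp [add_mul, Finset.sum_add_distrib]⟩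
    · rintro b _ - ⟨a, ha, rfl⟩
      choose e he using fun i : Fin ℓ => hspan (b * y ^ (i : ℕ))
      refine ⟨fun j => ∑ i, a i * e i j, fun j => sum_mem fun i _ => Ideal.mul_mem_right _ _ (ha i), ?_⟩
      have : ∀ i : Fin ℓ, b * (algebraMap A B (a i) * y ^ (i : ℕ)) =
          ∑ j, algebraMap A B (a i * e i j) * y ^ (j : ℕ) := fun i => by
        rw [mul_left_comm, he i, Finset.mul_sum]
        simp [mul_assoc]
      simp only [smul_eq_mul, Finset.mul_sum, this]
      rw [Finset.sum_comm]
      simp [Finset.sum_mul]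
  obtain ⟨a, ham, hya⟩ := hmem _ hyq
  obtain ⟨b, hpb⟩ := hspan p
  set S : A[X] := ∑ i, C (a i) * X ^ (i : ℕ) with hS
  set P : A[X] := ∑ i, C (b i) * X ^ (i : ℕ) with hP
  set h : A[X] := X ^ ℓ - S with hh
  have hhm : h.Monic := monic_X_pow_sub (degree_sum_fin_lt a)
  have hhdeg : h.natDegree = ℓ := by
    apply natDegree_eq_of_degree_eq_some
    rw [hh, degree_sub_eq_left_of_degree_lt, degree_X_pow]
    rw [degree_X_pow]; exact degree_sum_fin_lt a
  have hPy : aeval y P = p := by rw [hpb, hP]; simp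
  have hhy : aeval y h = 0 := by rw [hh, hS]; simp [hya]
  have hcomp : ∀ f : A[X], aeval (Ideal.Quotient.mk Q y) f = Ideal.Quotient.mk Q (aeval y f) := by
    intro f
    exact aeval_algHom_apply (Ideal.Quotient.mkₐ A Q) y f
  set yD : B ⧸ Q := Ideal.Quotient.mk Q y with hyD
  have hint : IsIntegral A yD := Algebra.IsIntegral.isIntegral yD
  obtain ⟨w, hw⟩ := minpoly.isIntegrallyClosed_dvd hint (p := P) (by
    rw [hcomp, hPy]; exact Ideal.Quotient.eq_zero_iff_mem.2 hpQ)
  obtain ⟨g, hg⟩ := minpoly.isIntegrallyClosed_dvd hint (p := h) (by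
    rw [hcomp, hhy, map_zero])
  have hμm := minpoly.monic hint
  have hgm : g.Monic := hμm.of_mul_monic_left (by rw [← hg]; exact hhm)
  have hdeg : (minpoly A yD).natDegree + g.natDegree = ℓ := by
    rw [← hμm.natDegree_mul hgm, ← hg, hhdeg]
  have hpos : 0 < (minpoly A yD).natDegree := minpoly.natDegree_pos hint
  have hgp : aeval y g * p = 0 := by
    rw [← hPy, hw, map_mul, ← mul_assoc, mul_comm (aeval y g), ← map_mul, ← hg, hhy, zero_mul]
  set π := mapRingHom (residue A) with hπ
  have hπS : π S = 0 := by
    rw [hS, map_sum]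
    refine Finset.sum_eq_zero fun i _ => ?_
    have : residue A (a i) = 0 := by rw [residue_eq_zero_iff]; exact ham i
    simp [hπ, this]
  have hπh : π h = X ^ ℓ := by rw [hh, map_sub, hπS]; simp [hπ]
  have hgd : π g ∣ X ^ ℓ := ⟨π (minpoly A yD), by rw [← hπh, hg, map_mul, mul_comm]⟩
  obtain ⟨i, -, hi⟩ := (dvd_prime_pow prime_X _).1 hgd
  have hge : π g = X ^ i := eq_of_monic_of_associated (hgm.map _) (monic_X_pow i) hi
  have hid : i = g.natDegree := by
    rw [← hgm.natDegree_map (residue A)]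
    have : g.map (residue A) = X ^ i := hge
    rw [this, natDegree_X_pow]
  have hz : ∀ f : A[X], π f = 0 → aeval y f * p = 0 := by
    intro f hf
    rw [aeval_eq_sum_range, Finset.sum_mul]
    refine Finset.sum_eq_zero fun j _ => ?_
    have : f.coeff j ∈ maximalIdeal A := by
      rw [← residue_eq_zero_iff]
      have := congrArg (fun q => coeff q j) hf
      simpa [hπ] using this
    rw [Algebra.smul_def, mul_right_comm, hp _ this, zero_mul]
  have hfin := hz (g - X ^ i) (by rw [map_sub, hge]; simp [hπ])
  rw [map_sub, sub_mul, hgp, zero_sub, neg_eq_zero, map_pow, aeval_X] at hfin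
  have : ℓ - 1 = (ℓ - 1 - i) + i := by omega
  rw [this, pow_add, mul_assoc, hfin, mul_zero]

lemma algebraMap_completion_injective (R : Type) [CommRing R] [IsLocalRing R] [IsNoetherianRing R] :
    Function.Injective (algebraMap R (AdicCompletion (maximalIdeal R) R)) :=
  AdicCompletion.of_injective (maximalIdeal R) R

lemma main_lemma (R : Type) [CommRing R] [IsLocalRing R] [IsNoetherianRing R]
    (h : ∃ F : Subring R, IsField ↥F) {δ : ℕ} (hdim : (δ : WithBot ℕ∞) = ringKrullDim R)
    (x : Fin δ → R) (y : R) (ℓ : ℕ)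
    (hm : maximalIdeal R = Ideal.span (Set.range x) ⊔ Ideal.span {y})
    (hy : y ^ ℓ ∈ Ideal.span (Set.range x)) (p : R) (hpq : p ∈ Ideal.span (Set.range x))
    (hp : ∀ i, x i * p = 0) : y ^ (ℓ - 1) * p = 0 := by
  rcases Nat.eq_zero_or_pos δ with rfl | hδ
  · have : p = 0 := by simpa using hpq
    simp [this]
  obtain ⟨φ, hinj, hX, hφ⟩ := structure_thm R h hdim x y ℓ hm hy
  letI := φ.toAlgebra
  have hmap : (maximalIdeal (MvPowerSeries (Fin δ) (ResidueField R))).map φ =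
      (Ideal.span (Set.range x)).map (algebraMap R (AdicCompletion (maximalIdeal R) R)) := by
    rw [MvPowerSeries.maximalIdeal_eq, Ideal.map_span, Ideal.map_span, ← Set.range_comp,
      ← Set.range_comp]
    congr 2
    funext i
    exact hX i
  apply algebraMap_completion_injective R
  rw [map_mul, map_pow, map_zero]
  refine main_alg (A := MvPowerSeries (Fin δ) (ResidueField R)) hinj _ ℓ hφ ?_ _ ?_ ?_
  · change _ ∈ Ideal.map φ _
    rw [hmap, ← map_pow]
    exact Ideal.mem_map_of_mem _ hy
  · intro a ha
    rw [MvPowerSeries.maximalIdeal_eq] at ha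
    refine Submodule.span_induction ?_ ?_ ?_ ?_ ha
    · rintro _ ⟨i, rfl⟩
      change φ _ * _ = 0
      rw [hX, ← map_mul, hp, map_zero]
    · simp
    · intro a b _ _ ha hb
      rw [map_add, add_mul, ha, hb, add_zero]
    · intro a b _ hb
      rw [smul_eq_mul, map_mul, mul_assoc, hb, mul_zero]
  · refine ⟨MvPowerSeries.X ⟨0, hδ⟩, ?_, ?_⟩
    · rw [MvPowerSeries.maximalIdeal_eq]
      exact Ideal.subset_span ⟨_, rfl⟩
    · intro h0
      have := congrArg (MvPowerSeries.coeff (Finsupp.single ⟨0, hδ⟩ 1)) h0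
      simp at this

lemma regular_normal (R : Type) [CommRing R] [IsLocalRing R] [IsNoetherianRing R]
    (h : ∃ F : Subring R, IsField ↥F) {δ : ℕ} (hdim : (δ : WithBot ℕ∞) = ringKrullDim R)
    (x : Fin δ → R) (hm : maximalIdeal R = Ideal.span (Set.range x)) :
    ∀ b : FractionRing R, IsIntegral R b → ∃ r, algebraMap R (FractionRing R) r = b := by
  obtain ⟨φ, hinj, hX, hφ⟩ := structure_thm R h hdim x 0 1 (by simpa using hm) (by simp)
  have hsurj : Function.Surjective φ := fun t => by
    obtain ⟨a, ha⟩ := hφ t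
    exact ⟨a 0, by simp [ha]⟩
  let e := RingEquiv.ofBijective φ ⟨hinj, hsurj⟩
  haveI : IsDomain (AdicCompletion (maximalIdeal R) R) :=
    e.symm.toMulEquiv.isDomain _
  haveI : IsIntegrallyClosed (AdicCompletion (maximalIdeal R) R) := IsIntegrallyClosed.of_equiv e
  haveI : IsDomain R := (algebraMap_completion_injective R).isDomain
  haveI : Module.FaithfullyFlat R (AdicCompletion (maximalIdeal R) R) :=
    Module.FaithfullyFlat.of_flat_of_isLocalHom
  intro b hb
  let B := AdicCompletion (maximalIdeal R) R
  obtain ⟨u, v, rfl⟩ := IsLocalization.exists_mk'_eq (nonZeroDivisors R) b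
  let f : FractionRing R →+* FractionRing B := IsFractionRing.map (algebraMap_completion_injective R)
  have hf : ∀ r, f (algebraMap R _ r) = algebraMap B _ (algebraMap R B r) := fun r => by
    exact IsLocalization.map_eq _ r
  have hb' : IsIntegral B (f (IsLocalization.mk' (FractionRing R) u v)) := by
    obtain ⟨P, hPm, hP⟩ := hb
    refine ⟨P.map (algebraMap R B), hPm.map _, ?_⟩
    rw [Polynomial.eval₂_map]
    have := congrArg f hP
    rw [Polynomial.hom_eval₂, map_zero] at this
    have hc : (algebraMap B (FractionRing B)).comp (algebraMap R B) =
        f.comp (algebraMap R (FractionRing R)) := RingHom.ext fun r => (hf r).symm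
    rw [hc]
    exact this
  obtain ⟨w, hw⟩ := IsIntegrallyClosed.isIntegral_iff.1 hb'
  have hvw : algebraMap R B u = algebraMap R B v * w := by
    apply IsFractionRing.injective B (FractionRing B)
    rw [map_mul, hw, ← hf, ← hf, ← map_mul, IsLocalization.mk'_spec']
  have hu : u ∈ (Ideal.span {(v : R)}) := by
    rw [← Ideal.comap_map_eq_self_of_faithfullyFlat (B := B) (Ideal.span {(v : R)}), Ideal.mem_comap,
      Ideal.map_span, Set.image_singleton, Ideal.mem_span_singleton]
    exact ⟨w, hvw⟩
  obtain ⟨r, hr⟩ := Ideal.mem_span_singleton.1 hu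
  refine ⟨r, ?_⟩
  rw [eq_comm, IsLocalization.mk'_eq_iff_eq_mul, ← map_mul, hr, mul_comm]

lemma dich {R : Type} [CommRing R] [IsLocalRing R] [IsNoetherianRing R] {d : ℕ} (x : Fin d → R)
    (c : Ideal R) (hc : c ≤ Ideal.span (Set.range x)) (hne : ¬ Ideal.span (Set.range x) ≤ c) :
    ∃ e < d, ∃ z : Fin e → R, (∀ j, z j ∈ c) ∧
      c ≤ Ideal.span (Set.range z) ⊔ maximalIdeal R * Ideal.span (Set.range x) := by
  set q := Ideal.span (Set.range x) with hq
  let L : (Fin d → R) →ₗ[R] R := Fintype.linearCombination R x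
  have hL : ∀ a, L a = ∑ i, a i * x i := fun a => by simp [L, Fintype.linearCombination_apply]
  let f : (Fin d → R) →ₛₗ[residue R] (Fin d → ResidueField R) :=
    { toFun := fun a i => residue R (a i)
      map_add' := fun a b => by ext i; simp
      map_smul' := fun r a => by ext i; simp }
  have hf : ∀ a i, f a i = residue R (a i) := fun a i => rfl
  haveI : RingHomSurjective (residue R) := ⟨residue_surjective⟩
  have hker : ∀ a, f a = 0 → L a ∈ maximalIdeal R * q := by
    intro a ha
    rw [hL]
    refine sum_mem fun i _ => Ideal.mul_mem_mul ?_ (Ideal.subset_span ⟨i, rfl⟩)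
    rw [← residue_eq_zero_iff, ← hf, ha]; rfl
  let N : Submodule R (Fin d → R) := Submodule.comap L c
  let C : Submodule (ResidueField R) (Fin d → ResidueField R) := N.map f
  have hC : C ≠ ⊤ := by
    intro htop
    apply hne
    have : q ≤ c ⊔ maximalIdeal R • q := by
      rw [hq, Ideal.span_le]
      rintro _ ⟨i, rfl⟩
      have h1 : (Pi.single i 1 : Fin d → ResidueField R) ∈ C := by rw [htop]; trivial
      obtain ⟨a, ha, hai⟩ := h1
      have h2 : L (Pi.single i 1) = x i := by
        rw [hL]; simp [Pi.single_apply]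
      have h3 : f (Pi.single i 1 - a) = 0 := by
        rw [map_sub, hai, sub_eq_zero]
        ext j
        rw [hf]
        by_cases hij : j = i
        · subst hij; simp
        · simp [hij]
      have h4 := hker _ h3
      rw [map_sub, h2] at h4
      have : x i = L a + (x i - L a) := by ring
      rw [this]
      exact add_mem (Ideal.mem_sup_left ha) (Ideal.mem_sup_right h4)
    exact Submodule.le_of_le_smul_of_le_jacobson_bot (IsNoetherian.noetherian q)
      (IsLocalRing.maximalIdeal_le_jacobson _) this
  have hfin : Module.finrank (ResidueField R) C < d := by
    have := Submodule.finrank_lt hC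
    simpa using this
  let b := Module.finBasis (ResidueField R) C
  have hb : ∀ j, ∃ a ∈ N, f a = b j := fun j => (b j).2
  choose a haN hab using hb
  refine ⟨_, hfin, fun j => L (a j), haN, ?_⟩
  intro t ht
  obtain ⟨g, hg⟩ : ∃ g, L g = t := by
    obtain ⟨g, hg⟩ := Ideal.mem_span_range_iff_exists_fun.1 (hc ht)
    exact ⟨g, by rw [hL, hg]⟩
  have hgC : f g ∈ C := ⟨g, by change L g ∈ c; rw [hg]; exact ht, rfl⟩
  choose r hr using fun j => residue_surjective (b.repr ⟨f g, hgC⟩ j)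
  have h1 : f (g - ∑ j, r j • a j) = 0 := by
    rw [map_sub, map_sum, sub_eq_zero]
    have := congrArg Subtype.val (b.sum_repr ⟨f g, hgC⟩)
    rw [Submodule.coe_sum] at this
    refine this.symm.trans (Finset.sum_congr rfl fun j _ => ?_)
    rw [map_smulₛₗ, hr, hab]; rfl
  have h2 := hker _ h1
  rw [map_sub, hg, map_sum] at h2
  have : t = (∑ j, L (r j • a j)) + (t - ∑ j, L (r j • a j)) := by ring
  rw [this]
  refine add_mem (Ideal.mem_sup_left (sum_mem fun j _ => ?_)) (Ideal.mem_sup_right h2)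
  rw [map_smul]
  exact Ideal.mul_mem_left _ _ (Ideal.subset_span ⟨j, rfl⟩)

lemma gens {R : Type} [CommRing R] [IsLocalRing R] [IsNoetherianRing R] {d : ℕ} (x : Fin d → R)
    (c : Ideal R) (y : R) (hc : c ≤ Ideal.span (Set.range x)) (hne : ¬ Ideal.span (Set.range x) ≤ c)
    (hx : Ideal.span (Set.range x) ≤ maximalIdeal R) (hy : maximalIdeal R = c ⊔ Ideal.span {y}) :
    ∃ w : Fin d → R, maximalIdeal R = Ideal.span (Set.range w) := by
  obtain ⟨e, he, z, hz, hcz⟩ := dich x c hc hne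
  refine ⟨fun i => if h : (i : ℕ) < e then z ⟨i, h⟩ else y, ?_⟩
  set w : Fin d → R := fun i => if h : (i : ℕ) < e then z ⟨i, h⟩ else y with hw
  have hcm : c ≤ maximalIdeal R := hc.trans hx
  have hym : y ∈ maximalIdeal R := by
    rw [hy]; exact Ideal.mem_sup_right (Ideal.mem_span_singleton_self y)
  apply le_antisymm
  · have hzw : ∀ j, z j ∈ Ideal.span (Set.range w) := fun j =>
      Ideal.subset_span ⟨⟨j, j.2.trans he⟩, by simp [hw]⟩
    have hyw : y ∈ Ideal.span (Set.range w) :=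
      Ideal.subset_span ⟨⟨e, he⟩, by simp [hw]⟩
    have h1 : maximalIdeal R ≤ Ideal.span (Set.range w) ⊔ maximalIdeal R • maximalIdeal R := by
      conv_lhs => rw [hy]
      refine sup_le (hcz.trans (sup_le_sup ?_ (Ideal.mul_mono_right hx))) ?_
      · rw [Ideal.span_le]; rintro _ ⟨j, rfl⟩; exact hzw j
      · rw [Ideal.span_le, Set.singleton_subset_iff]; exact Ideal.mem_sup_left hyw
    exact Submodule.le_of_le_smul_of_le_jacobson_bot (IsNoetherian.noetherian _)
      (IsLocalRing.maximalIdeal_le_jacobson _) h1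
  · rw [Ideal.span_le]
    rintro _ ⟨i, rfl⟩
    by_cases h : (i : ℕ) < e
    · simp only [hw, h, dite_true]; exact hcm (hz _)
    · simp only [hw, h, dite_false]; exact hym

lemma mem_conductorIdeal {R : Type} [CommRing R] (r : R) :
    r ∈ conductorIdeal R ↔ ∀ b : FractionRing R, IsIntegral R b →
      ∃ a : R, algebraMap R (FractionRing R) a = algebraMap R (FractionRing R) r * b := by
  unfold conductorIdeal
  rw [Module.mem_annihilator]
  constructor
  · intro h b hb
    have h1 := h (Submodule.Quotient.mk (⟨b, hb⟩ : IntClosure R))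
    rw [← Submodule.Quotient.mk_smul, Submodule.Quotient.mk_eq_zero] at h1
    obtain ⟨a, ha⟩ := h1
    refine ⟨a, ?_⟩
    have := congrArg Subtype.val ha
    rw [← Algebra.smul_def]
    exact this
  · intro h t
    obtain ⟨b, rfl⟩ := Submodule.Quotient.mk_surjective _ t
    rw [← Submodule.Quotient.mk_smul, Submodule.Quotient.mk_eq_zero]
    obtain ⟨a, ha⟩ := h b.1 b.2
    refine ⟨a, Subtype.ext ?_⟩
    rw [← Algebra.smul_def] at ha
    exact ha

lemma exists_field_quotient {R R' : Type} [CommRing R] [CommRing R'] [Nontrivial R'] (f : R →+* R')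
    (h : ∃ F : Subring R, IsField ↥F) : ∃ F : Subring R', IsField ↥F := by
  obtain ⟨F, hF⟩ := h
  let g := f.comp F.subtype
  refine ⟨g.range, ?_⟩
  letI := hF.toField
  have hinj : Function.Injective g.rangeRestrict := by
    intro a b hab
    exact RingHom.injective (R := F) g (congrArg Subtype.val hab)
  let e := RingEquiv.ofBijective g.rangeRestrict ⟨hinj, g.rangeRestrict_surjective⟩
  exact e.symm.toMulEquiv.isField hF

lemma exists_regular {R : Type} [CommRing R] [IsLocalRing R] [IsNoetherianRing R] [IsReduced R]
    (q : Ideal R) (hq : q.radical = maximalIdeal R) (hdim : ringKrullDim R ≠ 0) :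
    ∃ z ∈ q, z ∉ maximalIdeal R * q ∧ z ∈ nonZeroDivisors R := by
  classical
  have hfin := Ideal.finite_minimalPrimes_of_isNoetherianRing R (⊥ : Ideal R)
  have hmin : ∀ P ∈ (⊥ : Ideal R).minimalPrimes, ¬ q ≤ P := by
    intro P hP hqP
    apply hdim
    have hPp : P.IsPrime := hP.1.1
    have h1 : maximalIdeal R ≤ P := by rw [← hq]; exact hPp.radical_le_iff.2 hqP
    have h2 : P = maximalIdeal R := le_antisymm (IsLocalRing.le_maximalIdeal hPp.ne_top) h1
    rw [← IsLocalRing.maximalIdeal_height_eq_ringKrullDim]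
    have h3 : (maximalIdeal R).height = 0 := Ideal.height_eq_zero_iff.2 (h2 ▸ hP)
    rw [h3]; rfl
  by_contra hcon
  push Not at hcon
  have hsub : (q : Set R) ⊆ ⋃ i ∈ (↑(insert (maximalIdeal R * q) hfin.toFinset) : Set (Ideal R)),
      ((id i : Ideal R) : Set R) := by
    intro z hz
    by_cases h1 : z ∈ maximalIdeal R * q
    · exact Set.mem_biUnion (by simp) h1
    have h2 := hcon z hz h1
    have h3 : ∃ P ∈ (⊥ : Ideal R).minimalPrimes, z ∈ P := by
      by_contra h4
      push Not at h4
      apply h2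
      rw [mem_nonZeroDivisors_iff_right]
      intro r hr
      have : r ∈ sInf (⊥ : Ideal R).minimalPrimes := by
        rw [Ideal.mem_sInf]
        intro P hP
        have hPp : P.IsPrime := hP.1.1
        have : r * z ∈ P := by rw [hr]; exact P.zero_mem
        exact (hPp.mem_or_mem this).resolve_right (h4 P hP)
      rw [Ideal.sInf_minimalPrimes] at this
      exact (mem_nilradical.1 this).eq_zero
    obtain ⟨P, hP, hzP⟩ := h3
    exact Set.mem_biUnion (by simp [hP]) hzP
  rw [Ideal.subset_union_prime (maximalIdeal R * q) (maximalIdeal R * q) (by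
    intro P hP h1 _
    rw [Finset.mem_insert] at hP
    exact (hfin.mem_toFinset.1 (hP.resolve_left h1)).1.1)] at hsub
  obtain ⟨P, hP, hqP⟩ := hsub
  rw [Finset.mem_insert] at hP
  rcases hP with rfl | hP
  · have h0 : q ≤ ⊥ := Submodule.le_of_le_smul_of_le_jacobson_bot (IsNoetherian.noetherian q)
      (IsLocalRing.maximalIdeal_le_jacobson _) (hqP.trans le_sup_right)
    obtain ⟨P, hP⟩ : Nonempty (⊥ : Ideal R).minimalPrimes := Ideal.nonempty_minimalPrimes bot_ne_top
    exact hmin P hP (h0.trans bot_le)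
  · exact hmin P (hfin.mem_toFinset.1 hP) hqP

lemma exists_gens {R : Type} [CommRing R] [IsLocalRing R] {δ : ℕ} (x : Fin (δ + 1) → R) (z : R)
    (hz : z ∈ Ideal.span (Set.range x)) (hz' : z ∉ maximalIdeal R * Ideal.span (Set.range x)) :
    ∃ x' : Fin δ → R, Ideal.span (Set.range x) = Ideal.span {z} ⊔ Ideal.span (Set.range x') := by
  obtain ⟨a, ha⟩ := Ideal.mem_span_range_iff_exists_fun.1 hz
  have : ∃ i, IsUnit (a i) := by
    by_contra h
    push Not at h
    apply hz'
    rw [← ha]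
    exact sum_mem fun i _ => Ideal.mul_mem_mul ((mem_maximalIdeal _).2 (h i))
      (Ideal.subset_span ⟨i, rfl⟩)
  obtain ⟨i, u, hu⟩ := this
  refine ⟨fun j => x (i.succAbove j), le_antisymm ?_ ?_⟩
  · rw [Ideal.span_le]
    have hj : ∀ j, x (i.succAbove j) ∈
        Ideal.span {z} ⊔ Ideal.span (Set.range fun j => x (i.succAbove j)) :=
      fun j => Ideal.mem_sup_right (Ideal.subset_span ⟨j, rfl⟩)
    rintro _ ⟨j, rfl⟩
    rcases Fin.eq_self_or_eq_succAbove i j with rfl | ⟨j, rfl⟩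
    · rw [Fin.sum_univ_succAbove _ j] at ha
      have : x j = ↑u⁻¹ * (z - ∑ k, a (j.succAbove k) * x (j.succAbove k)) := by
        rw [← ha, add_sub_cancel_right, ← hu, Units.inv_mul_cancel_left]
      rw [this]
      refine Ideal.mul_mem_left _ _ (sub_mem (Ideal.mem_sup_left (Ideal.mem_span_singleton_self z))
        (sum_mem fun k _ => Ideal.mul_mem_left _ _ (hj k)))
    · exact hj j
  · refine sup_le ?_ ?_
    · rw [Ideal.span_le, Set.singleton_subset_iff]; exact hz
    · exact Ideal.span_mono (by rintro _ ⟨j, rfl⟩; exact ⟨_, rfl⟩)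

lemma final_case (R : Type) [CommRing R] [IsLocalRing R] [IsNoetherianRing R] [IsReduced R]
    (hfield : ∃ F : Subring R, IsField ↥F) (y : R) {δ : ℕ} (x : Fin (δ + 1) → R)
    (hdim : ((δ + 1 : ℕ) : WithBot ℕ∞) = ringKrullDim R)
    (hrad : (Ideal.span (Set.range x)).radical = maximalIdeal R)
    (hc : conductorIdeal R = Ideal.span (Set.range x))
    (hy : maximalIdeal R = Ideal.span (Set.range x) ⊔ Ideal.span {y}) : False := by
  classical
  set q := Ideal.span (Set.range x) with hq
  have hqm : q ≤ maximalIdeal R := by rw [← hrad]; exact Ideal.le_radical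
  obtain ⟨z, hzq, hzm, hzn⟩ := exists_regular q hrad (by
    rw [← hdim]
    exact_mod_cast Nat.succ_ne_zero δ)
  obtain ⟨x', hx'⟩ := exists_gens x z hzq hzm
  rw [← hq] at hx'
  have hyrad : ∃ n, y ^ n ∈ q := by
    have : y ∈ q.radical := by
      rw [hrad, hy]; exact Ideal.mem_sup_right (Ideal.mem_span_singleton_self y)
    exact this
  set ℓ := Nat.find hyrad with hℓ
  have hyℓ : y ^ ℓ ∈ q := Nat.find_spec hyrad
  have hℓ0 : ℓ ≠ 0 := by
    intro h0
    rw [h0, pow_zero] at hyℓ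
    exact (Ideal.ne_top_iff_one _).1 (maximalIdeal.isMaximal R).ne_top (hqm hyℓ)
  have hymin : y ^ (ℓ - 1) ∉ q := Nat.find_min hyrad (by omega)
  apply hymin
  rw [← hc, mem_conductorIdeal]
  intro b hb
  let K := FractionRing R
  have hinj : Function.Injective (algebraMap R K) := IsFractionRing.injective R K
  have hzc : z ∈ conductorIdeal R := by rw [hc]; exact hzq
  obtain ⟨p, hp⟩ := (mem_conductorIdeal z).1 hzc b hb
  have hpq : p ∈ q := by
    rw [← hc, mem_conductorIdeal]
    intro b' hb'
    obtain ⟨a, ha⟩ := (mem_conductorIdeal z).1 hzc (b * b') (hb.mul hb')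
    exact ⟨a, by rw [ha, hp, mul_assoc]⟩
  have hx'p : ∀ i, ∃ r, x' i * p = z * r := by
    intro i
    have : x' i ∈ conductorIdeal R := by
      rw [hc, hx']; exact Ideal.mem_sup_right (Ideal.subset_span ⟨i, rfl⟩)
    obtain ⟨r, hr⟩ := (mem_conductorIdeal _).1 this b hb
    refine ⟨r, hinj ?_⟩
    rw [map_mul, map_mul, hp, hr]; ring
  let mk := Ideal.Quotient.mk (Ideal.span {z})
  have hmks : Function.Surjective mk := Ideal.Quotient.mk_surjective
  have hmkz : ∀ t, mk t = 0 ↔ z ∣ t := fun t => by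
    rw [← Ideal.mem_span_singleton]; exact Ideal.Quotient.eq_zero_iff_mem
  haveI : Nontrivial (R ⧸ Ideal.span {z}) := by
    apply Ideal.Quotient.nontrivial_iff.2
    intro h
    have h1 : Ideal.span {z} ≤ maximalIdeal R := by
      rw [Ideal.span_le, Set.singleton_subset_iff]; exact hqm hzq
    rw [h] at h1
    exact (maximalIdeal.isMaximal R).ne_top (top_le_iff.1 h1)
  haveI : IsLocalRing (R ⧸ Ideal.span {z}) := IsLocalRing.of_surjective' mk hmks
  haveI : IsLocalHom mk := IsLocalHom.of_surjective mk hmks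
  have hmax : maximalIdeal (R ⧸ Ideal.span {z}) = (maximalIdeal R).map mk := by
    rw [← IsLocalRing.maximalIdeal_comap mk, Ideal.map_comap_of_surjective mk hmks]
  have hq' : q.map mk = Ideal.span (Set.range (mk ∘ x')) := by
    rw [hx', Ideal.map_sup, Ideal.map_span, Ideal.map_span, Set.image_singleton, Set.range_comp,
      (hmkz z).2 dvd_rfl, Ideal.span_singleton_zero, bot_sup_eq]
  have hdim' : (δ : WithBot ℕ∞) = ringKrullDim (R ⧸ Ideal.span {z}) := by
    have h1 := ringKrullDim_quotient_span_singleton_succ_eq_ringKrullDim_of_mem_nonZeroDivisors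
      hzn (hqm hzq)
    rw [← hdim] at h1
    push_cast at h1
    exact (ENat.WithBot.add_one_cancel.1 h1).symm
  have hmain := main_lemma (R ⧸ Ideal.span {z}) (exists_field_quotient mk hfield) hdim' (mk ∘ x')
    (mk y) ℓ (by
      rw [hmax, ← hq', hy, Ideal.map_sup, Ideal.map_span (s := {y}), Set.image_singleton]) (by
      rw [← hq', ← map_pow]; exact Ideal.mem_map_of_mem _ hyℓ) (mk p) (by
      rw [← hq']; exact Ideal.mem_map_of_mem _ hpq) (by
      intro i
      obtain ⟨r, hr⟩ := hx'p i
      change mk (x' i) * mk p = 0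
      rw [← map_mul, hmkz]
      exact ⟨r, hr⟩)
  rw [← map_pow, ← map_mul, hmkz] at hmain
  obtain ⟨r, hr⟩ := hmain
  refine ⟨r, ?_⟩
  have hzu : IsUnit (algebraMap R K z) := IsLocalization.map_units K (⟨z, hzn⟩ : nonZeroDivisors R)
  apply hzu.mul_left_cancel
  have := congrArg (algebraMap R K) hr
  rw [map_mul, map_mul, hp] at this
  rw [← this]; ring

-- STATEMENT 19
theorem stmt19 (R : Type) [CommRing R] [IsLocalRing R] [IsNoetherianRing R]
    (hau : AnalyticallyUnramified R)
    (hfield : ∃ F : Subring R, IsField ↥F)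
    (y : R) (hy : maximalIdeal R = conductorIdeal R + Ideal.span {y}) :
    ∀ (d : ℕ) (x : Fin d → R), IsSystemOfParameters R x →
      ¬ conductorIdeal R ≤ Ideal.span (Set.range x) := by
  intro d x hx hcq
  obtain ⟨hdim, hxm, hrad⟩ := hx
  have hred : IsReduced R := by
    haveI : IsReduced (AdicCompletion (maximalIdeal R) R) := hau
    exact isReduced_of_injective _ (algebraMap_completion_injective R)
  have hqm : Ideal.span (Set.range x) ≤ maximalIdeal R := by
    rw [← hrad]; exact Ideal.le_radical
  have hreg : ∀ w : Fin d → R, maximalIdeal R ≠ Ideal.span (Set.range w) := by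
    intro w hw
    have h1 : (1 : R) ∈ conductorIdeal R := by
      rw [mem_conductorIdeal]
      intro b hb
      obtain ⟨r, hr⟩ := regular_normal R hfield hdim w hw b hb
      exact ⟨r, by rw [hr, map_one, one_mul]⟩
    exact (Ideal.ne_top_iff_one _).1 (maximalIdeal.isMaximal R).ne_top (hqm (hcq h1))
  by_cases hqc : Ideal.span (Set.range x) ≤ conductorIdeal R
  · have hceq := le_antisymm hcq hqc
    cases d with
    | zero =>
      refine hreg x ?_
      have h0 : Ideal.span (Set.range x) = ⊥ := by simp
      rw [← hrad, h0]
      exact nilradical_eq_zero R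
    | succ δ =>
      exact final_case R hfield y x hdim hrad hceq (by rw [← hceq]; exact hy)
  · obtain ⟨w, hw⟩ := gens x (conductorIdeal R) y hcq hqc hqm hy
    exact hreg w hw
end
end
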